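/- Let p and q be primes satisfying conditions (2), and let m be the natural number such that 2^m is the order of the 2-Sylow subgroup of the ideal class group of Q(√(-2q)). Then the 2-class group of the triquadratic field K_pq = Q(√q, √(2p), √(-2)) is cyclic of order 2^(m+1), i.e. isomorphic to Z/2^(m+1)Z. -/

import Mathlib

noncomputable section

open IntermediateField NumberField

/-- Conditions (2). -/
def Cond2 (p q : ℕ) : Prop :=
  p.Prime ∧ q.Prime ∧ p % 4 = 3 ∧ q % 4 = 3 ∧
    jacobiSym 2 p = -1 ∧ jacobiSym 2 q = 1 ∧ jacobiSym (p : ℤ) q = -1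

/-- The imaginary quadratic field `ℚ(√(-2q))` as a subfield of `ℂ`,
where `√(-2q) = i√(2q)`. -/
def k0 (q : ℕ) : IntermediateField ℚ ℂ :=
  adjoin ℚ {Complex.I * ((Real.sqrt (2 * q) : ℝ) : ℂ)}

/-- The triquadratic field `K_pq = ℚ(√q, √(2p), √(-2))` as a subfield of `ℂ`,
where `√(-2) = i√2`. -/
def Kf (p q : ℕ) : IntermediateField ℚ ℂ :=
  adjoin ℚ {((Real.sqrt q : ℝ) : ℂ), ((Real.sqrt (2 * p) : ℝ) : ℂ),
    Complex.I * ((Real.sqrt 2 : ℝ) : ℂ)}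

namespace Triquad
open IsDedekindDomain nonZeroDivisors

/-- The subgroup of squares of a commutative group. -/
def sqs (G : Type*) [CommGroup G] : Subgroup G := (powMonoidHom 2 : G →* G).range

theorem mem_sqs {G : Type*} [CommGroup G] {x : G} : x ∈ sqs G ↔ ∃ y, y ^ 2 = x := Iff.rfl

/-- The `2`-torsion subgroup of a commutative group. -/
def twoTors (G : Type*) [CommGroup G] : Subgroup G := (powMonoidHom 2 : G →* G).ker

theorem mem_twoTors {G : Type*} [CommGroup G] {x : G} : x ∈ twoTors G ↔ x ^ 2 = 1 := Iff.rfl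

theorem sqs_relIndex_comap_sqs {A D : Type*} [CommGroup A] [CommGroup D] (f : A →* D)
    (hD : ∀ x : D, x ^ 2 = 1 → x = 1) :
    (sqs A).relIndex ((sqs D).comap f) =
      (sqs f.ker).index * Nat.card (twoTors (D ⧸ f.range)) := by
  have hinj : ∀ x y : D, x ^ 2 = y ^ 2 → x = y := fun x y h => by
    have := hD (x / y) (by rw [div_pow, h, div_self'])
    exact div_eq_one.mp this
  set V := (sqs D).comap f with hV
  have hmem : ∀ v : V, ∃ y : D, y ^ 2 = f v := fun v => v.2
  choose r hr using hmem
  let g : V →* D ⧸ f.range :=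
    { toFun := fun v => QuotientGroup.mk (r v)
      map_one' := by
        have : r 1 = 1 := hinj _ _ (by rw [hr]; simp)
        rw [this]; rfl
      map_mul' := fun v w => by
        have : r (v * w) = r v * r w := hinj _ _ (by rw [hr, mul_pow, hr, hr]; simp)
        rw [this]; rfl }
  have hS : sqs A ≤ V := by
    rintro _ ⟨y, rfl⟩
    exact ⟨f y, by simp⟩
  have hE : f.ker ≤ V := fun x hx => ⟨1, by simp [MonoidHom.mem_ker.mp hx]⟩
  have hker : g.ker = (f.ker ⊔ sqs A).subgroupOf V := by
    ext v
    rw [MonoidHom.mem_ker, Subgroup.mem_subgroupOf]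
    change (QuotientGroup.mk (r v) : D ⧸ f.range) = 1 ↔ _
    rw [QuotientGroup.eq_one_iff, Subgroup.mem_sup]
    constructor
    · rintro ⟨a, ha⟩
      refine ⟨v / a ^ 2, ?_, a ^ 2, ⟨a, rfl⟩, by simp⟩
      rw [MonoidHom.mem_ker, map_div, map_pow, ha, hr, div_self']
    · rintro ⟨e, he, _, ⟨a, rfl⟩, h⟩
      refine ⟨a, hinj _ _ ?_⟩
      rw [hr, ← h, map_mul, MonoidHom.mem_ker.mp he]; simp
  have hrange : g.range = twoTors (D ⧸ f.range) := by
    ext x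
    rw [mem_twoTors]
    constructor
    · rintro ⟨v, rfl⟩
      change (QuotientGroup.mk (r v) : D ⧸ f.range) ^ 2 = 1
      rw [← QuotientGroup.mk_pow, QuotientGroup.eq_one_iff, hr]
      exact ⟨v, rfl⟩
    · induction x using QuotientGroup.induction_on with
      | H z =>
        intro h
        rw [← QuotientGroup.mk_pow, QuotientGroup.eq_one_iff] at h
        obtain ⟨a, ha⟩ := h
        refine ⟨⟨a, z, ha.symm⟩, ?_⟩
        change (QuotientGroup.mk (r _) : D ⧸ f.range) = _
        congr 1
        exact hinj _ _ (by rw [hr]; exact ha)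
  rw [← Subgroup.relIndex_mul_relIndex (sqs A) (f.ker ⊔ sqs A) V le_sup_right (sup_le hE hS)]
  congr 1
  · rw [Subgroup.relIndex_sup_right]
    unfold Subgroup.relIndex
    congr 1
    ext ⟨x, hx⟩
    rw [Subgroup.mem_subgroupOf, mem_sqs, mem_sqs]
    constructor
    · rintro ⟨y, rfl⟩
      refine ⟨⟨y, ?_⟩, rfl⟩
      rw [MonoidHom.mem_ker] at hx ⊢
      exact hD _ (by rw [← map_pow]; exact hx)
    · rintro ⟨⟨y, hy⟩, h⟩
      exact ⟨y, congrArg Subtype.val h⟩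
  · rw [Subgroup.relIndex, ← hker, Subgroup.index_ker, hrange]

theorem index_sqs_congr {G H : Type*} [CommGroup G] [CommGroup H] (e : G ≃* H) :
    (sqs G).index = (sqs H).index := by
  rw [← Subgroup.index_map_equiv (sqs G) e]
  congr 1
  ext x
  simp only [Subgroup.mem_map, mem_sqs]
  constructor
  · rintro ⟨_, ⟨y, rfl⟩, rfl⟩
    exact ⟨e y, by simp⟩
  · rintro ⟨y, rfl⟩
    exact ⟨_, ⟨e.symm y, rfl⟩, by simp⟩

theorem card_twoTors_congr {G H : Type*} [CommGroup G] [CommGroup H] (e : G ≃* H) :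
    Nat.card (twoTors G) = Nat.card (twoTors H) := by
  refine Nat.card_congr (e.toEquiv.subtypeEquiv fun a => ?_)
  change a ^ 2 = 1 ↔ (e a) ^ 2 = 1
  rw [← map_pow, map_eq_one_iff e e.injective]

section Units
variable (K : Type*) [Field K] [NumberField K]

theorem index_sqs_modTorsion :
    (sqs ((𝓞 K)ˣ ⧸ Units.torsion K)).index = 2 ^ Units.rank K := by
  have h := ModN.natCard_eq (Additive ((𝓞 K)ˣ ⧸ Units.torsion K)) 2
  rw [Units.finrank_modTorsion] at h
  rw [← h]
  refine Nat.card_congr (Quotient.congr Additive.ofMul fun a b => ?_)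
  refine QuotientGroup.leftRel_apply.trans (Iff.trans ?_ QuotientAddGroup.leftRel_apply.symm)
  change a⁻¹ * b ∈ sqs _ ↔ (-Additive.ofMul a + Additive.ofMul b) ∈ LinearMap.range _
  rw [mem_sqs, LinearMap.mem_range]
  constructor
  · rintro ⟨y, hy⟩
    refine ⟨Additive.ofMul y, ?_⟩
    rw [LinearMap.lsmul_apply, Nat.cast_smul_eq_nsmul]
    exact hy
  · rintro ⟨y, hy⟩
    rw [LinearMap.lsmul_apply, Nat.cast_smul_eq_nsmul] at hy
    exact ⟨y.toMul, hy⟩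

theorem card_twoTors_torsion : Nat.card (twoTors (Units.torsion K)) = 2 := by
  rw [Nat.card_eq_two_iff]
  have h1 : (-1 : (𝓞 K)ˣ) ∈ Units.torsion K := by
    rw [Units.torsion, CommGroup.mem_torsion, isOfFinOrder_iff_pow_eq_one]
    exact ⟨2, by norm_num, by simp⟩
  refine ⟨1, ⟨⟨-1, h1⟩, ?_⟩, ?_, ?_⟩
  · rw [mem_twoTors]; ext; simp
  · intro h
    have : (1 : 𝓞 K) = -1 := congrArg (fun x => ((x.1.1 : (𝓞 K)ˣ) : 𝓞 K)) h
    have h2 : (2 : 𝓞 K) = 0 := by linear_combination this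
    exact two_ne_zero h2
  · ext ⟨⟨x, hx⟩, hx2⟩
    simp only [Set.mem_insert_iff, Set.mem_singleton_iff, Set.mem_univ, iff_true]
    rw [mem_twoTors] at hx2
    have h3 : x ^ 2 = 1 := congrArg Subtype.val hx2
    have h4 : (x : 𝓞 K) ^ 2 = 1 := by rw [← Units.val_pow_eq_pow_val, h3]; rfl
    rcases _root_.sq_eq_one_iff.mp h4 with h | h
    · left; ext; simp [h]
    · right; ext; simp [h]

theorem index_sqs_units : (sqs (𝓞 K)ˣ).index = 2 ^ (Units.rank K + 1) := by
  set T := Units.torsion K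
  have h1 : (sqs (𝓞 K)ˣ ⊔ T).index = 2 ^ Units.rank K := by
    rw [← index_sqs_modTorsion]
    have : (sqs ((𝓞 K)ˣ ⧸ T)) = (sqs (𝓞 K)ˣ).map (QuotientGroup.mk' T) := by
      ext x
      induction x using QuotientGroup.induction_on with
      | H z =>
        constructor
        · rintro ⟨y, hy⟩
          induction y using QuotientGroup.induction_on with
          | H w => exact ⟨w ^ 2, ⟨w, rfl⟩, hy⟩
        · rintro ⟨_, ⟨w, rfl⟩, h⟩
          exact ⟨QuotientGroup.mk w, h⟩
    rw [this, Subgroup.index_map]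
    simp only [QuotientGroup.ker_mk', QuotientGroup.range_mk', Subgroup.index_top, mul_one]
  have h2 : (sqs (𝓞 K)ˣ).relIndex (sqs (𝓞 K)ˣ ⊔ T) = 2 := by
    rw [Subgroup.relIndex_sup_left, ← card_twoTors_torsion K]
    have : (sqs (𝓞 K)ˣ).subgroupOf T = sqs T := by
      ext ⟨x, hx⟩
      rw [Subgroup.mem_subgroupOf, mem_sqs, mem_sqs]
      constructor
      · rintro ⟨y, rfl⟩
        refine ⟨⟨y, ?_⟩, rfl⟩
        change IsOfFinOrder (y ^ 2) at hx
        exact hx.of_pow (by norm_num)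
      · rintro ⟨⟨y, hy⟩, h⟩
        exact ⟨y, congrArg Subtype.val h⟩
    rw [Subgroup.relIndex, this]
    exact Subgroup.index_range
  rw [← Subgroup.relIndex_mul_index (le_sup_left : sqs (𝓞 K)ˣ ≤ sqs (𝓞 K)ˣ ⊔ T), h1, h2, pow_succ,
    mul_comm]

end Units

section Sel
variable (K : Type*) [Field K] [NumberField K]

/-- The elements of `Kˣ` generating the square of a fractional ideal. -/
def virt : Subgroup Kˣ := (sqs (FractionalIdeal (𝓞 K)⁰ K)ˣ).comap (toPrincipalIdeal (𝓞 K) K)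

/-- The order of the group of virtual units modulo squares. -/
def sel : ℕ := (sqs Kˣ).relIndex (virt K)

theorem sqs_le_virt : sqs Kˣ ≤ virt K := by
  rintro _ ⟨y, rfl⟩
  exact ⟨toPrincipalIdeal (𝓞 K) K y, by simp⟩

theorem fractionalIdeal_eq_one_of_sq (x : (FractionalIdeal (𝓞 K)⁰ K)ˣ) (hx : x ^ 2 = 1) :
    x = 1 := by
  ext1
  rw [← FractionalIdeal.finprod_heightOneSpectrum_factorization' K x.ne_zero]
  have : ∀ v : HeightOneSpectrum (𝓞 K), FractionalIdeal.count K v x.1 = 0 := fun v => by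
    have h := FractionalIdeal.count_pow K v 2 x.1
    have h2 : x.1 ^ 2 = 1 := by rw [← Units.val_pow_eq_pow_val, hx]; rfl
    rw [h2, FractionalIdeal.count_one] at h
    push_cast at h
    omega
  simp [this]

theorem sel_eq : sel K = 2 ^ (Units.rank K + 1) * Nat.card (twoTors (ClassGroup (𝓞 K))) := by
  rw [sel, virt, sqs_relIndex_comap_sqs _ (fractionalIdeal_eq_one_of_sq K), ← index_sqs_units,
    ← card_twoTors_congr (ClassGroup.equiv (R := 𝓞 K) K)]
  congr 1
  let f : (𝓞 K)ˣ →* (toPrincipalIdeal (𝓞 K) K).ker :=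
    (Units.map (algebraMap (𝓞 K) K).toMonoidHom).codRestrict _ fun u => by
      rw [MonoidHom.mem_ker, toPrincipalIdeal_eq_iff]
      simp only [Units.coe_map, Units.val_one]
      have : FractionalIdeal.spanSingleton (𝓞 K)⁰ (algebraMap (𝓞 K) K u) =
        ((Ideal.span {(u : 𝓞 K)} : Ideal (𝓞 K)) : FractionalIdeal (𝓞 K)⁰ K) := by
        rw [FractionalIdeal.coeIdeal_span_singleton]
      refine this.trans ?_
      rw [Ideal.span_singleton_eq_top.mpr u.isUnit, FractionalIdeal.coeIdeal_top]
  refine (index_sqs_congr (MulEquiv.ofBijective f ⟨?_, ?_⟩)).symm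
  · intro a b h
    have : algebraMap (𝓞 K) K a = algebraMap (𝓞 K) K b :=
      congrArg (fun x => ((x.1 : Kˣ) : K)) h
    exact Units.ext (RingOfIntegers.coe_injective this)
  · rintro ⟨x, hx⟩
    have key : ∀ y : Kˣ, toPrincipalIdeal (𝓞 K) K y = 1 →
        ∃ a : 𝓞 K, algebraMap (𝓞 K) K a = y := by
      intro y hy
      rw [toPrincipalIdeal_eq_iff] at hy
      have : (y : K) ∈ (1 : FractionalIdeal (𝓞 K)⁰ K) := by
        rw [← Units.val_one, ← hy]; exact FractionalIdeal.mem_spanSingleton_self _ _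
      exact (FractionalIdeal.mem_one_iff _).mp this
    obtain ⟨a, ha⟩ := key x hx
    obtain ⟨b, hb⟩ := key x⁻¹ (by rw [map_inv, MonoidHom.mem_ker.mp hx, inv_one])
    have hab : a * b = 1 := RingOfIntegers.coe_injective (by
      rw [map_mul, map_one]
      exact (congrArg₂ (· * ·) ha hb).trans (by simp))
    refine ⟨⟨a, b, hab, by rw [mul_comm, hab]⟩, ?_⟩
    ext
    exact ha

theorem sel_ne_zero : sel K ≠ 0 := by
  rw [sel_eq]
  have : Nat.card (twoTors (ClassGroup (𝓞 K))) ≠ 0 := Nat.card_pos.ne'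
  positivity

variable {K} in
theorem exists_int_mul_sq (x : Kˣ) : ∃ a : 𝓞 K, a ≠ 0 ∧ ∃ z : Kˣ, (x : K) = a * z ^ 2 := by
  obtain ⟨a, b, hb, h⟩ := IsFractionRing.div_surjective (A := 𝓞 K) (x : K)
  have hb0 : algebraMap (𝓞 K) K b ≠ 0 := by
    simpa using nonZeroDivisors.ne_zero hb
  have ha0 : algebraMap (𝓞 K) K a ≠ 0 := by
    rintro h0; rw [h0, zero_div] at h; exact x.ne_zero h.symm
  refine ⟨a * b, ?_, (Units.mk0 _ hb0)⁻¹, ?_⟩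
  · rintro h0
    have := congrArg (algebraMap (𝓞 K) K) h0
    rw [map_mul, map_zero] at this
    exact mul_ne_zero ha0 hb0 this
  · rw [← h]
    simp only [map_mul, Units.val_inv_eq_inv_val, Units.val_mk0]
    field_simp

variable {K} in
theorem mem_virt_of_sq {a : 𝓞 K} {J : Ideal (𝓞 K)} (h : J ^ 2 = Ideal.span {a}) {x : Kˣ} {z : Kˣ}
    (hx : (x : K) = a * z ^ 2) : x ∈ virt K := by
  have ha : (a : K) ≠ 0 := by rintro h0; rw [h0, zero_mul] at hx; exact x.ne_zero hx
  have hJ : (J : FractionalIdeal (𝓞 K)⁰ K) ≠ 0 := by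
    rw [FractionalIdeal.coeIdeal_ne_zero]
    rintro rfl
    rw [← Ideal.zero_eq_bot, zero_pow (by norm_num), Ideal.zero_eq_bot, eq_comm,
      Ideal.span_singleton_eq_bot] at h
    exact ha (by rw [h]; rfl)
  have : x = Units.mk0 (a : K) ha * z ^ 2 := by ext; simpa using hx
  rw [this]
  refine mul_mem ⟨Units.mk0 _ hJ, ?_⟩ (sqs_le_virt K ⟨z, rfl⟩)
  refine (toPrincipalIdeal_eq_iff.mpr ?_).symm
  simp only [Units.val_mk0, powMonoidHom_apply, Units.val_pow_eq_pow_val]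
  rw [← FractionalIdeal.coeIdeal_pow, h, FractionalIdeal.coeIdeal_span_singleton]

variable {K} in
theorem exists_sq_of_mem_virt {x : Kˣ} (hx : x ∈ virt K) :
    ∃ (a : 𝓞 K) (J : Ideal (𝓞 K)) (z : Kˣ), J ^ 2 = Ideal.span {a} ∧ (x : K) = a * z ^ 2 := by
  obtain ⟨D, hD⟩ := hx
  obtain ⟨c, J, hc, hJ⟩ := D.1.exists_eq_spanSingleton_mul
  have hc0 : algebraMap (𝓞 K) K c ≠ 0 := by simpa using hc
  have hD' : D.1 ^ 2 = FractionalIdeal.spanSingleton _ (x : K) := by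
    have := congrArg Units.val hD
    simpa using this
  have h1 : ((J ^ 2 : Ideal (𝓞 K)) : FractionalIdeal (𝓞 K)⁰ K) =
      FractionalIdeal.spanSingleton _ ((algebraMap (𝓞 K) K c) ^ 2 * x) := by
    rw [← FractionalIdeal.spanSingleton_mul_spanSingleton, ← hD', hJ, mul_pow, ← mul_assoc,
      FractionalIdeal.coeIdeal_pow, FractionalIdeal.spanSingleton_pow,
      FractionalIdeal.spanSingleton_mul_spanSingleton]
    simp [hc0]
  have h2 : (algebraMap (𝓞 K) K c) ^ 2 * x ∈ ((J ^ 2 : Ideal (𝓞 K)) : FractionalIdeal (𝓞 K)⁰ K) := by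
    rw [h1]; exact FractionalIdeal.mem_spanSingleton_self _ _
  obtain ⟨a, -, ha⟩ := (FractionalIdeal.mem_coeIdeal _).mp h2
  refine ⟨a, J, (Units.mk0 _ hc0)⁻¹, ?_, ?_⟩
  · rw [← FractionalIdeal.coeIdeal_inj (K := K), h1, FractionalIdeal.coeIdeal_span_singleton, ha]
  · change _ = algebraMap (𝓞 K) K a * _
    rw [ha]
    simp only [Units.val_inv_eq_inv_val, Units.val_mk0]
    field_simp

/-- The parity of the valuation at a prime. -/
def parity (v : HeightOneSpectrum (𝓞 K)) : Kˣ →* Multiplicative (ZMod 2) where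
  toFun x := Multiplicative.ofAdd ((WithZero.log (v.valuation K (x : K)) : ℤ) : ZMod 2)
  map_one' := by simp
  map_mul' x y := by
    rw [Units.val_mul, map_mul, WithZero.log_mul (by simp) (by simp)]
    simp

variable {K} in
theorem mem_ker_parity {v : HeightOneSpectrum (𝓞 K)} {x : Kˣ} :
    x ∈ (parity K v).ker ↔ Even (WithZero.log (v.valuation K (x : K))) := by
  rw [MonoidHom.mem_ker]
  change Multiplicative.ofAdd _ = Multiplicative.ofAdd 0 ↔ _
  rw [Multiplicative.ofAdd.injective.eq_iff, ZMod.intCast_eq_zero_iff_even]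

theorem sqs_le_parity (v : HeightOneSpectrum (𝓞 K)) : sqs Kˣ ≤ (parity K v).ker := by
  rintro _ ⟨y, rfl⟩
  rw [mem_ker_parity]
  simp

theorem log_valuation_int (v : HeightOneSpectrum (𝓞 K)) {a : 𝓞 K} (ha : a ≠ 0) :
    WithZero.log (v.valuation K (a : K)) = - multiplicity v.asIdeal (Ideal.span {a}) := by
  change WithZero.log (v.valuation K (algebraMap (𝓞 K) K a)) = _
  rw [v.valuation_of_algebraMap, v.intValuation_eq_exp_neg_multiplicity ha, WithZero.log_exp]

theorem exists_sq_of_even {I : Ideal (𝓞 K)} (hI : I ≠ ⊥)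
    (h : ∀ v : HeightOneSpectrum (𝓞 K), Even (multiplicity v.asIdeal I)) : ∃ J, J ^ 2 = I := by
  classical
  have h2 : ∀ P ∈ UniqueFactorizationMonoid.normalizedFactors I,
      2 ∣ Multiset.count P (UniqueFactorizationMonoid.normalizedFactors I) := by
    intro P hP
    have hp := UniqueFactorizationMonoid.prime_of_normalized_factor P hP
    let v : HeightOneSpectrum (𝓞 K) := ⟨P, Ideal.isPrime_of_prime hp, hp.ne_zero⟩
    have := HeightOneSpectrum.count_normalizedFactors_eq_multiplicity hI v
    rw [this]
    exact (h v).two_dvd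
  obtain ⟨s, hs⟩ := Multiset.exists_smul_of_dvd_count _ h2
  refine ⟨s.prod, ?_⟩
  rw [← Multiset.prod_nsmul, ← hs]
  exact Ideal.prod_normalizedFactors_eq_self hI

variable {K} in
theorem mem_virt_iff {x : Kˣ} : x ∈ virt K ↔ ∀ v, x ∈ (parity K v).ker := by
  constructor
  · intro hx v
    obtain ⟨a, J, z, hJ, h⟩ := exists_sq_of_mem_virt hx
    have ha : (a : K) ≠ 0 := by rintro h0; rw [h0, zero_mul] at h; exact x.ne_zero h
    have : x = Units.mk0 (a : K) ha * z ^ 2 := by ext; simpa using h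
    rw [this]
    refine mul_mem ?_ (sqs_le_parity K v ⟨z, rfl⟩)
    have ha0 : a ≠ 0 := by rintro rfl; exact ha rfl
    rw [mem_ker_parity, Units.val_mk0, log_valuation_int K v ha0, ← hJ, even_neg]
    have hfm : FiniteMultiplicity v.asIdeal J := FiniteMultiplicity.of_prime_left v.prime (by
      rintro rfl
      rw [zero_pow (by norm_num), Ideal.zero_eq_bot, eq_comm, Ideal.span_singleton_eq_bot] at hJ
      exact ha0 hJ)
    rw [hfm.multiplicity_pow v.prime]
    simp
  · intro hx
    obtain ⟨a, ha0, z, h⟩ := exists_int_mul_sq x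
    have ha : (a : K) ≠ 0 := by rintro h0; rw [h0, zero_mul] at h; exact x.ne_zero h
    have : Units.mk0 (a : K) ha = x * (z⁻¹) ^ 2 := by ext; simp [h]
    obtain ⟨J, hJ⟩ := exists_sq_of_even K (I := Ideal.span {a}) (by simpa using ha0) (fun v => by
      have h2 : Units.mk0 (a : K) ha ∈ (parity K v).ker := by
        rw [this]; exact mul_mem (hx v) (sqs_le_parity K v ⟨_, rfl⟩)
      rw [mem_ker_parity, Units.val_mk0, log_valuation_int K v ha0, even_neg] at h2
      exact_mod_cast h2)
    exact mem_virt_of_sq hJ h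

end Sel

section Trace
variable {F K : Type*} [Field F] [Field K] [Algebra F K]

theorem exists_trace_eq (h2 : Module.finrank F K = 2) (β : K) :
    ∃ t : F, β ^ 2 - algebraMap F K t * β + algebraMap F K (Algebra.norm F β) = 0 := by
  have : Module.Finite F K := Module.finite_of_finrank_eq_succ h2
  have b := Module.finBasisOfFinrankEq F K h2
  refine ⟨(Algebra.leftMulMatrix b β).trace, ?_⟩
  have h := Matrix.aeval_self_charpoly (Algebra.leftMulMatrix b β)
  rw [Matrix.charpoly_fin_two, ← Algebra.norm_eq_matrix_det] at h
  apply Algebra.leftMulMatrix_injective b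
  rw [map_zero, ← h]
  simp only [map_add, map_sub, map_mul, map_pow, Polynomial.aeval_X, Polynomial.aeval_C,
    AlgHom.commutes]

theorem exists_sq_of_norm_sq (h2 : Module.finrank F K = 2) {β : K} (hβ : β ≠ 0) {c : F}
    (hc : Algebra.norm F β = c ^ 2) :
    ∃ f : F, f ≠ 0 ∧ ∃ y : K, y ≠ 0 ∧ algebraMap F K f * y ^ 2 = β := by
  obtain ⟨t, ht⟩ := exists_trace_eq h2 β
  rw [hc, map_pow] at ht
  by_cases h0 : t + 2 * c = 0
  · have h1 : t = - 2 * c := by linear_combination h0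
    have h3 : (β + algebraMap F K c) ^ 2 = 0 := by
      rw [← ht, h1]; simp only [map_mul, map_neg, map_ofNat]; ring
    have h4 : β = algebraMap F K (-c) := by
      rw [map_neg]; exact eq_neg_of_add_eq_zero_left (pow_eq_zero_iff (two_ne_zero) |>.mp h3)
    refine ⟨-c, ?_, 1, one_ne_zero, by rw [h4]; simp⟩
    rintro h5; rw [h5, map_zero] at h4; exact hβ h4
  · have h3 : (β + algebraMap F K c) ^ 2 = algebraMap F K (t + 2 * c) * β := by
      simp only [map_add, map_mul, map_ofNat]; linear_combination ht
    have h5 : algebraMap F K (t + 2 * c) ≠ 0 := (map_ne_zero _).mpr h0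
    refine ⟨t + 2 * c, h0, (β + algebraMap F K c) / algebraMap F K (t + 2 * c), ?_, ?_⟩
    · refine div_ne_zero ?_ h5
      intro h6; rw [h6] at h3
      exact mul_ne_zero h5 hβ (by rw [← h3]; ring)
    · rw [div_pow, h3]; field_simp

end Trace

section Bound
variable {F K : Type*} [Field F] [Field K] [NumberField F] [NumberField K] [Algebra F K]

theorem norm_mem_virt {x : Kˣ} (hx : x ∈ virt K) :
    Units.map (Algebra.norm F : K →* F) x ∈ virt F := by
  obtain ⟨a, J, z, hJ, h⟩ := exists_sq_of_mem_virt hx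
  refine mem_virt_of_sq (a := Algebra.intNorm (𝓞 F) (𝓞 K) a) (J := Ideal.relNorm (𝓞 F) J)
    (z := Units.map (Algebra.norm F : K →* F) z) ?_ ?_
  · rw [← map_pow, hJ, Ideal.relNorm_singleton]
  · rw [Units.coe_map, Units.coe_map, h, map_mul, map_pow]
    congr 1
    exact (Algebra.algebraMap_intNorm (A := 𝓞 F) (B := 𝓞 K) (K := F) (L := K) a).symm

theorem different_mem (h2 : Module.finrank F K = 2) (ω : 𝓞 K) (b c : 𝓞 F)
    (hω : ω ^ 2 = algebraMap (𝓞 F) (𝓞 K) b * ω - algebraMap (𝓞 F) (𝓞 K) c)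
    (hωF : ∀ f : F, algebraMap F K f ≠ ω) :
    2 * ω - algebraMap (𝓞 F) (𝓞 K) b ∈ differentIdeal (𝓞 F) (𝓞 K) := by
  open Polynomial in
  have hint : IsIntegral (𝓞 F) ω := Algebra.IsIntegral.isIntegral ω
  have hmin : minpoly (𝓞 F) ω = X ^ 2 - C b * X + C c := by
    have hm : (X ^ 2 - C b * X + C c : (𝓞 F)[X]).Monic := by monicity!
    refine (eq_of_monic_of_dvd_of_natDegree_le (minpoly.monic hint) hm
      (minpoly.isIntegrallyClosed_dvd hint ?_) ?_).symm
    · simp only [map_add, map_sub, map_mul, map_pow, aeval_X, aeval_C, hω]; ring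
    · have : (X ^ 2 - C b * X + C c : (𝓞 F)[X]).natDegree ≤ 2 := by compute_degree
      refine this.trans ((minpoly.two_le_natDegree_iff hint).mpr ?_)
      rintro ⟨f, hf⟩
      refine hωF f ?_
      rw [← hf]; rfl
  have hadj : Algebra.adjoin F {algebraMap (𝓞 K) K ω} = ⊤ := by
    have := Subalgebra.isSimpleOrder_of_finrank_prime F K (h2 ▸ Nat.prime_two)
    refine (eq_bot_or_eq_top _).resolve_left fun h => ?_
    have : algebraMap (𝓞 K) K ω ∈ (⊥ : Subalgebra F K) := h ▸ Algebra.self_mem_adjoin_singleton _ _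
    obtain ⟨f, hf⟩ := Algebra.mem_bot.mp this
    exact hωF f hf
  have h := aeval_derivative_mem_differentIdeal (𝓞 F) F K ω hadj
  rw [hmin] at h
  simpa [one_add_one_eq_two, map_ofNat] using h

theorem parity_of_map_mem_virt (h2 : Module.finrank F K = 2) (ω : 𝓞 K) (b c : 𝓞 F)
    (hω : ω ^ 2 = algebraMap (𝓞 F) (𝓞 K) b * ω - algebraMap (𝓞 F) (𝓞 K) c)
    (hωF : ∀ f : F, algebraMap F K f ≠ ω) (v : HeightOneSpectrum (𝓞 F))
    (hv : b ^ 2 - 4 * c ∉ v.asIdeal) {x : Fˣ}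
    (hx : Units.map (algebraMap F K).toMonoidHom x ∈ virt K) : x ∈ (parity F v).ker := by
  obtain ⟨Q, hQ, hQv⟩ := Ideal.exists_maximal_ideal_liesOver_of_isIntegral v.asIdeal (S := 𝓞 K)
  have hQ0 : Q ≠ ⊥ := Ideal.ne_bot_of_liesOver_of_ne_bot v.ne_bot Q
  let w : HeightOneSpectrum (𝓞 K) := ⟨Q, hQ.isPrime, hQ0⟩
  have : w.asIdeal.LiesOver v.asIdeal := hQv
  have he : v.asIdeal.ramificationIdx' w.asIdeal = 1 := by
    have h0 := Ideal.IsDedekindDomain.ramificationIdx'_ne_zero_of_liesOver w.asIdeal v.ne_bot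
    have h1 : v.asIdeal.ramificationIdx' w.asIdeal < 2 := by
      refine Ideal.ramificationIdx'_lt fun h => hv ?_
      have h3 := pow_sub_one_dvd_differentIdeal (𝓞 F) Q 2 v.ne_bot (Ideal.dvd_iff_le.mpr h)
      have h4 := Ideal.dvd_iff_le.mp h3 (different_mem h2 ω b c hω hωF)
      rw [show (2 - 1) = 1 from rfl, pow_one] at h4
      rw [hQv.over, Ideal.mem_comap]
      have h5 : algebraMap (𝓞 F) (𝓞 K) (b ^ 2 - 4 * c) =
          (2 * ω - algebraMap (𝓞 F) (𝓞 K) b) * (2 * ω - algebraMap (𝓞 F) (𝓞 K) b) := by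
        simp only [map_sub, map_mul, map_pow, map_ofNat]
        linear_combination (-4) * hω
      rw [h5]
      exact Q.mul_mem_left _ h4
    omega
  have h := mem_ker_parity.mp (mem_virt_iff.mp hx w)
  have h6 := HeightOneSpectrum.valuation_liesOver K v w (x : F)
  rw [he, pow_one] at h6
  rw [mem_ker_parity, h6]
  exact h

theorem sel_bound (h2 : Module.finrank F K = 2) (ω : 𝓞 K) (b c : 𝓞 F)
    (hω : ω ^ 2 = algebraMap (𝓞 F) (𝓞 K) b * ω - algebraMap (𝓞 F) (𝓞 K) c)
    (hωF : ∀ f : F, algebraMap F K f ≠ ω)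
    (T : Finset (HeightOneSpectrum (𝓞 F))) (hT : ∀ v, b ^ 2 - 4 * c ∈ v.asIdeal → v ∈ T)
    (u : Fˣ) (hu : u ∈ virt F)
    (hnorm : ∀ (β : K) (y : F), y ≠ 0 → Algebra.norm F β ≠ u * y ^ 2) :
    4 * sel K ≤ sel F ^ 2 * 2 ^ T.card := by
  set N : Kˣ →* Fˣ := Units.map (Algebra.norm F : K →* F)
  set i : Fˣ →* Kˣ := Units.map (algebraMap F K).toMonoidHom
  have hNV : (virt K).map N ≤ virt F := by
    rintro _ ⟨x, hx, rfl⟩; exact norm_mem_virt hx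
  have hselF : (sqs Fˣ).relIndex (virt F) ≠ 0 := sel_ne_zero F
  have hselK : (sqs Kˣ).relIndex (virt K) ≠ 0 := sel_ne_zero K
  set W := (sqs Fˣ).comap N ⊓ virt K
  have hSW : sqs Kˣ ≤ W := le_inf (by rintro _ ⟨y, rfl⟩; exact ⟨N y, by simp⟩) (sqs_le_virt K)
  have h1 : (sqs Kˣ).relIndex W * W.relIndex (virt K) = sel K :=
    Subgroup.relIndex_mul_relIndex _ _ _ hSW inf_le_right
  have h3 : 2 * W.relIndex (virt K) ≤ sel F := by
    rw [Subgroup.inf_relIndex_right, Subgroup.relIndex_comap,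
      ← Subgroup.relIndex_sup_left ((virt K).map N) (sqs Fˣ)]
    have hle : sqs Fˣ ⊔ (virt K).map N ≤ virt F := sup_le (sqs_le_virt F) hNV
    have h4 := Subgroup.relIndex_mul_relIndex _ _ _ le_sup_left hle
    have h5 : (sqs Fˣ ⊔ (virt K).map N).relIndex (virt F) ≠ 1 := by
      rw [Ne, Subgroup.relIndex_eq_one]
      intro h
      obtain ⟨_, ⟨y, rfl⟩, _, ⟨β, -, rfl⟩, hy⟩ := Subgroup.mem_sup.mp (h hu)
      refine hnorm β (y⁻¹ : Fˣ) (Units.ne_zero _) ?_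
      rw [← hy]
      have hy0 := y.ne_zero
      simp [N]
      field_simp
    have h6 : (sqs Fˣ ⊔ (virt K).map N).relIndex (virt F) ≠ 0 := fun h0 => by
      rw [h0, mul_zero] at h4; exact hselF h4.symm
    rw [sel, ← h4, mul_comm]
    exact Nat.mul_le_mul_left _ (by omega)
  set U := (virt K).comap i
  set S' := (sqs Kˣ).comap i
  have hS'U : S' ≤ U := Subgroup.comap_mono (sqs_le_virt K)
  have hSS' : sqs Fˣ ≤ S' := by rintro _ ⟨y, rfl⟩; exact ⟨i y, by simp⟩
  have hSWU : (sqs Kˣ).relIndex W ≤ S'.relIndex U := by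
    rw [Subgroup.relIndex_comap]
    have hle : W ≤ U.map i ⊔ sqs Kˣ := by
      rintro β ⟨⟨c, hc⟩, hβ⟩
      have hc' : Algebra.norm F (β : K) = (c : F) ^ 2 := (congrArg Units.val hc).symm
      obtain ⟨f, hf, y, hy, hfy⟩ := exists_sq_of_norm_sq h2 β.ne_zero hc'
      have hb : i (Units.mk0 f hf) * (Units.mk0 y hy) ^ 2 = β := by ext; exact hfy
      refine Subgroup.mem_sup.mpr ⟨_, ⟨Units.mk0 f hf, ?_, rfl⟩, _, ⟨Units.mk0 y hy, rfl⟩, hb⟩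
      change i _ ∈ virt K
      rw [eq_mul_inv_of_mul_eq hb]
      exact mul_mem hβ (inv_mem (sqs_le_virt K ⟨_, rfl⟩))
    rw [← Subgroup.relIndex_sup_right (U.map i) (sqs Kˣ)]
    refine Subgroup.relIndex_le_of_le_right hle ?_
    refine fun h0 => hselK (Subgroup.relIndex_eq_zero_of_le_right ?_ h0)
    exact sup_le (Subgroup.map_comap_le _ _) (sqs_le_virt K)
  have hSU : (sqs Fˣ).relIndex U ≤ sel F * 2 ^ T.card ∧ (sqs Fˣ).relIndex U ≠ 0 := by
    set Z := ⨅ v : T, (parity F v).ker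
    have hZ : Z.relIndex U ≤ 2 ^ T.card := by
      refine (Subgroup.relIndex_iInf_le _).trans ?_
      refine (Finset.prod_le_pow_card _ _ 2 fun v _ => ?_).trans ?_
      · rw [Subgroup.relIndex_ker]
        exact (Subgroup.card_le_card_group _).trans (by simp)
      · simp
    have hZ0 : Z.relIndex U ≠ 0 := by
      refine Subgroup.relIndex_iInf_ne_zero fun v => ?_
      rw [Subgroup.relIndex_ker]
      exact Nat.card_pos.ne'
    have hZV : Z ⊓ U ≤ virt F := fun x hx => mem_virt_iff.mpr fun v => by
      by_cases hv : v ∈ T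
      · exact (Subgroup.mem_iInf.mp hx.1 ⟨v, hv⟩ :)
      · exact parity_of_map_mem_virt h2 ω b c hω hωF v (fun h => hv (hT v h)) hx.2
    have hSZ : sqs Fˣ ≤ Z ⊓ U := le_inf (le_iInf fun v => sqs_le_parity F v) (hSS'.trans hS'U)
    have h9 := Subgroup.relIndex_mul_relIndex _ _ _ hSZ inf_le_right
    rw [Subgroup.inf_relIndex_right] at h9
    have h10 : (sqs Fˣ).relIndex (Z ⊓ U) ≠ 0 := fun h0 =>
      hselF (Subgroup.relIndex_eq_zero_of_le_right hZV h0)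
    rw [← h9]
    exact ⟨Nat.mul_le_mul (Subgroup.relIndex_le_of_le_right hZV hselF) hZ, mul_ne_zero h10 hZ0⟩
  have h7 : 2 * S'.relIndex U ≤ (sqs Fˣ).relIndex U := by
    have h11 := Subgroup.relIndex_mul_relIndex _ _ _ hSS' hS'U
    have h12 : (sqs Fˣ).relIndex S' ≠ 0 := fun h0 => by
      rw [h0, zero_mul] at h11; exact hSU.2 h11.symm
    have h13 : (sqs Fˣ).relIndex S' ≠ 1 := by
      rw [Ne, Subgroup.relIndex_eq_one]
      intro h
      have hd : ((ω : K) * 2 - algebraMap F K b) ^ 2 = algebraMap F K (b ^ 2 - 4 * c) := by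
        have := congrArg (algebraMap (𝓞 K) K) hω
        simp only [map_sub, map_mul, map_pow, ← IsScalarTower.algebraMap_apply] at this
        simp only [map_sub, map_mul, map_pow, map_ofNat]
        rw [IsScalarTower.algebraMap_apply (𝓞 F) F K, IsScalarTower.algebraMap_apply (𝓞 F) F K]
          at this
        linear_combination 4 * this
      have hne : ((b : F) ^ 2 - 4 * c) ≠ 0 := by
        intro h0
        rw [h0, map_zero, pow_eq_zero_iff two_ne_zero] at hd
        refine hωF ((b : F) / 2) ?_
        rw [map_div₀, map_ofNat]
        linear_combination (-1 / 2) * hd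
      have hmem : Units.mk0 _ hne ∈ S' := by
        refine ⟨Units.mk0 ((ω : K) * 2 - algebraMap F K b) fun h0 => ?_, ?_⟩
        · rw [h0, zero_pow two_ne_zero, eq_comm, map_eq_zero] at hd
          exact hne hd
        · ext; exact hd
      obtain ⟨y, hy⟩ := h hmem
      have hy' : (y : F) ^ 2 = (b : F) ^ 2 - 4 * c := congrArg Units.val hy
      rw [← hy', map_pow] at hd
      rcases sq_eq_sq_iff_eq_or_eq_neg.mp hd with h | h
      · refine hωF (((b : F) + y) / 2) ?_
        rw [map_div₀, map_add, map_ofNat]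
        linear_combination (-1 / 2) * h
      · refine hωF (((b : F) - y) / 2) ?_
        rw [map_div₀, map_sub, map_ofNat]
        linear_combination (-1 / 2) * h
    rw [← h11]
    exact Nat.mul_le_mul_right _ (by omega)
  calc 4 * sel K = (2 * (sqs Kˣ).relIndex W) * (2 * W.relIndex (virt K)) := by rw [← h1]; ring
    _ ≤ (sel F * 2 ^ T.card) * sel F :=
      Nat.mul_le_mul (((Nat.mul_le_mul_left 2 hSWU).trans h7).trans hSU.1) h3
    _ = _ := by ring

end Bound

section Quad
variable {F K : Type*} [Field F] [Field K] [Algebra F K]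

/-- `K = F(θ)` is a quadratic extension with `θ ^ 2 = d`. -/
structure IsQuad (F K : Type*) [Field F] [Field K] [Algebra F K] (d : F) (θ : K) : Prop where
  finrank : Module.finrank F K = 2
  sq : θ ^ 2 = algebraMap F K d
  not_sq : ¬ IsSquare d

namespace IsQuad
variable {d : F} {θ : K} (h : IsQuad F K d θ)
include h

theorem ne (f : F) : algebraMap F K f ≠ θ := fun hf => h.not_sq ⟨f, by
  have := h.sq
  rw [← hf, ← map_pow] at this
  rw [← pow_two]; exact ((algebraMap F K).injective this).symm⟩

theorem eq_zero {a b : F} (hab : algebraMap F K a + algebraMap F K b * θ = 0) : a = 0 ∧ b = 0 := by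
  by_cases hb : b = 0
  · subst hb; simpa using hab
  · exfalso
    refine h.ne (-a / b) ?_
    have : algebraMap F K b ≠ 0 := (map_ne_zero _).mpr hb
    rw [map_div₀, map_neg, div_eq_iff this]
    linear_combination -hab

theorem unique {a b a' b' : F}
    (hab : algebraMap F K a + algebraMap F K b * θ = algebraMap F K a' + algebraMap F K b' * θ) :
    a = a' ∧ b = b' := by
  have := h.eq_zero (a := a - a') (b := b - b') (by
    simp only [map_sub]; linear_combination hab)
  exact ⟨sub_eq_zero.mp this.1, sub_eq_zero.mp this.2⟩

theorem exists_coord (x : K) : ∃ a b : F, algebraMap F K a + algebraMap F K b * θ = x := by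
  have : FiniteDimensional F K := Module.finite_of_finrank_eq_succ h.finrank
  have hli : LinearIndependent F ![(1 : K), θ] := by
    rw [LinearIndependent.pair_iff]
    intro s t hst
    rw [Algebra.smul_def, Algebra.smul_def, mul_one] at hst
    exact h.eq_zero hst
  have hspan := hli.span_eq_top_of_card_eq_finrank' (by rw [h.finrank]; rfl)
  have hx : x ∈ Submodule.span F (Set.range ![(1 : K), θ]) := hspan ▸ Submodule.mem_top
  rw [Matrix.range_cons, Matrix.range_cons, Matrix.range_empty, Set.union_empty,
    Set.singleton_union, Submodule.mem_span_pair] at hx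
  obtain ⟨a, b, hab⟩ := hx
  exact ⟨a, b, by rw [← hab, Algebra.smul_def, Algebra.smul_def, mul_one]⟩

theorem norm_eq (a b : F) :
    Algebra.norm F (algebraMap F K a + algebraMap F K b * θ) = a ^ 2 - d * b ^ 2 := by
  by_cases hb : b = 0
  · subst hb; simp [Algebra.norm_algebraMap, h.finrank]
  · obtain ⟨t, ht⟩ := exists_trace_eq h.finrank (algebraMap F K a + algebraMap F K b * θ)
    set N := Algebra.norm F (algebraMap F K a + algebraMap F K b * θ)
    have := h.eq_zero (a := a ^ 2 + d * b ^ 2 - t * a + N) (b := 2 * a * b - t * b) (by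
      rw [← ht]
      simp only [map_sub, map_add, map_mul, map_pow, map_ofNat]
      linear_combination (-(algebraMap F K b) ^ 2) * h.sq)
    have ht : t = 2 * a := mul_right_cancel₀ hb (by linear_combination -this.2)
    linear_combination this.1 + a * ht

theorem exists_lift {Ω : Type*} [CommRing Ω] (φ : F →+* Ω) (w : Ω) (hw : w ^ 2 = φ d) :
    ∃ ψ : K →+* Ω, (∀ a, ψ (algebraMap F K a) = φ a) ∧ ψ θ = w := by
  choose a b hab using h.exists_coord
  have key : ∀ (x : K) (s t : F), algebraMap F K s + algebraMap F K t * θ = x →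
      a x = s ∧ b x = t := fun x s t hx => h.unique ((hab x).trans hx.symm)
  refine ⟨{ toFun := fun x => φ (a x) + φ (b x) * w, map_one' := ?_, map_mul' := ?_,
            map_zero' := ?_, map_add' := ?_ }, ?_, ?_⟩
  · obtain ⟨h1, h2⟩ := key 1 1 0 (by simp)
    simp [h1, h2]
  · intro x y
    obtain ⟨h1, h2⟩ := key (x * y) (a x * a y + d * (b x * b y)) (a x * b y + b x * a y) (by
      conv_rhs => rw [← hab x, ← hab y]
      simp only [map_add, map_mul]
      linear_combination (-(algebraMap F K (b x) * algebraMap F K (b y))) * h.sq)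
    simp only [h1, h2, map_add, map_mul]
    linear_combination (-(φ (b x) * φ (b y))) * hw
  · obtain ⟨h1, h2⟩ := key 0 0 0 (by simp)
    simp [h1, h2]
  · intro x y
    obtain ⟨h1, h2⟩ := key (x + y) (a x + a y) (b x + b y) (by
      conv_rhs => rw [← hab x, ← hab y]
      simp only [map_add]; ring)
    simp only [h1, h2, map_add]; ring
  · intro s
    obtain ⟨h1, h2⟩ := key (algebraMap F K s) s 0 (by simp)
    simp [h1, h2]
  · obtain ⟨h1, h2⟩ := key θ 0 1 (by simp)
    simp [h1, h2]

/-- A square root in `K` of an element of `F` lies in `F` or in `F * θ`. -/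
theorem isSquare_or [CharZero F] {e : F} {x : K} (hx : x ^ 2 = algebraMap F K e) :
    IsSquare e ∨ IsSquare (e * d) := by
  obtain ⟨a, b, rfl⟩ := h.exists_coord x
  have := h.eq_zero (a := a ^ 2 + d * b ^ 2 - e) (b := 2 * a * b) (by
    simp only [map_sub, map_add, map_mul, map_pow, map_ofNat]
    rw [← hx]
    linear_combination (-(algebraMap F K b) ^ 2) * h.sq)
  obtain ⟨h1, h2⟩ := this
  have h3 : a = 0 ∨ b = 0 := by simpa using h2
  rcases h3 with rfl | rfl
  · right; exact ⟨d * b, by linear_combination (-d) * h1⟩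
  · left; exact ⟨a, by linear_combination (-1) * h1⟩

end IsQuad
end Quad

section Local
variable {ℓ : ℕ} [Fact ℓ.Prime]

theorem eq_zero_of_nonresidue {c e : ℤ} (hc : legendreSym ℓ c = -1) (he : ¬ (ℓ : ℤ) ∣ e)
    {x y z : ℚ_[ℓ]} (h : c * z ^ 2 = x ^ 2 + ℓ * e * y ^ 2) : z = 0 := by
  by_contra hz
  have hcℓ : ¬ (ℓ : ℤ) ∣ c := fun hd => by
    rw [(legendreSym.eq_zero_iff ℓ c).mpr ((ZMod.intCast_zmod_eq_zero_iff_dvd _ _).mpr hd)] at hc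
    norm_num at hc
  have hnorm : ∀ a : ℤ, ¬ (ℓ : ℤ) ∣ a → ‖(a : ℚ_[ℓ])‖ = 1 := fun a ha =>
    le_antisymm (Padic.norm_int_le_one a) (not_lt.mp (mt Padic.norm_intCast_lt_one_iff.mp ha))
  have h' : (c : ℚ_[ℓ]) = (x / z) ^ 2 + ℓ * e * (y / z) ^ 2 := by
    field_simp; linear_combination h
  generalize x / z = x at h'
  generalize y / z = y at h'
  have hℓ1 : (1 : ℝ) < ℓ := by exact_mod_cast (Fact.out : ℓ.Prime).one_lt
  by_cases hy : ‖y‖ ≤ 1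
  · have h1 : ‖(ℓ : ℚ_[ℓ]) * e * y ^ 2‖ < 1 := by
      rw [norm_mul, norm_mul, hnorm e he, mul_one, norm_pow, Padic.norm_p]
      calc (ℓ : ℝ)⁻¹ * ‖y‖ ^ 2 ≤ (ℓ : ℝ)⁻¹ * 1 := by gcongr; exact pow_le_one₀ (norm_nonneg _) hy
        _ < 1 := by rw [mul_one]; exact inv_lt_one_of_one_lt₀ hℓ1
    have hx : ‖x‖ ≤ 1 := by
      have : ‖x ^ 2‖ ≤ 1 := by
        rw [show x ^ 2 = c + -(ℓ * e * y ^ 2) by linear_combination -h']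
        refine (Padic.nonarchimedean _ _).trans (max_le (Padic.norm_int_le_one c) ?_)
        rw [norm_neg]; exact h1.le
      rw [norm_pow] at this
      exact (pow_le_one_iff_of_nonneg (norm_nonneg _) two_ne_zero).mp this
    let X : ℤ_[ℓ] := ⟨x, hx⟩
    let Y : ℤ_[ℓ] := ⟨y, hy⟩
    have h2 : (c : ℤ_[ℓ]) = X ^ 2 + ℓ * e * Y ^ 2 := by
      apply PadicInt.ext
      push_cast
      exact h'
    have h3 := congrArg PadicInt.toZMod h2
    simp only [map_add, map_mul, map_pow, map_intCast, map_natCast, CharP.cast_eq_zero, zero_mul,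
      add_zero] at h3
    have hc0 : (c : ZMod ℓ) ≠ 0 := by rwa [Ne, ZMod.intCast_zmod_eq_zero_iff_dvd]
    have := (legendreSym.eq_one_iff ℓ hc0).mpr ⟨_, h3.trans (pow_two _)⟩
    rw [this] at hc
    norm_num at hc
  · rw [not_le] at hy
    have hy0 : y ≠ 0 := by rintro rfl; norm_num at hy
    have hℓ0 : (0 : ℝ) < ℓ := by linarith
    have hn : ‖-((ℓ : ℚ_[ℓ]) * e * y ^ 2)‖ = (ℓ : ℝ) ^ (-1 - 2 * y.valuation) := by
      rw [norm_neg, norm_mul, norm_mul, hnorm e he, mul_one, norm_pow, Padic.norm_p,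
        Padic.norm_eq_zpow_neg_valuation hy0, ← zpow_natCast, ← zpow_mul, ← zpow_neg_one,
        ← zpow_add₀ hℓ0.ne']
      congr 1; push_cast; ring
    have hv : y.valuation < 0 := by
      rw [Padic.norm_eq_zpow_neg_valuation hy0] at hy
      have := (one_lt_zpow_iff_right₀ hℓ1).mp hy
      omega
    have hbig : 1 < ‖-((ℓ : ℚ_[ℓ]) * e * y ^ 2)‖ := by
      rw [hn]; exact one_lt_zpow₀ hℓ1 (by omega)
    have hx : ‖x ^ 2‖ = (ℓ : ℝ) ^ (-1 - 2 * y.valuation) := by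
      rw [show x ^ 2 = c + -(ℓ * e * y ^ 2) by linear_combination -h',
        Padic.add_eq_max_of_ne (by rw [hnorm c hcℓ]; exact hbig.ne), hnorm c hcℓ,
        max_eq_right hbig.le, hn]
    have hx0 : x ≠ 0 := by
      rintro rfl
      have : (0 : ℝ) < (ℓ : ℝ) ^ (-1 - 2 * y.valuation) := by positivity
      rw [← hx] at this; norm_num at this
    rw [norm_pow, Padic.norm_eq_zpow_neg_valuation hx0, ← zpow_natCast, ← zpow_mul] at hx
    have := zpow_right_injective₀ hℓ0 hℓ1.ne' hx
    push_cast at this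
    omega

end Local

section Primes
variable {F : Type*} [Field F] [NumberField F]

theorem exists_finset_primes {I : Ideal (𝓞 F)} (hI : I ≠ ⊥) {c : ℕ}
    (hc : ∀ v : HeightOneSpectrum (𝓞 F), I ≤ v.asIdeal → c ≤ Ideal.absNorm v.asIdeal) :
    ∃ T : Finset (HeightOneSpectrum (𝓞 F)), (∀ v, I ≤ v.asIdeal → v ∈ T) ∧
      c ^ T.card ≤ Ideal.absNorm I := by
  classical
  have hfin := Ideal.finite_factors hI
  refine ⟨hfin.toFinset, fun v hv => ?_, ?_⟩
  · rw [Set.Finite.mem_toFinset]; exact Ideal.dvd_iff_le.mpr hv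
  · have hdvd : ∏ v ∈ hfin.toFinset, v.asIdeal ∣ I := by
      have := Finset.prod_primes_dvd (s := hfin.toFinset.image HeightOneSpectrum.asIdeal) I
        (by
          intro J hJ
          obtain ⟨v, -, rfl⟩ := Finset.mem_image.mp hJ
          exact v.prime)
        (by
          intro J hJ
          obtain ⟨v, hv, rfl⟩ := Finset.mem_image.mp hJ
          exact (Set.Finite.mem_toFinset hfin).mp hv)
      rwa [Finset.prod_image (fun v _ w _ h => HeightOneSpectrum.ext h)] at this
    have h1 : Ideal.absNorm (∏ v ∈ hfin.toFinset, v.asIdeal) ≤ Ideal.absNorm I :=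
      Nat.le_of_dvd (Nat.pos_of_ne_zero (mt Ideal.absNorm_eq_zero_iff.mp hI))
        (map_dvd Ideal.absNorm hdvd)
    refine le_trans ?_ h1
    rw [map_prod, ← Finset.prod_const]
    refine Finset.prod_le_prod' fun v hv => hc v ?_
    exact Ideal.dvd_iff_le.mp ((Set.Finite.mem_toFinset hfin).mp hv)

theorem absNorm_span_nat (n : ℕ) :
    Ideal.absNorm (Ideal.span {(n : 𝓞 F)}) = n ^ Module.finrank ℚ F := by
  rw [Ideal.absNorm_span_singleton, ← map_natCast (algebraMap ℤ (𝓞 F)), Algebra.norm_algebraMap,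
    RingOfIntegers.rank, Int.natAbs_pow]
  simp

theorem absNorm_eq_pow {ℓ : ℕ} (hℓ : ℓ.Prime) (v : HeightOneSpectrum (𝓞 F))
    (hv : (ℓ : 𝓞 F) ∈ v.asIdeal) : ∃ f, f ≠ 0 ∧ Ideal.absNorm v.asIdeal = ℓ ^ f := by
  have h1 : Ideal.absNorm v.asIdeal ∣ ℓ ^ Module.finrank ℚ F := by
    rw [← absNorm_span_nat]
    exact Ideal.absNorm_dvd_absNorm_of_le ((Ideal.span_singleton_le_iff_mem _).mpr hv)
  obtain ⟨f, -, hf⟩ := (Nat.dvd_prime_pow hℓ).mp h1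
  refine ⟨f, ?_, hf⟩
  rintro rfl
  rw [pow_zero, Ideal.absNorm_eq_one_iff] at hf
  exact v.isPrime.ne_top hf

theorem le_absNorm {ℓ : ℕ} (hℓ : ℓ.Prime) (v : HeightOneSpectrum (𝓞 F))
    (hv : (ℓ : 𝓞 F) ∈ v.asIdeal) : ℓ ≤ Ideal.absNorm v.asIdeal := by
  obtain ⟨f, hf, h⟩ := absNorm_eq_pow hℓ v hv
  rw [h]; exact Nat.le_self_pow hf ℓ

theorem int_mem_iff {ℓ : ℕ} (hℓ : ℓ.Prime) {v : Ideal (𝓞 F)} (hv1 : v ≠ ⊤)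
    (hv : (ℓ : 𝓞 F) ∈ v) (n : ℤ) : (n : 𝓞 F) ∈ v ↔ (ℓ : ℤ) ∣ n := by
  constructor
  · intro hn
    by_contra hd
    have hco : IsCoprime (ℓ : ℤ) n :=
      (Prime.coprime_iff_not_dvd (Nat.prime_iff_prime_int.mp hℓ)).mpr hd
    obtain ⟨a, b, hab⟩ := hco
    apply hv1
    rw [Ideal.eq_top_iff_one]
    have : (1 : 𝓞 F) = a * (ℓ : 𝓞 F) + b * n := by exact_mod_cast hab.symm
    rw [this]
    exact add_mem (v.mul_mem_left _ hv) (v.mul_mem_left _ hn)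
  · rintro ⟨m, rfl⟩
    push_cast
    exact v.mul_mem_right _ hv

theorem exists_int_sub_mem {ℓ : ℕ} (hℓ : ℓ.Prime) {v : Ideal (𝓞 F)}
    (hv : Ideal.absNorm v = ℓ) (x : 𝓞 F) : ∃ n : ℤ, x - n ∈ v := by
  have hcard : Nat.card (𝓞 F ⧸ v) = ℓ := by
    rw [← hv, Ideal.absNorm_apply]; rfl
  have : Finite (𝓞 F ⧸ v) := Nat.finite_of_card_ne_zero (by rw [hcard]; exact hℓ.ne_zero)
  have := Fintype.ofFinite (𝓞 F ⧸ v)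
  let e := ZMod.ringEquivOfPrime (𝓞 F ⧸ v) hℓ (by rw [← Nat.card_eq_fintype_card, hcard])
  obtain ⟨a, ha⟩ := e.surjective (Ideal.Quotient.mk v x)
  obtain ⟨n, rfl⟩ := ZMod.intCast_surjective a
  refine ⟨n, ?_⟩
  rw [← Ideal.Quotient.eq_zero_iff_mem, map_sub, ← ha]
  simp

theorem exists_finset_over {ℓ : ℕ} (hℓ : ℓ.Prime) :
    ∃ T : Finset (HeightOneSpectrum (𝓞 F)), (∀ v, (ℓ : 𝓞 F) ∈ v.asIdeal → v ∈ T) ∧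
      T.card ≤ Module.finrank ℚ F := by
  obtain ⟨T, hT, hcard⟩ := exists_finset_primes (I := Ideal.span {(ℓ : 𝓞 F)}) (c := ℓ)
    (by simpa using hℓ.ne_zero)
    (fun v hv => le_absNorm hℓ v ((Ideal.span_singleton_le_iff_mem _).mp hv))
  rw [absNorm_span_nat] at hcard
  exact ⟨T, fun v hv => hT v ((Ideal.span_singleton_le_iff_mem _).mpr hv),
    (Nat.pow_le_pow_iff_right hℓ.one_lt).mp hcard⟩

theorem rank_of_sq_neg {x : F} {d : ℚ} (hd : d < 0) (hx : x ^ 2 = d) :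
    2 * (Units.rank F + 1) = Module.finrank ℚ F := by
  have hreal : InfinitePlace.nrRealPlaces F = 0 := by
    classical
    rw [InfinitePlace.nrRealPlaces, Fintype.card_eq_zero_iff]
    refine ⟨fun w => ?_⟩
    have h1 : (InfinitePlace.embedding_of_isReal w.2 x) ^ 2 = (d : ℝ) := by
      rw [← map_pow, hx, map_ratCast]
    have h2 : (d : ℝ) < 0 := by exact_mod_cast hd
    nlinarith [sq_nonneg (InfinitePlace.embedding_of_isReal w.2 x)]
  have h := InfinitePlace.card_add_two_mul_card_eq_rank F
  have h' := InfinitePlace.card_eq_nrRealPlaces_add_nrComplexPlaces F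
  have hpos : 0 < Module.finrank ℚ F := Module.finrank_pos
  rw [Units.rank]
  omega

theorem rank_of_real (ψ : F →+* ℝ) (h2 : Module.finrank ℚ F = 2) : Units.rank F = 1 := by
  have hreal : 0 < InfinitePlace.nrRealPlaces F := by
    classical
    rw [InfinitePlace.nrRealPlaces, Fintype.card_pos_iff]
    refine ⟨⟨InfinitePlace.mk (Complex.ofRealHom.comp ψ), ⟨_, ?_, rfl⟩⟩⟩
    rw [ComplexEmbedding.isReal_iff]
    ext x
    simp [ComplexEmbedding.conjugate]
  have h := InfinitePlace.card_add_two_mul_card_eq_rank F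
  have h' := InfinitePlace.card_eq_nrRealPlaces_add_nrComplexPlaces F
  rw [Units.rank]
  omega

theorem odd_card_of_twoTors {G : Type*} [CommGroup G] [Finite G] (h : Nat.card (twoTors G) ≤ 1) :
    Odd (Nat.card G) := by
  by_contra hodd
  rw [Nat.not_odd_iff_even, even_iff_two_dvd] at hodd
  have : Fact (Nat.Prime 2) := ⟨Nat.prime_two⟩
  obtain ⟨x, hx⟩ := exists_prime_orderOf_dvd_card' 2 hodd
  have hs : Subsingleton (twoTors G) := Finite.card_le_one_iff_subsingleton.mp h
  have h1 : x ∈ twoTors G := by rw [mem_twoTors, ← hx, pow_orderOf_eq_one]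
  have : x = 1 := congrArg Subtype.val (Subsingleton.elim (⟨x, h1⟩ : twoTors G) 1)
  rw [this, orderOf_one] at hx
  omega

end Primes

section Selmer
variable {F K : Type*} [Field F] [Field K] [NumberField F] [NumberField K] [Algebra F K]

theorem neg_one_mem_virt : (-1 : Fˣ) ∈ virt F :=
  mem_virt_of_sq (a := -1) (J := ⊤) (z := 1)
    (by rw [Ideal.span_singleton_neg, Ideal.span_singleton_one, pow_two, Ideal.top_mul]) (by simp)

theorem IsQuad.sel_le {d : 𝓞 F} {θ : K} (h : IsQuad F K (d : F) θ)
    (T : Finset (HeightOneSpectrum (𝓞 F))) (hT : ∀ v, 4 * d ∈ v.asIdeal → v ∈ T)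
    (u : Fˣ) (hu : u ∈ virt F)
    (hnorm : ∀ a b y : F, y ≠ 0 → a ^ 2 - d * b ^ 2 ≠ u * y ^ 2) :
    4 * sel K ≤ sel F ^ 2 * 2 ^ T.card := by
  have hint : IsIntegral ℤ θ := by
    refine IsIntegral.of_pow two_pos ?_
    rw [h.sq]
    exact (RingOfIntegers.isIntegral_coe d).algebraMap
  let ω : 𝓞 K := ⟨θ, hint⟩
  refine sel_bound h.finrank ω 0 (-d) ?_ h.ne T ?_ u hu ?_
  · rw [map_zero, zero_mul, map_neg, zero_sub, neg_neg]
    exact RingOfIntegers.ext h.sq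
  · intro v hv
    exact hT v (by convert hv using 1; ring)
  · intro β y hy
    obtain ⟨a, b, rfl⟩ := h.exists_coord β
    rw [h.norm_eq]
    exact hnorm a b y hy

theorem sel_rat : sel ℚ = 2 := by
  have h1 : Units.rank ℚ = 0 := by
    have h := InfinitePlace.card_add_two_mul_card_eq_rank ℚ
    have h' := InfinitePlace.card_eq_nrRealPlaces_add_nrComplexPlaces ℚ
    rw [Module.finrank_self] at h
    rw [Units.rank]
    omega
  have h2 : Nat.card (ClassGroup (𝓞 ℚ)) = 1 := by
    rw [Nat.card_eq_fintype_card]; exact Rat.classNumber_eq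
  have h3 : Nat.card (twoTors (ClassGroup (𝓞 ℚ))) = 1 := by
    have := Subgroup.card_subgroup_dvd_card (twoTors (ClassGroup (𝓞 ℚ)))
    rw [h2] at this
    exact Nat.dvd_one.mp this
  rw [sel_eq, h1, h3]; norm_num

theorem IsQuad.sel_le_rat {d : ℤ} {θ : K} (h : IsQuad ℚ K d θ)
    (T : Finset (HeightOneSpectrum (𝓞 ℚ))) (hT : ∀ v, ((4 * d : ℤ) : 𝓞 ℚ) ∈ v.asIdeal → v ∈ T)
    (hnorm : ∀ a b y : ℚ, y ≠ 0 → a ^ 2 - d * b ^ 2 ≠ -y ^ 2) : sel K ≤ 2 ^ T.card := by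
  have := IsQuad.sel_le (d := (d : 𝓞 ℚ)) (θ := θ) (by simpa using h) T
    (fun v hv => hT v (by push_cast; exact hv)) (-1) neg_one_mem_virt (by simpa using hnorm)
  rw [sel_rat] at this
  omega

theorem exists_finset_four_mul {ℓ : ℕ} (hℓ : ℓ.Prime) (ε : ℤ) (hε : ε ∣ 2) :
    ∃ T : Finset (HeightOneSpectrum (𝓞 ℚ)),
      (∀ v, ((4 * (ε * ℓ) : ℤ) : 𝓞 ℚ) ∈ v.asIdeal → v ∈ T) ∧ T.card ≤ 2 := by
  classical
  obtain ⟨T₁, h1, c1⟩ := exists_finset_over (F := ℚ) Nat.prime_two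
  obtain ⟨T₂, h2, c2⟩ := exists_finset_over (F := ℚ) hℓ
  rw [Module.finrank_self] at c1 c2
  refine ⟨T₁ ∪ T₂, fun v hv => ?_, (Finset.card_union_le _ _).trans (by omega)⟩
  have hd : ((8 * ℓ : ℤ) : 𝓞 ℚ) ∈ v.asIdeal := by
    obtain ⟨e, he⟩ := hε
    have : ((8 * ℓ : ℤ) : 𝓞 ℚ) = (e : 𝓞 ℚ) * ((4 * (ε * ℓ) : ℤ) : 𝓞 ℚ) := by
      rw [← Int.cast_mul]; congr 1; linear_combination 4 * ℓ * he
    rw [this]; exact v.asIdeal.mul_mem_left _ hv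
  push_cast at hd
  have hp := v.isPrime
  rcases hp.mem_or_mem hd with h | h
  · refine Finset.mem_union_left _ (h1 v (hp.mem_of_pow_mem 3 ?_))
    convert h using 1; norm_num
  · exact Finset.mem_union_right _ (h2 v h)

theorem card_twoTors_of_sel_le {r c : ℕ} (hr : Units.rank F = r) (h : sel F ≤ 2 ^ (r + 1) * c) :
    Nat.card (twoTors (ClassGroup (𝓞 F))) ≤ c := by
  rw [sel_eq, hr] at h
  exact Nat.le_of_mul_le_mul_left h (by positivity)

end Selmer

/-- Residue symbols attached to the primes `p ≡ 3`, `q ≡ 7` modulo `8` with `(p/q) = -1`. -/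
structure Residues (p q : ℕ) [Fact p.Prime] [Fact q.Prime] : Prop where
  p_mod : p % 8 = 3
  q_mod : q % 8 = 7
  ne : p ≠ q
  p_two : legendreSym p 2 = -1
  p_neg_one : legendreSym p (-1) = -1
  p_neg_two : legendreSym p (-2) = 1
  p_q : legendreSym p q = 1
  q_p : legendreSym q p = -1
  q_neg_one : legendreSym q (-1) = -1
  q_two : legendreSym q 2 = 1
  q_neg_two : legendreSym q (-2) = -1
  q_neg_p : legendreSym q (-p) = 1

theorem Residues.of_cond2 {p q : ℕ} [Fact p.Prime] [Fact q.Prime] (h : Cond2 p q) :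
    Residues p q := by
  obtain ⟨hp, hq, hp4, hq4, h1, h2, h3⟩ := h
  rw [← jacobiSym.legendreSym.to_jacobiSym] at h1 h2 h3
  have p2 : p ≠ 2 := by rintro rfl; norm_num at hp4
  have q2 : q ≠ 2 := by rintro rfl; norm_num at hq4
  have h1' := h1
  have h2' := h2
  rw [legendreSym.at_two p2, ZMod.χ₈_nat_eq_if_mod_eight] at h1'
  rw [legendreSym.at_two q2, ZMod.χ₈_nat_eq_if_mod_eight] at h2'
  have p8 : p % 8 = 3 := by
    split_ifs at h1'; omega
  have q8 : q % 8 = 7 := by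
    split_ifs at h2' <;> omega
  have hp1 : legendreSym p (-1) = -1 := by
    rw [legendreSym.at_neg_one p2, ZMod.χ₄_nat_three_mod_four hp4]
  have hq1 : legendreSym q (-1) = -1 := by
    rw [legendreSym.at_neg_one q2, ZMod.χ₄_nat_three_mod_four hq4]
  have hrec := legendreSym.quadratic_reciprocity_three_mod_four hp4 hq4
  refine ⟨p8, q8, ?_, h1, hp1, ?_, ?_, h3, hq1, h2, ?_, ?_⟩
  · rintro rfl; omega
  · rw [show (-2 : ℤ) = -1 * 2 by norm_num, legendreSym.mul, hp1, h1]; norm_num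
  · rw [h3] at hrec; linarith
  · rw [show (-2 : ℤ) = -1 * 2 by norm_num, legendreSym.mul, hq1, h2]; norm_num
  · rw [show (-p : ℤ) = -1 * p by ring, legendreSym.mul, hq1, h3]; norm_num

theorem exists_padic_sqrt {ℓ : ℕ} [Fact ℓ.Prime] (h2 : ℓ ≠ 2) {c : ℤ}
    (hc : legendreSym ℓ c = 1) : ∃ w : ℚ_[ℓ], w ^ 2 = c := by
  have hc0 : (c : ZMod ℓ) ≠ 0 := by
    intro h0; rw [(legendreSym.eq_zero_iff ℓ c).mpr h0] at hc; norm_num at hc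
  obtain ⟨a, ha⟩ := (legendreSym.eq_one_iff ℓ hc0).mp hc
  obtain ⟨r, rfl⟩ := ZMod.intCast_surjective a
  have hr : (ℓ : ℤ) ∣ r ^ 2 - c := by
    rw [← ZMod.intCast_zmod_eq_zero_iff_dvd]; push_cast; rw [ha]; ring
  have h2r : ¬ (ℓ : ℤ) ∣ 2 * r := by
    intro hd
    have hpr := Nat.prime_iff_prime_int.mp (Fact.out : ℓ.Prime)
    rcases hpr.dvd_mul.mp hd with h | h
    · have := (Nat.prime_dvd_prime_iff_eq Fact.out Nat.prime_two).mp (by exact_mod_cast h)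
      exact h2 this
    · apply hc0
      rw [ha, (ZMod.intCast_zmod_eq_zero_iff_dvd r ℓ).mpr h, zero_mul]
  have hder : ‖((2 * r : ℤ) : ℤ_[ℓ])‖ = 1 :=
    le_antisymm (PadicInt.norm_le_one _)
      (not_lt.mp (mt (PadicInt.norm_int_lt_one_iff_dvd _).mp h2r))
  obtain ⟨z, hz, -⟩ := hensels_lemma (p := ℓ) (F := (Polynomial.X ^ 2 - Polynomial.C c : Polynomial ℤ))
    (a := (r : ℤ_[ℓ])) (by
      have h1 : Polynomial.aeval (r : ℤ_[ℓ]) (Polynomial.derivative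
          (Polynomial.X ^ 2 - Polynomial.C c : Polynomial ℤ)) = ((2 * r : ℤ) : ℤ_[ℓ]) := by
        simp [map_ofNat]
      rw [h1, hder]
      have h3 : Polynomial.aeval (r : ℤ_[ℓ]) (Polynomial.X ^ 2 - Polynomial.C c : Polynomial ℤ)
          = ((r ^ 2 - c : ℤ) : ℤ_[ℓ]) := by simp
      rw [h3, one_pow]
      exact (PadicInt.norm_int_lt_one_iff_dvd _).mpr hr)
  refine ⟨z, ?_⟩
  simp only [map_sub, map_pow, Polynomial.aeval_X, eq_intCast, map_intCast] at hz
  have := congrArg (fun t : ℤ_[ℓ] => (t : ℚ_[ℓ])) (sub_eq_zero.mp hz)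
  push_cast at this
  exact this

section Rat
variable {K : Type*} [Field K] [NumberField K]

theorem card_twoTors_neg_two {A : K} (h : IsQuad ℚ K (-2 : ℤ) A) :
    Nat.card (twoTors (ClassGroup (𝓞 K))) ≤ 1 := by
  have hr : Units.rank K = 0 := by
    have := rank_of_sq_neg (F := K) (x := A) (d := -2) (by norm_num) (by rw [h.sq]; simp)
    rw [h.finrank] at this; omega
  obtain ⟨T, hT, hc⟩ := exists_finset_over (F := ℚ) Nat.prime_two
  rw [Module.finrank_self] at hc
  refine card_twoTors_of_sel_le hr ((h.sel_le_rat T (fun v hv => ?_) ?_).trans ?_)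
  · refine hT v (v.isPrime.mem_of_pow_mem 3 ?_)
    rw [← neg_mem_iff]
    convert hv using 1; push_cast; norm_num
  · intro a b y hy hab
    push_cast at hab
    nlinarith [sq_nonneg a, sq_nonneg b, sq_pos_of_ne_zero hy]
  · rw [mul_one]; exact Nat.pow_le_pow_right two_pos hc

theorem card_twoTors_neg_two_mul {q : ℕ} [hq : Fact q.Prime] {D : K}
    (h : IsQuad ℚ K (-2 * q : ℤ) D) : Nat.card (twoTors (ClassGroup (𝓞 K))) ≤ 2 := by
  have hq0 : (0 : ℚ) < q := by exact_mod_cast hq.out.pos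
  have hr : Units.rank K = 0 := by
    have := rank_of_sq_neg (F := K) (x := D) (d := -2 * q) (by linarith) (by rw [h.sq]; simp)
    rw [h.finrank] at this; omega
  obtain ⟨T, hT, hc⟩ := exists_finset_four_mul hq.out (-2) (by norm_num)
  refine card_twoTors_of_sel_le hr ((IsQuad.sel_le_rat (d := -2 * q) (by exact_mod_cast h) T
    (fun v hv => hT v hv) ?_).trans ?_)
  · intro a b y hy hab
    push_cast at hab
    nlinarith [sq_nonneg a, mul_nonneg hq0.le (sq_nonneg b), sq_pos_of_ne_zero hy]
  · exact (Nat.pow_le_pow_right two_pos hc).trans (by norm_num)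

theorem card_twoTors_real {p q : ℕ} [Fact p.Prime] [hq : Fact q.Prime] (hpq : Residues p q) {B : K}
    (h : IsQuad ℚ K (q : ℤ) B) : Nat.card (twoTors (ClassGroup (𝓞 K))) ≤ 1 := by
  have hr : Units.rank K = 1 := by
    obtain ⟨ψ, -⟩ := h.exists_lift (algebraMap ℚ ℝ) (Real.sqrt q) (by
      rw [Real.sq_sqrt (Nat.cast_nonneg q)]; simp)
    exact rank_of_real ψ h.finrank
  obtain ⟨T, hT, hc⟩ := exists_finset_four_mul hq.out 1 (by norm_num)
  refine card_twoTors_of_sel_le hr ((h.sel_le_rat T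
    (fun v hv => hT v (by rw [one_mul]; exact hv)) ?_).trans ?_)
  · intro a b y hy hab
    have := eq_zero_of_nonresidue (ℓ := q) (c := -1) (e := -1) hpq.q_neg_one (by
      rw [dvd_neg]; exact_mod_cast hq.out.one_lt.ne' ∘ Nat.dvd_one.mp) (x := a) (y := b) (z := y) (by
        have := congrArg (fun t : ℚ => (t : ℚ_[q])) hab
        push_cast at this ⊢
        linear_combination -this)
    exact hy (by exact_mod_cast this)
  · exact (Nat.pow_le_pow_right two_pos hc).trans (by norm_num)

end Rat

section Tower
variable {p q : ℕ} [hp : Fact p.Prime] [hq : Fact q.Prime] (hpq : Residues p q)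
  {R F : Type*} [Field R] [Field F] [NumberField R] [NumberField F] [Algebra R F]
  {A : R} {C : F} (hA : IsQuad ℚ R (-2 : ℤ) A)
  (hC : IsQuad R F (-p : ℤ) C)

include hpq hC in
theorem exists_half_int : ∃ ω : 𝓞 F, (ω : F) = (1 + C) / 2 ∧ ∃ n : ℤ, 4 * n = p + 1 ∧ Odd n ∧
    ω ^ 2 = ω - n := by
  have h8 := hpq.p_mod
  obtain ⟨n, hn⟩ : ∃ n : ℤ, 4 * n = p + 1 := ⟨(p + 1) / 4, by omega⟩
  have hsq := hC.sq
  have hnF : (4 : F) * n = p + 1 := by exact_mod_cast congrArg (Int.cast : ℤ → F) hn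
  have heq : ((1 + C) / 2) ^ 2 = (1 + C) / 2 - n := by
    have : C ^ 2 = -p := by rw [hsq]; simp
    field_simp
    linear_combination this + hnF
  have hint : IsIntegral ℤ ((1 + C) / 2) := by
    refine ⟨Polynomial.X ^ 2 - Polynomial.X + Polynomial.C n, by monicity!, ?_⟩
    simp only [Polynomial.eval₂_add, Polynomial.eval₂_sub, Polynomial.eval₂_pow,
      Polynomial.eval₂_X, Polynomial.eval₂_C, heq]
    simp
  refine ⟨⟨_, hint⟩, rfl, n, hn, ?_, RingOfIntegers.ext ?_⟩
  · rw [Int.odd_iff]; omega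
  · exact heq

include hpq hA hC in
theorem sel_le_four : sel F ≤ 4 := by
  obtain ⟨ω, hω, n, hn, -, hωsq⟩ := exists_half_int hpq hC
  have hselR : sel R = 2 := by
    have hr : Units.rank R = 0 := by
      have := rank_of_sq_neg (F := R) (x := A) (d := -2) (by norm_num) (by rw [hA.sq]; simp)
      rw [hA.finrank] at this; omega
    have h1 := card_twoTors_neg_two hA
    have h2 : 0 < Nat.card (twoTors (ClassGroup (𝓞 R))) := Nat.card_pos
    rw [sel_eq, hr]; omega
  obtain ⟨T, hT, hc⟩ := exists_finset_over (F := R) hp.out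
  rw [hA.finrank] at hc
  have := sel_bound hC.finrank ω 1 n (by rw [hωsq]; simp) (fun f hf => hC.ne (2 * f - 1) (by
    rw [map_sub, map_mul, map_ofNat, map_one, hf]
    change 2 * (ω : F) - 1 = C
    rw [hω]; ring)) T (fun v hv => hT v (by
      rw [← neg_mem_iff]
      have : (4 : 𝓞 R) * n = p + 1 := by exact_mod_cast congrArg (Int.cast : ℤ → 𝓞 R) hn
      convert hv using 1; linear_combination this)) (-1) neg_one_mem_virt (by
    intro β y hy
    obtain ⟨a, b, rfl⟩ := hC.exists_coord β
    rw [hC.norm_eq]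
    intro hab
    have p2 : p ≠ 2 := by have := hpq.p_mod; rintro rfl; omega
    obtain ⟨w, hw⟩ := exists_padic_sqrt p2 hpq.p_neg_two
    obtain ⟨ψ, -, -⟩ := hA.exists_lift (algebraMap ℚ ℚ_[p]) w (by rw [hw]; simp)
    have := eq_zero_of_nonresidue (ℓ := p) (c := -1) (e := 1) hpq.p_neg_one (by
      exact_mod_cast hp.out.one_lt.ne' ∘ Nat.dvd_one.mp) (x := ψ a) (y := ψ b) (z := ψ y) (by
        have := congrArg ψ hab
        push_cast at this ⊢
        simp only [map_sub, map_mul, map_neg, map_natCast, map_pow, map_one] at this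
        linear_combination -this)
    exact hy ((map_eq_zero ψ).mp this))
  rw [hselR] at this
  have h2 : 2 ^ T.card ≤ 2 ^ 2 := Nat.pow_le_pow_right two_pos hc
  omega

end Tower

section IdealIdentities
variable {S : Type*} [CommRing S] {J : Ideal S} {p y s u v : S}

theorem sup_span_mul_sup_span (hpJ : p ∈ J) (hy : y ^ 2 - s ^ 2 ∈ J) (hb : u * p + v * (2 * s) = 1) :
    (J ⊔ Ideal.span {y - s}) * (J ⊔ Ideal.span {y + s}) = J := by
  apply le_antisymm
  · rw [Ideal.mul_sup, Ideal.sup_mul, Ideal.sup_mul]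
    refine sup_le (sup_le Ideal.mul_le_left Ideal.mul_le_right) (sup_le Ideal.mul_le_left ?_)
    rw [Ideal.span_singleton_mul_span_singleton, Ideal.span_singleton_le_iff_mem]
    convert hy using 1; ring
  · intro x hx
    have h1 : x = p * x * u + (x * (y + s) - (y - s) * x) * v := by
      linear_combination (-x) * hb
    have hL : J ≤ J ⊔ Ideal.span {y - s} := le_sup_left
    have hR : J ≤ J ⊔ Ideal.span {y + s} := le_sup_left
    have hm : y - s ∈ J ⊔ Ideal.span {y - s} :=
      (le_sup_right : Ideal.span {y - s} ≤ _) (Ideal.mem_span_singleton_self _)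
    have hp : y + s ∈ J ⊔ Ideal.span {y + s} :=
      (le_sup_right : Ideal.span {y + s} ≤ _) (Ideal.mem_span_singleton_self _)
    rw [h1]
    refine add_mem (Ideal.mul_mem_right _ _ (Ideal.mul_mem_mul (hL hpJ) (hR hx)))
      (Ideal.mul_mem_right _ _ (sub_mem (Ideal.mul_mem_mul (hL hx) hp)
        (Ideal.mul_mem_mul hm (hR hx))))

theorem sup_span_le_sq_sup (hJ : J ≤ J ^ 2 ⊔ Ideal.span {p})
    (hy : y ^ 2 - s ^ 2 ∈ Ideal.span {p}) (hb : u * p + v * (2 * s) = 1) :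
    J ⊔ Ideal.span {y - s} ≤ (J ⊔ Ideal.span {y - s}) ^ 2 ⊔ Ideal.span {p} := by
  refine sup_le (hJ.trans (sup_le_sup_right (Ideal.pow_right_mono le_sup_left 2) _)) ?_
  rw [Ideal.span_singleton_le_iff_mem]
  have h1 : y - s = (u * (y - s)) * p + v * (y ^ 2 - s ^ 2) + (-v) * (y - s) ^ 2 := by
    linear_combination (-(y - s)) * hb
  have hm : y - s ∈ J ⊔ Ideal.span {y - s} :=
    (le_sup_right : Ideal.span {y - s} ≤ _) (Ideal.mem_span_singleton_self _)
  generalize J ⊔ Ideal.span {y - s} = I at hm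
  rw [h1]
  refine add_mem (add_mem ?_ ?_) ?_
  · exact (le_sup_right : Ideal.span {p} ≤ _)
      (Ideal.mul_mem_left _ _ (Ideal.mem_span_singleton_self _))
  · exact (le_sup_right : Ideal.span {p} ≤ _) (Ideal.mul_mem_left _ _ hy)
  · exact (le_sup_left : _ ≤ _ ⊔ Ideal.span {p})
      (Ideal.mul_mem_left _ _ (Ideal.pow_mem_pow hm 2))

theorem sup_span_sq {c : S} (hc : c ^ 2 = -p) (hpJ : p ∈ J) (hJ : J ≤ J ^ 2 ⊔ Ideal.span {p}) :
    (J ⊔ Ideal.span {c}) ^ 2 = J := by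
  have hm : c ∈ J ⊔ Ideal.span {c} :=
    (le_sup_right : Ideal.span {c} ≤ _) (Ideal.mem_span_singleton_self _)
  apply le_antisymm
  · rw [pow_two, Ideal.mul_sup, Ideal.sup_mul, Ideal.sup_mul]
    refine sup_le (sup_le Ideal.mul_le_left Ideal.mul_le_right) (sup_le Ideal.mul_le_left ?_)
    rw [Ideal.span_singleton_mul_span_singleton, Ideal.span_singleton_le_iff_mem, ← pow_two, hc]
    exact neg_mem hpJ
  · refine hJ.trans (sup_le (Ideal.pow_right_mono le_sup_left 2) ?_)
    rw [Ideal.span_singleton_le_iff_mem, ← neg_mem_iff, ← hc]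
    exact Ideal.pow_mem_pow hm 2

/-- `(p, x - r, y - t) * (p, x + r, y + t) = (p, x * y - r * t)`. -/
theorem span_triple_mul {x r t : S} (hx : x ^ 2 - r ^ 2 ∈ Ideal.span {p})
    (hy : y ^ 2 - t ^ 2 ∈ Ideal.span {p}) (hb : u * p + v * (2 * r) = 1) :
    (Ideal.span {p} ⊔ Ideal.span {x - r} ⊔ Ideal.span {y - t}) *
      (Ideal.span {p} ⊔ Ideal.span {x + r} ⊔ Ideal.span {y + t}) =
    Ideal.span {p} ⊔ Ideal.span {x * y - r * t} := by
  obtain ⟨c, hc⟩ := Ideal.mem_span_singleton.mp hx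
  obtain ⟨d, hd⟩ := Ideal.mem_span_singleton.mp hy
  have key : t * x - r * y = (u * (t * x - r * y) + 2 * v * c * y) * p
      + (-2 * v * x) * (x * y - r * t) := by
    linear_combination (-(t * x - r * y)) * hb + 2 * v * y * hc
  apply le_antisymm
  · simp only [Ideal.mul_sup, Ideal.sup_mul, Ideal.span_singleton_mul_span_singleton, sup_le_iff,
      Ideal.span_singleton_le_iff_mem]
    simp only [← Ideal.span_insert, Ideal.mem_span_pair]
    refine ⟨⟨⟨⟨⟨p, 0, by ring⟩, ⟨x - r, 0, by ring⟩⟩, ⟨y - t, 0, by ring⟩⟩,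
      ⟨⟨x + r, 0, by ring⟩, ⟨c, 0, by linear_combination -hc⟩⟩,
      ⟨-(u * (t * x - r * y) + 2 * v * c * y), 1 + 2 * v * x, by linear_combination key⟩⟩,
      ⟨⟨y + t, 0, by ring⟩,
      ⟨u * (t * x - r * y) + 2 * v * c * y, 1 + (-2 * v * x), by linear_combination -key⟩⟩,
      ⟨d, 0, by linear_combination -hd⟩⟩
  · set I₁ := Ideal.span {p} ⊔ Ideal.span {x - r} ⊔ Ideal.span {y - t} with hI₁
    set I₂ := Ideal.span {p} ⊔ Ideal.span {x + r} ⊔ Ideal.span {y + t} with hI₂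
    have p1 : p ∈ I₁ := (le_sup_left.trans le_sup_left : Ideal.span {p} ≤ I₁)
      (Ideal.mem_span_singleton_self _)
    have x1 : x - r ∈ I₁ := (le_sup_right.trans le_sup_left : Ideal.span {x - r} ≤ I₁)
      (Ideal.mem_span_singleton_self _)
    have y1 : y - t ∈ I₁ := (le_sup_right : Ideal.span {y - t} ≤ I₁)
      (Ideal.mem_span_singleton_self _)
    have p2 : p ∈ I₂ := (le_sup_left.trans le_sup_left : Ideal.span {p} ≤ I₂)
      (Ideal.mem_span_singleton_self _)
    have x2 : x + r ∈ I₂ := (le_sup_right.trans le_sup_left : Ideal.span {x + r} ≤ I₂)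
      (Ideal.mem_span_singleton_self _)
    have y2 : y + t ∈ I₂ := (le_sup_right : Ideal.span {y + t} ≤ I₂)
      (Ideal.mem_span_singleton_self _)
    have hp : p ∈ I₁ * I₂ := by
      have h1 : p = u * (p * p) + v * (p * (x + r) - (x - r) * p) := by
        linear_combination (-p) * hb
      rw [h1]
      exact add_mem (Ideal.mul_mem_left _ _ (Ideal.mul_mem_mul p1 p2)) (Ideal.mul_mem_left _ _
        (sub_mem (Ideal.mul_mem_mul p1 x2) (Ideal.mul_mem_mul x1 p2)))
    refine sup_le ((Ideal.span_singleton_le_iff_mem _).mpr hp) ?_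
    rw [Ideal.span_singleton_le_iff_mem]
    have h1 : x * y - r * t = u * (x * y - r * t) * p
        + v * r * ((x - r) * (y + t) + (y - t) * (x + r)) := by
      linear_combination (-(x * y - r * t)) * hb
    rw [h1]
    exact add_mem (Ideal.mul_mem_left _ _ hp) (Ideal.mul_mem_left _ _
      (add_mem (Ideal.mul_mem_mul x1 y2) (Ideal.mul_mem_mul y1 x2)))

end IdealIdentities

section Quadratic
variable {K : Type*} [Field K]

/-- The ring of integers reduces modulo `ℓ` through any embedding into `ℚ_[ℓ]`. -/
theorem exists_zmod_hom {ℓ : ℕ} [Fact ℓ.Prime] (ψ : K →+* ℚ_[ℓ]) :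
    ∃ φ : 𝓞 K →+* ZMod ℓ, ∀ (x : 𝓞 K) (w : ℤ_[ℓ]), ψ x = w → φ x = PadicInt.toZMod w := by
  have hint : ∀ x : 𝓞 K, ‖ψ x‖ ≤ 1 := by
    intro x
    have h1 : IsIntegral ℤ_[ℓ] (ψ x) :=
      ((RingOfIntegers.isIntegral_coe x).map ψ.toIntAlgHom).tower_top
    obtain ⟨y, hy⟩ := IsIntegrallyClosed.isIntegral_iff.mp h1
    rw [← hy]; exact y.2
  let f : 𝓞 K →+* ℤ_[ℓ] := (ψ.comp (algebraMap (𝓞 K) K)).codRestrict (PadicInt.subring ℓ) hint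
  refine ⟨PadicInt.toZMod.comp f, fun x w hw => ?_⟩
  rw [RingHom.comp_apply]
  congr 1
  exact PadicInt.ext hw

theorem absNorm_quadratic_prime [NumberField K] {ℓ : ℕ} [hℓ : Fact ℓ.Prime] (h2 : ℓ ≠ 2)
    {d s : ℤ} {θ : K} (h : IsQuad ℚ K d θ) {θ' : 𝓞 K} (hθ : (θ' : K) = θ) (hd : legendreSym ℓ d = 1)
    (hs : (ℓ : ℤ) ∣ s ^ 2 - d) :
    Ideal.absNorm (Ideal.span {(ℓ : 𝓞 K)} ⊔ Ideal.span {θ' - s}) = ℓ := by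
  have hd0 : (d : ZMod ℓ) ≠ 0 := by
    intro h0; rw [(legendreSym.eq_zero_iff ℓ d).mpr h0] at hd; norm_num at hd
  have hsd : (s : ZMod ℓ) ^ 2 = d := by
    rw [← sub_eq_zero]; exact_mod_cast (ZMod.intCast_zmod_eq_zero_iff_dvd _ ℓ).mpr hs
  have hco : IsCoprime (ℓ : ℤ) (2 * s) := by
    have hpr := Nat.prime_iff_prime_int.mp hℓ.out
    refine (Prime.coprime_iff_not_dvd hpr).mpr fun hdvd => ?_
    rcases hpr.dvd_mul.mp hdvd with h' | h'
    · exact h2 ((Nat.prime_dvd_prime_iff_eq hℓ.out Nat.prime_two).mp (by exact_mod_cast h'))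
    · rw [(ZMod.intCast_zmod_eq_zero_iff_dvd s ℓ).mpr h'] at hsd
      exact hd0 (by rw [← hsd]; ring)
  obtain ⟨u, v, huv⟩ := hco
  have hsq : θ' ^ 2 = d := by
    apply RingOfIntegers.ext
    change (θ' : K) ^ 2 = _
    rw [hθ, h.sq]; simp
  have hprod := sup_span_mul_sup_span (J := Ideal.span {(ℓ : 𝓞 K)}) (p := (ℓ : 𝓞 K)) (y := θ')
    (s := (s : 𝓞 K)) (u := (u : 𝓞 K)) (v := (v : 𝓞 K)) (Ideal.mem_span_singleton_self _) (by
      obtain ⟨c, hc⟩ := hs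
      rw [hsq, Ideal.mem_span_singleton]
      have : ((s ^ 2 - d : ℤ) : 𝓞 K) = ((ℓ * c : ℤ) : 𝓞 K) := by rw [hc]
      push_cast at this
      exact ⟨-c, by linear_combination -this⟩) (by exact_mod_cast congrArg (Int.cast : ℤ → 𝓞 K) huv)
  obtain ⟨w, hw⟩ := exists_padic_sqrt h2 hd
  have hw1 : ‖w‖ ≤ 1 := by
    have := Padic.norm_int_le_one (p := ℓ) d
    rw [← hw, norm_pow] at this
    exact (pow_le_one_iff_of_nonneg (norm_nonneg _) two_ne_zero).mp this
  let W : ℤ_[ℓ] := ⟨w, hw1⟩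
  have hWsq : PadicInt.toZMod W ^ 2 = (s : ZMod ℓ) ^ 2 := by
    rw [hsd, ← map_pow, ← map_intCast (PadicInt.toZMod (p := ℓ))]
    congr 1
    apply PadicInt.ext
    push_cast
    exact hw
  have hW : ∃ V : ℤ_[ℓ], (V : ℚ_[ℓ]) ^ 2 = d ∧ PadicInt.toZMod V = s := by
    rcases sq_eq_sq_iff_eq_or_eq_neg.mp hWsq with h' | h'
    · exact ⟨W, hw, h'⟩
    · exact ⟨-W, by push_cast; rw [neg_sq]; exact hw, by rw [map_neg, h', neg_neg]⟩
  obtain ⟨V, hV, hVs⟩ := hW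
  have hne : ∀ V' : ℤ_[ℓ], (V' : ℚ_[ℓ]) ^ 2 = d → ∀ x : 𝓞 K, ∀ e : ℤ, x = θ' - e →
      PadicInt.toZMod V' = e → Ideal.span {(ℓ : 𝓞 K)} ⊔ Ideal.span {x} ≠ ⊤ := by
    intro V' hV' x e hx he htop
    obtain ⟨ψ, -, hψ⟩ := h.exists_lift (algebraMap ℚ ℚ_[ℓ]) V' (by rw [hV']; simp)
    obtain ⟨φ, hφ⟩ := exists_zmod_hom ψ
    have hk : Ideal.span {(ℓ : 𝓞 K)} ⊔ Ideal.span {x} ≤ RingHom.ker φ := by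
      refine sup_le ?_ ?_ <;> rw [Ideal.span_singleton_le_iff_mem, RingHom.mem_ker]
      · simp
      · rw [hx, map_sub, map_intCast, hφ θ' V' (by rw [hθ, hψ]), he, sub_self]
    rw [htop, top_le_iff, Ideal.eq_top_iff_one, RingHom.mem_ker, map_one] at hk
    exact one_ne_zero hk
  have n1 := hne V hV (θ' - s) s rfl hVs
  have n2 := hne (-V) (by push_cast; rw [neg_sq, hV]) (θ' + s) (-s) (by push_cast; ring)
    (by rw [map_neg, hVs]; push_cast; rfl)
  have hN := congrArg Ideal.absNorm hprod
  rw [map_mul, absNorm_span_nat, h.finrank] at hN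
  exact ((Nat.Prime.mul_eq_prime_sq_iff hℓ.out (mt Ideal.absNorm_eq_one_iff.mp n1)
    (mt Ideal.absNorm_eq_one_iff.mp n2)).mp hN).1

end Quadratic

section PrimeIdeals
variable {K : Type*} [Field K] [NumberField K]

theorem exists_pow_eq_span {I : Ideal (𝓞 K)} (hI : I ≠ ⊥) {n : ℕ}
    (hn : Nat.card (ClassGroup (𝓞 K)) ∣ n) : ∃ x, I ^ n = Ideal.span {x} := by
  have h1 : (ClassGroup.mk0 ⟨I, mem_nonZeroDivisors_of_ne_zero hI⟩) ^ n = 1 := by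
    obtain ⟨c, rfl⟩ := hn
    rw [pow_mul, pow_card_eq_one', one_pow]
  rw [← map_pow] at h1
  have h2 := (ClassGroup.mk0_eq_one_iff (I := I ^ n)
    (mem_nonZeroDivisors_of_ne_zero (pow_ne_zero n hI))).mp h1
  obtain ⟨x, hx⟩ := h2
  exact ⟨x, hx⟩

theorem absNorm_span_eq_abs_norm (x : 𝓞 K) :
    (Ideal.absNorm (Ideal.span {x}) : ℚ) = |Algebra.norm ℚ (x : K)| := by
  rw [Ideal.absNorm_span_singleton, Nat.cast_natAbs, Int.cast_abs, Algebra.coe_norm_int]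

theorem exists_dvd_sq_sub {ℓ : ℕ} [Fact ℓ.Prime] {d : ℤ} (hd : legendreSym ℓ d = 1) :
    ∃ s : ℤ, (ℓ : ℤ) ∣ s ^ 2 - d := by
  have hd0 : (d : ZMod ℓ) ≠ 0 := by
    intro h0; rw [(legendreSym.eq_zero_iff ℓ d).mpr h0] at hd; norm_num at hd
  obtain ⟨x, hx⟩ := (legendreSym.eq_one_iff ℓ hd0).mp hd
  obtain ⟨s, rfl⟩ := ZMod.intCast_surjective x
  refine ⟨s, (ZMod.intCast_zmod_eq_zero_iff_dvd _ ℓ).mp ?_⟩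
  push_cast
  rw [hx]; ring

theorem exists_bezout_two_mul {ℓ : ℕ} [hℓ : Fact ℓ.Prime] (h2 : ℓ ≠ 2) {d s : ℤ}
    (hd : legendreSym ℓ d = 1) (hs : (ℓ : ℤ) ∣ s ^ 2 - d) : ∃ u v : ℤ, u * ℓ + v * (2 * s) = 1 := by
  have hpr := Nat.prime_iff_prime_int.mp hℓ.out
  refine (Prime.coprime_iff_not_dvd hpr).mpr fun hdvd => ?_
  rcases hpr.dvd_mul.mp hdvd with h' | h'
  · exact h2 ((Nat.prime_dvd_prime_iff_eq hℓ.out Nat.prime_two).mp (by exact_mod_cast h'))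
  · have : (ℓ : ℤ) ∣ d := by
      have := dvd_sub (h'.mul_left s) hs
      have e : s * s - (s ^ 2 - d) = d := by ring
      rwa [e] at this
    rw [(legendreSym.eq_zero_iff ℓ d).mpr ((ZMod.intCast_zmod_eq_zero_iff_dvd _ ℓ).mpr this)] at hd
    norm_num at hd

theorem sq_sub_sq_mem_span {S : Type*} [CommRing S] {ℓ : ℕ} {d s : ℤ} (hs : (ℓ : ℤ) ∣ s ^ 2 - d)
    {θ : S} (hθ : θ ^ 2 = d) : θ ^ 2 - (s : S) ^ 2 ∈ Ideal.span {(ℓ : S)} := by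
  obtain ⟨c, hc⟩ := hs
  rw [hθ, Ideal.mem_span_singleton]
  have : ((s ^ 2 - d : ℤ) : S) = ((ℓ * c : ℤ) : S) := by rw [hc]
  push_cast at this
  exact ⟨-c, by linear_combination -this⟩

omit [NumberField K] in
theorem IsQuad.exists_int {F : Type*} [Field F] [Algebra F K] {d : ℤ} {θ : K}
    (h : IsQuad F K d θ) : ∃ θ' : 𝓞 K, (θ' : K) = θ ∧ θ' ^ 2 = d := by
  have hint : IsIntegral ℤ θ := by
    refine IsIntegral.of_pow two_pos ?_
    rw [h.sq, map_intCast]; exact isIntegral_algebraMap (R := ℤ) (x := d)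
  refine ⟨⟨θ, hint⟩, rfl, RingOfIntegers.ext ?_⟩
  change θ ^ 2 = _
  rw [h.sq]; simp

end PrimeIdeals

section Tower
variable {p q : ℕ} [hp : Fact p.Prime] [hq : Fact q.Prime] (hpq : Residues p q)
  {R F : Type*} [Field R] [Field F] [NumberField R] [NumberField F] [Algebra R F]
  {A : R} {C : F} (hA : IsQuad ℚ R (-2 : ℤ) A)
  (hC : IsQuad R F (-p : ℤ) C)

include hpq in
theorem Residues.p_ne_two : p ≠ 2 := by
  have := hpq.p_mod; rintro rfl; omega

omit hp hq hpq in
include hA in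
theorem card_classGroup_neg_two_odd : Odd (Nat.card (ClassGroup (𝓞 R))) :=
  odd_card_of_twoTors (card_twoTors_neg_two hA)

include hpq hA hC in
/-- A virtual unit of `ℚ(√-2, √-p)` coming from an odd power of a prime of `ℚ(√-2)` above `p`. -/
theorem exists_mem_virt : ∃ (u : Fˣ) (a b : ℚ) (h : ℕ), u ∈ virt F ∧ Odd h ∧
    (u : F) = algebraMap R F (algebraMap ℚ R a + algebraMap ℚ R b * A) ∧
    a ^ 2 + 2 * b ^ 2 = (p : ℚ) ^ h := by
  have p2 := hpq.p_ne_two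
  obtain ⟨r, hr⟩ := exists_dvd_sq_sub hpq.p_neg_two
  obtain ⟨s, t, hst⟩ := exists_bezout_two_mul p2 hpq.p_neg_two hr
  obtain ⟨A', hA', hAsq⟩ := hA.exists_int
  have hC' : IsQuad R F ((-p : ℤ) : R) C := hC
  obtain ⟨C', hC', hCsq⟩ := hC'.exists_int
  set I : Ideal (𝓞 R) := Ideal.span {(p : 𝓞 R)} ⊔ Ideal.span {A' - r} with hI
  have hN : Ideal.absNorm I = p := absNorm_quadratic_prime p2 hA hA' hpq.p_neg_two hr
  have hI0 : I ≠ ⊥ := fun h0 => by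
    rw [h0, Ideal.absNorm_bot] at hN; exact hp.out.ne_zero hN.symm
  obtain ⟨x, hx⟩ := exists_pow_eq_span hI0 dvd_rfl
  have hodd := card_classGroup_neg_two_odd hA
  set h := Nat.card (ClassGroup (𝓞 R)) with hh
  have hJ1 : I ≤ I ^ 2 ⊔ Ideal.span {(p : 𝓞 R)} := by
    refine sup_span_le_sq_sup le_sup_right (sq_sub_sq_mem_span hr hAsq) (u := (s : 𝓞 R))
      (v := (t : 𝓞 R)) ?_
    exact_mod_cast congrArg (Int.cast : ℤ → 𝓞 R) hst
  obtain ⟨J, hJ⟩ : ∃ J, J = I.map (algebraMap (𝓞 R) (𝓞 F)) := ⟨_, rfl⟩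
  have hJ2 : J ≤ J ^ 2 ⊔ Ideal.span {(p : 𝓞 F)} := by
    have := Ideal.map_mono (f := algebraMap (𝓞 R) (𝓞 F)) hJ1
    rwa [Ideal.map_sup _ (I ^ 2), Ideal.map_pow, Ideal.map_span, Set.image_singleton, map_natCast,
      ← hJ] at this
  have hpJ : (p : 𝓞 F) ∈ J := by
    rw [hJ, ← map_natCast (algebraMap (𝓞 R) (𝓞 F))]
    exact Ideal.mem_map_of_mem _ (Ideal.mem_sup_left (Ideal.mem_span_singleton_self _))
  have hsq := sup_span_sq (c := C') (p := (p : 𝓞 F)) (by rw [hCsq]; simp) hpJ hJ2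
  have hx0 : (algebraMap R F (x : R)) ≠ 0 := by
    rw [map_ne_zero]
    intro h0
    have : x = 0 := by exact_mod_cast h0
    rw [this, Ideal.span_singleton_zero] at hx
    exact pow_ne_zero _ hI0 hx
  obtain ⟨a, b, hab⟩ := hA.exists_coord (x : R)
  refine ⟨Units.mk0 _ hx0, a, b, h, mem_virt_of_sq (a := algebraMap (𝓞 R) (𝓞 F) x)
    (J := (J ⊔ Ideal.span {C'}) ^ h) (z := 1) ?_ ?_, hodd, ?_, ?_⟩
  · rw [← pow_mul, mul_comm, pow_mul, hsq, hJ, ← Ideal.map_pow, hx, Ideal.map_span,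
      Set.image_singleton]
  · simp; rfl
  · rw [hab]; rfl
  · have h1 := absNorm_span_eq_abs_norm x
    rw [← hx, map_pow, hN, ← hab, hA.norm_eq] at h1
    push_cast at h1
    rw [h1, abs_of_nonneg (by nlinarith [sq_nonneg a, sq_nonneg b])]
    ring

end Tower

section Tower
variable {p q : ℕ} [hp : Fact p.Prime] [hq : Fact q.Prime] (hpq : Residues p q)
  {R F K : Type*} [Field R] [Field F] [Field K] [NumberField R] [NumberField F] [NumberField K]
  [Algebra R F] [Algebra F K] {A : R} {B : K} {C : F} (hA : IsQuad ℚ R (-2 : ℤ) A)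
  (hC : IsQuad R F (-p : ℤ) C) (hB : IsQuad F K (q : ℤ) B)

include hpq in
theorem Residues.q_ne_two : q ≠ 2 := by
  have := hpq.q_mod; rintro rfl; omega

theorem not_dvd_one {ℓ : ℕ} [hℓ : Fact ℓ.Prime] : ¬ (ℓ : ℤ) ∣ 1 := by
  exact_mod_cast hℓ.out.one_lt.ne' ∘ Nat.dvd_one.mp

theorem not_dvd_neg_one {ℓ : ℕ} [hℓ : Fact ℓ.Prime] : ¬ (ℓ : ℤ) ∣ -1 := by
  rw [dvd_neg]; exact not_dvd_one

theorem legendreSym_pow_odd {ℓ : ℕ} [Fact ℓ.Prime] {c : ℤ} (hc : legendreSym ℓ c = -1) {n : ℕ}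
    (hn : Odd n) : legendreSym ℓ (c ^ n) = -1 := by
  have : legendreSym ℓ (c ^ n) = legendreSym ℓ c ^ n := map_pow (legendreSym.hom ℓ) c n
  rw [this, hc, hn.neg_one_pow]

omit [NumberField F] in
include hpq hA hC in
theorem not_norm {a b : ℚ} {h : ℕ} (hh : Odd h) (hab : a ^ 2 + 2 * b ^ 2 = (p : ℚ) ^ h) {u : F}
    (hu : u = algebraMap R F (algebraMap ℚ R a + algebraMap ℚ R b * A)) (s t y : F)
    (hy : y ≠ 0) : s ^ 2 - q * t ^ 2 ≠ u * y ^ 2 := by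
  intro heq
  obtain ⟨w, hw⟩ := exists_padic_sqrt hpq.q_ne_two hpq.q_neg_p
  have hω : (⟨0, 1⟩ : QuadraticAlgebra ℚ_[q] (-2) 0) ^ 2 = -2 := by
    rw [pow_two]; ext <;> simp <;> rfl
  obtain ⟨ψ₀, hψ, hψA⟩ := hA.exists_lift ((algebraMap ℚ_[q] (QuadraticAlgebra ℚ_[q] (-2) 0)).comp (algebraMap ℚ ℚ_[q]))
    ⟨0, 1⟩ (by rw [hω]; simp; rfl)
  obtain ⟨ψ, hψR, hψC⟩ := hC.exists_lift ψ₀ (algebraMap ℚ_[q] _ w) (by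
    rw [← map_pow, hw]; simp)
  have hψu : ψ u = ⟨(a : ℚ_[q]), (b : ℚ_[q])⟩ := by
    rw [hu, hψR, map_add, map_mul, hψA, hψ, hψ]
    ext <;> simp [QuadraticAlgebra.algebraMap_eq]
  have e := congrArg ψ heq
  simp only [map_sub, map_mul, map_pow, map_natCast, hψu] at e
  have e1 := congrArg QuadraticAlgebra.re e
  have e2 := congrArg QuadraticAlgebra.im e
  simp [pow_two] at e1 e2
  set s1 := (ψ s).re
  set s2 := (ψ s).im
  set t1 := (ψ t).re
  set t2 := (ψ t).im
  set y1 := (ψ y).re with hy1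
  set y2 := (ψ y).im with hy2
  have hab' : (a : ℚ_[q]) ^ 2 + 2 * (b : ℚ_[q]) ^ 2 = (p : ℚ_[q]) ^ h := by exact_mod_cast hab
  have key := eq_zero_of_nonresidue (ℓ := q) (c := (p : ℤ) ^ h) (e := -1)
    (legendreSym_pow_odd hpq.q_p hh) not_dvd_neg_one (x := s1 ^ 2 + 2 * s2 ^ 2 + q * (t1 ^ 2 + 2 * t2 ^ 2))
    (y := 2 * (s1 * t1 + 2 * s2 * t2)) (z := y1 ^ 2 + 2 * y2 ^ 2) (by
      push_cast
      rw [← hab']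
      linear_combination (-(s1 * s1 + -(2 * s2 * s2) - ↑q * (t1 * t1 + -(2 * t2 * t2)) +
        (↑a * (y1 * y1 + -(2 * y2 * y2)) + -(2 * ↑b * (y1 * y2 + y2 * y1))))) * e1
        - 2 * (s1 * s2 + s2 * s1 - ↑q * (t1 * t2 + t2 * t1) +
        (↑a * (y1 * y2 + y2 * y1) + ↑b * (y1 * y1 + -(2 * y2 * y2)))) * e2)
  have h2 := eq_zero_of_nonresidue (ℓ := q) (c := -2) (e := 1) hpq.q_neg_two not_dvd_one
    (x := y1) (y := 0) (z := y2) (by push_cast; linear_combination -key)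
  rw [h2] at key
  have h1 : y1 = 0 := by simpa using key
  refine hy ((map_eq_zero_iff ψ ψ.injective).mp ?_)
  ext
  · rw [← hy1, h1]; rfl
  · rw [← hy2, h2]; rfl

omit hp hq in
include hA hC in
theorem finrank_biquadratic : Module.finrank ℚ F = 4 := by
  rw [← Module.finrank_mul_finrank ℚ R F, hA.finrank, hC.finrank]

omit hp hq in
include hA in
theorem exists_sqrt_neg_two (F : Type*) [Field F] [NumberField F] [Algebra R F] :
    ∃ A' : 𝓞 F, A' ^ 2 = -2 := by
  obtain ⟨A', -, h⟩ := hA.exists_int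
  exact ⟨algebraMap (𝓞 R) (𝓞 F) A', by rw [← map_pow, h]; simp [map_ofNat]⟩

include hpq hC in
theorem three_le_absNorm (v : HeightOneSpectrum (𝓞 F)) (hv : (2 : 𝓞 F) ∈ v.asIdeal) :
    3 ≤ Ideal.absNorm v.asIdeal := by
  obtain ⟨f, hf, hN⟩ := absNorm_eq_pow Nat.prime_two v (by exact_mod_cast hv)
  rcases Nat.lt_or_ge f 2 with h | h
  · exfalso
    have hf1 : f = 1 := by omega
    rw [hf1, pow_one] at hN
    obtain ⟨ω, -, n, -, hn, hω⟩ := exists_half_int hpq hC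
    obtain ⟨k, hk⟩ := exists_int_sub_mem Nat.prime_two hN ω
    have : ((k ^ 2 - k + n : ℤ) : 𝓞 F) ∈ v.asIdeal := by
      have := v.asIdeal.mul_mem_left (1 - ω - k) hk
      convert this using 1
      push_cast; linear_combination hω
    rw [int_mem_iff Nat.prime_two v.isPrime.ne_top (by exact_mod_cast hv)] at this
    have h2 : Even (k ^ 2 - k) := by
      have := Int.even_mul_succ_self (k - 1)
      convert this using 1; ring
    have h3 : Odd (k ^ 2 - k + n) := h2.add_odd hn
    rw [← Int.not_even_iff_odd, even_iff_two_dvd] at h3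
    exact h3 (by exact_mod_cast this)
  · rw [hN]
    calc 3 ≤ 2 ^ 2 := by norm_num
      _ ≤ _ := Nat.pow_le_pow_right two_pos h

include hpq hA in
theorem sq_le_absNorm (v : HeightOneSpectrum (𝓞 F)) (hv : (q : 𝓞 F) ∈ v.asIdeal) :
    q ^ 2 ≤ Ideal.absNorm v.asIdeal := by
  obtain ⟨f, hf, hN⟩ := absNorm_eq_pow hq.out v hv
  rcases Nat.lt_or_ge f 2 with h | h
  · exfalso
    have hf1 : f = 1 := by omega
    rw [hf1, pow_one] at hN
    obtain ⟨A', hA'⟩ := exists_sqrt_neg_two hA F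
    obtain ⟨k, hk⟩ := exists_int_sub_mem hq.out hN A'
    have : ((k ^ 2 + 2 : ℤ) : 𝓞 F) ∈ v.asIdeal := by
      have := v.asIdeal.mul_mem_left (-A' - k) hk
      convert this using 1
      push_cast; linear_combination hA'
    rw [int_mem_iff hq.out v.isPrime.ne_top hv] at this
    have h1 := (legendreSym.eq_neg_one_iff q).mp hpq.q_neg_two
    refine h1 ⟨k, ?_⟩
    have h2 := (ZMod.intCast_zmod_eq_zero_iff_dvd _ q).mpr this
    push_cast at h2 ⊢
    linear_combination -h2
  · rw [hN]
    exact Nat.pow_le_pow_right hq.out.pos h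

include hpq hA hC in
theorem exists_finset_bad : ∃ T : Finset (HeightOneSpectrum (𝓞 F)),
    (∀ v, 4 * (q : 𝓞 F) ∈ v.asIdeal → v ∈ T) ∧ T.card ≤ 3 := by
  classical
  have h4 := finrank_biquadratic hA hC
  obtain ⟨A', hA'⟩ := exists_sqrt_neg_two hA F
  have hNA : Ideal.absNorm (Ideal.span {A'}) = 4 := by
    have h1 : Ideal.span {A'} ^ 2 = Ideal.span {((2 : ℕ) : 𝓞 F)} := by
      rw [Ideal.span_singleton_pow, hA', Ideal.span_singleton_neg]; simp
    have h2 := congrArg Ideal.absNorm h1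
    rw [map_pow, absNorm_span_nat, h4] at h2
    exact Nat.pow_left_injective two_ne_zero (h2.trans (by norm_num : 2 ^ 4 = 4 ^ 2))
  have hA0 : A' ≠ 0 := by rintro rfl; norm_num at hA'
  have h2A : ∀ v : HeightOneSpectrum (𝓞 F), Ideal.span {A'} ≤ v.asIdeal ↔ (2 : 𝓞 F) ∈ v.asIdeal := by
    intro v
    rw [Ideal.span_singleton_le_iff_mem, ← neg_mem_iff (x := (2 : 𝓞 F)), ← hA']
    exact ⟨fun h => v.asIdeal.pow_mem_of_mem h 2 two_pos, v.isPrime.mem_of_pow_mem 2⟩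
  obtain ⟨T₁, hT₁, hc₁⟩ := exists_finset_primes (I := Ideal.span {A'}) (c := 3)
    (by simpa using hA0) (fun v hv => three_le_absNorm hpq hC v ((h2A v).mp hv))
  obtain ⟨T₂, hT₂, hc₂⟩ := exists_finset_primes (I := Ideal.span {(q : 𝓞 F)}) (c := q ^ 2)
    (by simpa using hq.out.ne_zero) (fun v hv => sq_le_absNorm hpq hA v
      ((Ideal.span_singleton_le_iff_mem _).mp hv))
  refine ⟨T₁ ∪ T₂, fun v hv => ?_, (Finset.card_union_le _ _).trans ?_⟩
  · rw [Finset.mem_union]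
    rcases v.isPrime.mem_or_mem hv with h | h
    · refine Or.inl (hT₁ v ((h2A v).mpr (v.isPrime.mem_of_pow_mem 2 ?_)))
      convert h using 1; norm_num
    · exact Or.inr (hT₂ v ((Ideal.span_singleton_le_iff_mem _).mpr h))
  · rw [hNA] at hc₁
    rw [absNorm_span_nat, h4, ← pow_mul] at hc₂
    have c₂ := (Nat.pow_le_pow_iff_right hq.out.one_lt).mp hc₂
    have c₁ : T₁.card < 2 := by
      by_contra hcon
      have := Nat.pow_le_pow_right (n := 3) (by norm_num) (not_lt.mp hcon)
      omega
    omega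

include hpq hA hC hB in
theorem card_twoTors_triquadratic : Nat.card (twoTors (ClassGroup (𝓞 K))) ≤ 2 := by
  have h8 : Module.finrank ℚ K = 8 := by
    rw [← Module.finrank_mul_finrank ℚ F K, finrank_biquadratic hA hC, hB.finrank]
  have hr : Units.rank K = 3 := by
    have := rank_of_sq_neg (F := K) (x := algebraMap F K (algebraMap R F A)) (d := -2) (by norm_num)
      (by rw [← map_pow, ← map_pow, hA.sq]; simp [map_ofNat])
    omega
  obtain ⟨T, hT, hc⟩ := exists_finset_bad hpq hA hC
  obtain ⟨u, a, b, h, hu, hh, hua, hab⟩ := exists_mem_virt hpq hA hC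
  have := IsQuad.sel_le (d := (q : 𝓞 F)) (θ := B) (by simpa using hB) T hT u hu (fun s t y hy => by
    simpa using not_norm hpq hA hC hh hab hua s t y hy)
  refine card_twoTors_of_sel_le hr ?_
  have h4 := sel_le_four hpq hA hC
  have h5 : sel F ^ 2 ≤ 4 ^ 2 := Nat.pow_le_pow_left h4 2
  have h6 : 2 ^ T.card ≤ 2 ^ 3 := Nat.pow_le_pow_right two_pos hc
  have := this.trans (Nat.mul_le_mul h5 h6)
  omega

end Tower

section TwoGroups
variable {G : Type*} [CommGroup G] [Finite G] (h2 : Nat.card (twoTors G) ≤ 2) {g : G}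
  (hg : g ∉ sqs G)

include h2 hg in
theorem odd_index_zpowers : Odd (Subgroup.zpowers g).index := by
  have hidx : (sqs G).index = 2 := by
    have h1 := Subgroup.card_mul_index (sqs G)
    have h3 := Subgroup.index_ker (powMonoidHom 2 : G →* G)
    have h4 := Subgroup.card_mul_index (twoTors G)
    change (twoTors G).index = Nat.card (sqs G) at h3
    rw [h3, ← h1, mul_comm] at h4
    have h5 : 0 < Nat.card (sqs G) := Nat.card_pos
    have h6 : (sqs G).index ≤ 2 := by
      rw [← Nat.eq_of_mul_eq_mul_left h5 h4]; exact h2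
    have h7 : (sqs G).index ≠ 1 := fun h => hg (by
      rw [Subgroup.index_eq_one.mp h]; trivial)
    have h8 : (sqs G).index ≠ 0 := Subgroup.index_ne_zero_of_finite
    omega
  refine odd_card_of_twoTors ?_
  set π := QuotientGroup.mk' (Subgroup.zpowers g)
  have hπ : π g = 1 := (QuotientGroup.eq_one_iff g).mpr (Subgroup.mem_zpowers g)
  have hsurj : Function.Surjective (fun x : G ⧸ Subgroup.zpowers g => x ^ 2) := by
    intro x
    obtain ⟨x, rfl⟩ := QuotientGroup.mk'_surjective _ x
    have key : ∀ y ∈ sqs G, ∃ a : G ⧸ Subgroup.zpowers g, a ^ 2 = π y := by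
      rintro _ ⟨z, rfl⟩
      exact ⟨π z, by rw [← map_pow]; rfl⟩
    by_cases hx : x ∈ sqs G
    · exact key x hx
    · obtain ⟨a, ha⟩ := key (g * x)
        ((Subgroup.mul_mem_iff_of_index_two hidx).mpr (by simp [hg, hx]))
      exact ⟨a, by rw [map_mul, hπ, one_mul] at ha; exact ha⟩
  have hinj := Finite.injective_iff_surjective.mpr hsurj
  refine Finite.card_le_one_iff_subsingleton.mpr ⟨fun a b => Subtype.ext (hinj ?_)⟩
  exact (mem_twoTors.mp a.2).trans (mem_twoTors.mp b.2).symm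

include h2 hg in
theorem nonempty_sylow_mulEquiv {N H : ℕ} (hH : Odd H) (h1 : g ^ (2 ^ (N + 1) * H) = 1)
    (h0 : g ^ (2 ^ N * H) ≠ 1) (P : Sylow 2 G) :
    Nonempty (P ≃* Multiplicative (ZMod (2 ^ (N + 1)))) := by
  have hx : g ^ H ∉ sqs G := by
    obtain ⟨k, rfl⟩ := hH
    intro hm
    rw [pow_succ, pow_mul'] at hm
    exact hg ((Subgroup.mul_mem_cancel_left _ (mem_sqs.mpr ⟨g ^ k, by rw [← pow_mul, mul_comm]⟩)).mp hm)
  set x := g ^ H with hxdef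
  have hord : orderOf x = 2 ^ (N + 1) := orderOf_eq_prime_pow
    (by rw [hxdef, ← pow_mul, mul_comm]; exact h0) (by rw [hxdef, ← pow_mul, mul_comm]; exact h1)
  have hidx := odd_index_zpowers h2 hx
  have hcard : Nat.card P = 2 ^ (N + 1) := by
    rw [P.card_eq_multiplicity, ← Subgroup.card_mul_index (Subgroup.zpowers x), Nat.card_zpowers,
      hord, Nat.factorization_mul (by positivity) hidx.pos.ne', Finsupp.add_apply,
      Nat.factorization_eq_zero_of_not_dvd (n := (Subgroup.zpowers x).index)
        (by rwa [← even_iff_two_dvd, Nat.not_even_iff_odd])]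
    simp [Nat.prime_two.factorization_pow]
  obtain ⟨Q, hQ⟩ := (IsPGroup.of_card (p := 2) (G := Subgroup.zpowers x) (n := N + 1)
    (by rw [Nat.card_zpowers, hord])).exists_le_sylow
  have hPQ : Q = P := (Sylow.unique_of_normal P inferInstance).eq_default Q |>.trans
    ((Sylow.unique_of_normal P inferInstance).eq_default P).symm
  rw [hPQ] at hQ
  have heq : Subgroup.zpowers x = P := Subgroup.eq_of_le_of_card_ge hQ (by
    rw [hcard, Nat.card_zpowers, hord])
  have hcyc : IsCyclic P := by
    rw [← heq]; infer_instance
  refine ⟨?_⟩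
  rw [← hcard]
  exact (zmodCyclicMulEquiv hcyc).symm

include h2 hg in
theorem exists_pow_eq_of_order_two {t : G} (ht : t ≠ 1) (ht2 : t ^ 2 = 1) {m : ℕ}
    (hm : ∀ Q : Sylow 2 G, Nat.card Q = 2 ^ m) :
    ∃ M H₀, m = M + 1 ∧ Odd H₀ ∧ ∀ H, Odd H → H₀ ∣ H → g ^ (2 ^ M * H) = t := by
  have : Nonempty (Sylow 2 G) := inferInstance
  obtain ⟨Q⟩ := this
  have hfac : (Nat.card G).factorization 2 = m := by
    have := Q.card_eq_multiplicity
    rw [hm Q] at this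
    exact (Nat.pow_right_injective le_rfl this).symm
  have hcard : 2 ^ m * (Nat.card G / 2 ^ m) = Nat.card G := by
    rw [← hfac]; exact Nat.ordProj_mul_ordCompl_eq_self _ 2
  have hodd : Odd (Nat.card G / 2 ^ m) := by
    have := Nat.not_dvd_ordCompl Nat.prime_two (n := Nat.card G) Nat.card_pos.ne'
    rw [hfac] at this
    rwa [← Nat.not_even_iff_odd, even_iff_two_dvd]
  obtain ⟨M, rfl⟩ : ∃ M, m = M + 1 := by
    refine Nat.exists_eq_succ_of_ne_zero fun h0 => ?_
    have h3 := orderOf_dvd_natCard t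
    rw [orderOf_eq_prime ht2 ht, ← even_iff_two_dvd, ← Nat.not_odd_iff_even] at h3
    rw [h0, pow_zero, Nat.div_one] at hodd
    exact h3 hodd
  refine ⟨M, _, rfl, hodd, fun H hH hdvd => ?_⟩
  set y := g ^ (2 ^ M * H) with hy
  have hy2 : y ^ 2 = 1 := by
    obtain ⟨c, rfl⟩ := hdvd
    rw [hy, ← pow_mul]
    have : 2 ^ M * (Nat.card G / 2 ^ (M + 1) * c) * 2 = Nat.card G * c := by
      nth_rewrite 2 [← hcard]; ring
    rw [this, pow_mul, pow_card_eq_one', one_pow]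
  have hy1 : y ≠ 1 := fun h1 => by
    have h3 := orderOf_dvd_of_pow_eq_one h1
    have h4 := Subgroup.card_mul_index (Subgroup.zpowers g)
    rw [Nat.card_zpowers] at h4
    have h5 : 2 ^ (M + 1) ∣ orderOf g := by
      refine Nat.Coprime.dvd_of_dvd_mul_right (n := (Subgroup.zpowers g).index) ?_ ?_
      · exact Nat.Coprime.pow_left _ ((Nat.coprime_two_left).mpr (odd_index_zpowers h2 hg))
      · rw [h4, ← hcard]; exact dvd_mul_right _ _
    have h6 := h5.trans h3
    rw [pow_succ, Nat.mul_dvd_mul_iff_left (by positivity), ← even_iff_two_dvd,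
      ← Nat.not_odd_iff_even] at h6
    exact h6 hH
  by_contra hne
  have : ({1, t, y} : Set G).ncard ≤ 2 := by
    refine le_trans (Set.ncard_le_ncard (t := (twoTors G : Set G)) ?_ (Set.toFinite _)) ?_
    · rintro z (rfl | rfl | rfl)
      · exact one_mem _
      · exact ht2
      · exact hy2
    · exact h2
  rw [Set.ncard_eq_three.mpr ⟨1, t, y, ht.symm, hy1.symm, fun h => hne h.symm, rfl⟩] at this
  omega

end TwoGroups

section Conjugation
variable {F K : Type*} [Field F] [Field K] [Algebra F K] {d : F} {θ : K}

theorem IsQuad.exists_conj (h : IsQuad F K d θ) : ∃ c : K →+* K,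
    (∀ a, c (algebraMap F K a) = algebraMap F K a) ∧ c θ = -θ ∧
      ∀ x, x * c x = algebraMap F K (Algebra.norm F x) := by
  obtain ⟨c, hc, hθ⟩ := h.exists_lift (algebraMap F K) (-θ) (by rw [neg_sq, h.sq])
  refine ⟨c, hc, hθ, fun x => ?_⟩
  obtain ⟨a, b, rfl⟩ := h.exists_coord x
  rw [h.norm_eq, map_add, map_mul, hc, hc, hθ]
  simp only [map_sub, map_mul, map_pow]
  linear_combination (-(algebraMap F K b) ^ 2) * h.sq

end Conjugation

section Rational
variable {ℓ : ℕ} [Fact ℓ.Prime]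

theorem eq_zero_of_nonresidue_rat {c e : ℤ} (hc : legendreSym ℓ c = -1) (he : ¬ (ℓ : ℤ) ∣ e)
    {x y z : ℚ} (h : c * z ^ 2 = x ^ 2 + ℓ * e * y ^ 2) : z = 0 := by
  have := eq_zero_of_nonresidue hc he (x := (x : ℚ_[ℓ])) (y := y) (z := z) (by exact_mod_cast h)
  exact_mod_cast this

theorem not_isSquare_of_nonresidue {c : ℤ} (hc : legendreSym ℓ c = -1) : ¬ IsSquare (c : ℚ) := by
  rintro ⟨x, hx⟩
  exact one_ne_zero (eq_zero_of_nonresidue_rat hc not_dvd_one (x := x) (y := 0) (z := 1)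
    (by rw [hx]; ring))

theorem not_isSquare_of_neg {c : ℚ} (hc : c < 0) : ¬ IsSquare c := fun h => hc.not_ge h.nonneg

end Rational

section Units
variable {K : Type*} [Field K] [NumberField K]

theorem exists_unit_sq_or_neg {d : ℤ} {θ : K} (h : IsQuad ℚ K d θ) (hd : d < 0)
    (hd' : ¬ IsSquare (-d : ℚ)) (u : (𝓞 K)ˣ) : ∃ z : (𝓞 K)ˣ, u = z ^ 2 ∨ u = -z ^ 2 := by
  have hr : Units.rank K = 0 := by
    have := rank_of_sq_neg (F := K) (x := θ) (d := d) (by exact_mod_cast hd) (by rw [h.sq]; simp)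
    rw [h.finrank] at this; omega
  have hi : (sqs (𝓞 K)ˣ).index = 2 := by rw [index_sqs_units, hr, zero_add, pow_one]
  have hneg : (-1 : (𝓞 K)ˣ) ∉ sqs (𝓞 K)ˣ := by
    rw [mem_sqs]
    rintro ⟨y, hy⟩
    have hy' : ((y : 𝓞 K) : K) ^ 2 = algebraMap ℚ K (-1) := by
      have := congrArg (fun v : (𝓞 K)ˣ => ((v : 𝓞 K) : K)) hy
      simpa using this
    rcases h.isSquare_or hy' with h' | h'
    · exact not_isSquare_of_neg (by norm_num) h'
    · exact hd' (by simpa using h')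
  by_cases hu : u ∈ sqs (𝓞 K)ˣ
  · obtain ⟨z, hz⟩ := mem_sqs.mp hu
    exact ⟨z, Or.inl hz.symm⟩
  · have := (Subgroup.mul_mem_iff_of_index_two hi (a := -1) (b := u)).mpr (iff_of_false hneg hu)
    obtain ⟨z, hz⟩ := mem_sqs.mp this
    exact ⟨z, Or.inr (by rw [hz]; simp)⟩

theorem exists_eq_sq_mul_of_span_eq {d : ℤ} {θ : K} (h : IsQuad ℚ K d θ) (hd : d < 0)
    (hd' : ¬ IsSquare (-d : ℚ)) {x y : 𝓞 K} (hxy : Ideal.span {x} = Ideal.span {y}) :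
    ∃ (z : (𝓞 K)ˣ) (v : ℤ), (v = 1 ∨ v = -1) ∧ x = v * z ^ 2 * y := by
  obtain ⟨u, rfl⟩ := Ideal.span_singleton_eq_span_singleton.mp hxy
  obtain ⟨z, hz | hz⟩ := exists_unit_sq_or_neg h hd hd' u⁻¹
  · refine ⟨z, 1, Or.inl rfl, ?_⟩
    rw [← Units.val_pow_eq_pow_val, ← hz, Int.cast_one, one_mul, mul_comm x, Units.inv_mul_cancel_left]
  · refine ⟨z, -1, Or.inr rfl, ?_⟩
    have : -z ^ 2 = u⁻¹ := hz.symm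
    rw [← Units.val_pow_eq_pow_val, Int.cast_neg, Int.cast_one, neg_one_mul, ← Units.val_neg, this,
      mul_comm x, Units.inv_mul_cancel_left]

end Units

section Imaginary
variable {p q : ℕ} [hp : Fact p.Prime] [hq : Fact q.Prime] (hpq : Residues p q)
  {k : Type*} [Field k] [NumberField k] {D : k} (hD : IsQuad ℚ k (-2 * q : ℤ) D)

include hpq in
theorem not_isSquare_two : ¬ IsSquare (2 : ℚ) := by
  have := not_isSquare_of_nonresidue hpq.p_two
  exact_mod_cast this

include hpq in
theorem not_isSquare_two_mul : ¬ IsSquare (2 * q : ℚ) := by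
  have h1 : legendreSym p (2 * q) = -1 := by
    rw [legendreSym.mul, hpq.p_two, hpq.p_q]; rfl
  exact_mod_cast not_isSquare_of_nonresidue h1

omit hp in
theorem not_isSquare_prime : ¬ IsSquare (q : ℚ) := by
  rw [Rat.isSquare_natCast_iff]
  exact hq.out.prime.not_isSquare

include hpq hD in
/-- An ideal of norm `p` in an extension of `ℚ(√(-2q))` is not in a square class. -/
theorem mk0_notMem_sqs {K : Type*} [Field K] [NumberField K] [Algebra k K] {P : Ideal (𝓞 K)}
    (hP : Ideal.absNorm P = p) (hP0 : P ∈ (Ideal (𝓞 K))⁰) : ClassGroup.mk0 ⟨P, hP0⟩ ∉ sqs (ClassGroup (𝓞 K)) := by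
  rw [mem_sqs]
  rintro ⟨c, hc⟩
  obtain ⟨J, rfl⟩ := ClassGroup.mk0_surjective c
  rw [← map_pow, ClassGroup.mk0_eq_mk0_iff] at hc
  obtain ⟨x, y, hx, hy, hxy⟩ := hc
  have hpos : ∀ z : 𝓞 K, ∃ a b : ℚ, (Ideal.absNorm (Ideal.span {z}) : ℚ) = a ^ 2 + 2 * q * b ^ 2 := by
    intro z
    obtain ⟨a, b, hab⟩ := hD.exists_coord (Algebra.norm k (z : K))
    refine ⟨a, b, ?_⟩
    rw [absNorm_span_eq_abs_norm, ← Algebra.norm_norm (S := k), ← hab, hD.norm_eq]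
    push_cast
    rw [abs_of_nonneg (by nlinarith [sq_nonneg a, mul_nonneg (Nat.cast_nonneg (α := ℚ) q) (sq_nonneg b)])]
    ring
  obtain ⟨a, b, hab⟩ := hpos x
  obtain ⟨a', b', hab'⟩ := hpos y
  have hN := congrArg Ideal.absNorm hxy
  rw [map_mul, map_mul, hP, SubmonoidClass.coe_pow, map_pow] at hN
  have hN' : (Ideal.absNorm (Ideal.span {x}) : ℚ) * Ideal.absNorm (J : Ideal (𝓞 K)) ^ 2 =
    Ideal.absNorm (Ideal.span {y}) * p := by exact_mod_cast hN
  have hq2 : ¬ (q : ℤ) ∣ 2 := fun hd => hpq.q_ne_two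
    ((Nat.prime_dvd_prime_iff_eq hq.out Nat.prime_two).mp (by exact_mod_cast hd))
  have key := eq_zero_of_nonresidue_rat (ℓ := q) (c := p) (e := 2) hpq.q_p hq2
    (z := a' ^ 2 + 2 * q * b' ^ 2)
    (x := Ideal.absNorm (J : Ideal (𝓞 K)) * (a * a' + 2 * q * b * b'))
    (y := Ideal.absNorm (J : Ideal (𝓞 K)) * (a * b' - b * a')) (by
      rw [hab, hab'] at hN'
      push_cast
      linear_combination (-(a' ^ 2 + 2 * q * b' ^ 2)) * hN')
  rw [← hab', Nat.cast_eq_zero, Ideal.absNorm_eq_zero_iff, Ideal.span_singleton_eq_bot] at key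
  exact hy key

omit [NumberField k] hq in
theorem span_two_sup_sq (hq2 : Odd q) {D' : 𝓞 k} (hD' : D' ^ 2 = (-2 * q : ℤ)) :
    (Ideal.span {(2 : 𝓞 k)} ⊔ Ideal.span {D'}) ^ 2 = Ideal.span {(2 : 𝓞 k)} := by
  push_cast at hD'
  obtain ⟨n, hn⟩ := hq2
  have hn' : (q : 𝓞 k) = 2 * n + 1 := by exact_mod_cast congrArg (Nat.cast : ℕ → 𝓞 k) hn
  apply le_antisymm
  · simp only [pow_two, Ideal.mul_sup, Ideal.sup_mul, Ideal.span_singleton_mul_span_singleton,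
      sup_le_iff, Ideal.span_singleton_le_iff_mem, Ideal.mem_span_singleton]
    exact ⟨⟨⟨2, rfl⟩, ⟨D', by ring⟩⟩, ⟨D', by ring⟩, ⟨-q, by linear_combination hD'⟩⟩
  · rw [Ideal.span_singleton_le_iff_mem]
    have h2 : (2 : 𝓞 k) ∈ Ideal.span {(2 : 𝓞 k)} ⊔ Ideal.span {D'} :=
      Ideal.mem_sup_left (Ideal.mem_span_singleton_self _)
    have hd : D' ∈ Ideal.span {(2 : 𝓞 k)} ⊔ Ideal.span {D'} :=
      Ideal.mem_sup_right (Ideal.mem_span_singleton_self _)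
    have h1 : (2 : 𝓞 k) = (-n) * 2 ^ 2 + (-1) * D' ^ 2 := by rw [hD', hn']; ring
    have := add_mem (Ideal.mul_mem_left _ (-n : 𝓞 k) (Ideal.pow_mem_pow h2 2))
      (Ideal.mul_mem_left _ (-1 : 𝓞 k) (Ideal.pow_mem_pow hd 2))
    rwa [← h1] at this

include hpq hD in
theorem span_two_sup_ne_span {D' : 𝓞 k} (hD' : D' ^ 2 = (-2 * q : ℤ)) (w : 𝓞 k) :
    Ideal.span {(2 : 𝓞 k)} ⊔ Ideal.span {D'} ≠ Ideal.span {w} := by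
  intro h
  have h1 := span_two_sup_sq (hq.out.odd_of_ne_two hpq.q_ne_two) hD'
  rw [h, Ideal.span_singleton_pow] at h1
  have hq0 : (0 : ℚ) < q := by exact_mod_cast hq.out.pos
  obtain ⟨z, v, hv, hz⟩ := exists_eq_sq_mul_of_span_eq hD (by have := hq.out.pos; omega)
    (by simpa using not_isSquare_two_mul hpq) h1
  have hz0 : ((z : 𝓞 k) : k) ≠ 0 := by
    have := z.ne_zero
    exact_mod_cast this
  have hsq : ((w : k) / z) ^ 2 = algebraMap ℚ k (2 * v) := by
    have e := congrArg (algebraMap (𝓞 k) k) hz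
    simp only [map_mul, map_pow, map_intCast, map_ofNat] at e
    rw [div_pow, e]; field_simp; simp [mul_comm]
  rcases hD.isSquare_or hsq with h' | h' <;> rcases hv with rfl | rfl <;> push_cast at h'
  · exact not_isSquare_two hpq (by simpa using h')
  · exact not_isSquare_of_neg (by norm_num) h'
  · exact not_isSquare_of_neg (by linarith) h'
  · obtain ⟨x, hx⟩ := h'
    exact not_isSquare_prime (q := q) ⟨x / 2, by linear_combination hx / 4⟩

include hpq hD in
theorem exists_span_pow_mul {D' : 𝓞 k} (hD' : D' ^ 2 = (-2 * q : ℤ)) {I : Ideal (𝓞 k)}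
    (hI : Ideal.absNorm I = p) {m : ℕ}
    (hm : ∀ Q : Sylow 2 (ClassGroup (𝓞 k)), Nat.card Q = 2 ^ m) :
    ∃ M H₀, m = M + 1 ∧ Odd H₀ ∧ ∀ H, Odd H → H₀ ∣ H → ∃ w,
      I ^ (2 ^ M * H) * (Ideal.span {(2 : 𝓞 k)} ⊔ Ideal.span {D'}) = Ideal.span {w} := by
  have hT := span_two_sup_sq (hq.out.odd_of_ne_two hpq.q_ne_two) hD'
  have hT1 := span_two_sup_ne_span hpq hD hD'
  set T := Ideal.span {(2 : 𝓞 k)} ⊔ Ideal.span {D'}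
  have hT0 : T ∈ (Ideal (𝓞 k))⁰ := mem_nonZeroDivisors_of_ne_zero fun h0 => hT1 0 (by simpa using h0)
  have hI0 : I ∈ (Ideal (𝓞 k))⁰ := mem_nonZeroDivisors_of_ne_zero fun h0 => by
    rw [h0, Ideal.zero_eq_bot, Ideal.absNorm_bot] at hI; exact hp.out.ne_zero hI.symm
  have ht2 : (ClassGroup.mk0 ⟨T, hT0⟩) ^ 2 = 1 := by
    rw [← map_pow]
    exact (ClassGroup.mk0_eq_one_iff (I := T ^ 2) (pow_mem hT0 2)).mpr ⟨2, hT⟩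
  have ht : ClassGroup.mk0 ⟨T, hT0⟩ ≠ 1 := fun h => by
    obtain ⟨w, hw⟩ := (ClassGroup.mk0_eq_one_iff hT0).mp h
    exact hT1 w hw
  obtain ⟨M, H₀, rfl, hodd, h⟩ := exists_pow_eq_of_order_two (card_twoTors_neg_two_mul hD)
    (mk0_notMem_sqs hpq hD hI hI0) ht ht2 hm
  refine ⟨M, H₀, rfl, hodd, fun H h1 h2 => ?_⟩
  have := h H h1 h2
  have h3 : ClassGroup.mk0 (⟨I, hI0⟩ ^ (2 ^ M * H) * ⟨T, hT0⟩) = 1 := by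
    rw [map_mul, map_pow, this, ← pow_two, ht2]
  obtain ⟨w, hw⟩ := (ClassGroup.mk0_eq_one_iff (I := I ^ (2 ^ M * H) * T)
    (mul_mem (pow_mem hI0 _) hT0)).mp h3
  exact ⟨w, hw⟩

end Imaginary

section Generic
variable {F K : Type*} [Field F] [Field K] [Algebra F K] {d : F} {θ : K}

theorem IsQuad.sq_mem [CharZero F] (h : IsQuad F K d θ) {e : F} {x : K}
    (hx : x ^ 2 = algebraMap F K e) :
    (∃ a, x = algebraMap F K a) ∨ ∃ b, x = algebraMap F K b * θ := by
  obtain ⟨a, b, rfl⟩ := h.exists_coord x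
  obtain ⟨-, h2⟩ := h.eq_zero (a := a ^ 2 + d * b ^ 2 - e) (b := 2 * a * b) (by
    simp only [map_sub, map_add, map_mul, map_pow, map_ofNat]
    rw [← hx]
    linear_combination (-(algebraMap F K b) ^ 2) * h.sq)
  have h3 : a = 0 ∨ b = 0 := by simpa using h2
  rcases h3 with rfl | rfl
  · exact Or.inr ⟨b, by simp⟩
  · exact Or.inl ⟨a, by simp⟩

/-- If the conjugate of `J` times `J` comes from an ideal below, norms of generators of powers of
`J` generate powers of that ideal. -/
theorem span_intNorm_eq [NumberField F] [NumberField K] {c : K →+* K}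
    (hc : ∀ x, x * c x = algebraMap F K (Algebra.norm F x)) {J J' : Ideal (𝓞 K)} {I : Ideal (𝓞 F)}
    (hJ' : J.map (RingOfIntegers.mapRingHom c) = J')
    (hI : J * J' = I.map (algebraMap (𝓞 F) (𝓞 K))) {n : ℕ} {β : 𝓞 K}
    (hβ : J ^ n = Ideal.span {β}) :
    ∃ N : 𝓞 F, algebraMap F K N = (β : K) * c β ∧ I ^ n = Ideal.span {N} := by
  have hN : algebraMap F K (Algebra.intNorm (𝓞 F) (𝓞 K) β : 𝓞 F) = (β : K) * c β := by
    rw [hc]; congr 1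
    exact Algebra.algebraMap_intNorm (A := 𝓞 F) (B := 𝓞 K) (K := F) (L := K) β
  refine ⟨_, hN, ?_⟩
  have hN' : algebraMap (𝓞 F) (𝓞 K) (Algebra.intNorm (𝓞 F) (𝓞 K) β) =
      β * RingOfIntegers.mapRingHom c β := by
    apply RingOfIntegers.ext
    change _ = (β : K) * c β
    rw [← hN]; rfl
  apply Ideal.map_injective_of_faithfullyFlat (B := 𝓞 K)
  rw [Ideal.map_pow, ← hI, Ideal.map_span, Set.image_singleton, hN', ← hJ', mul_pow,
    ← Ideal.map_pow, hβ, Ideal.map_span, Set.image_singleton, Ideal.span_singleton_mul_span_singleton]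

end Generic

/-- `L = ℚ(√-2, √q)` with its quadratic subfields `R = ℚ(√-2)`, `k = ℚ(√(-2q))`, `E = ℚ(√q)`. -/
structure Biquad (q : ℕ) (R k E L : Type*) [Field R] [Field k] [Field E] [Field L]
    [NumberField R] [NumberField k] [NumberField E] [NumberField L]
    [Algebra R L] [Algebra k L] [Algebra E L] (A : R) (D : k) (B : E) : Prop where
  hA : IsQuad ℚ R (-2 : ℤ) A
  hD : IsQuad ℚ k (-2 * q : ℤ) D
  hB : IsQuad ℚ E (q : ℤ) B
  hR : IsQuad R L (q : ℤ) (algebraMap E L B)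
  hk : IsQuad k L (-2 : ℤ) (algebraMap R L A)
  hE : IsQuad E L (-2 : ℤ) (algebraMap R L A)
  mul_eq : algebraMap k L D = algebraMap R L A * algebraMap E L B

theorem absNorm_map {F K : Type*} [Field F] [Field K] [NumberField F] [NumberField K] [Algebra F K]
    (I : Ideal (𝓞 F)) :
    Ideal.absNorm (I.map (algebraMap (𝓞 F) (𝓞 K))) = Ideal.absNorm I ^ Module.finrank F K := by
  rw [Ideal.absNorm_algebraMap, ← IsFractionRing.finrank_eq (𝓞 F) F (𝓞 K) K]

theorem eq_of_mul_eq_sq {a b c p : ℕ} (hp : 0 < p) (h1 : a * b = p ^ 2) (h2 : a * c = p ^ 2)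
    (h3 : b * c = p ^ 2) : a = p := by
  have h : a ^ 2 * (p ^ 2) = p ^ 2 * p ^ 2 := by
    calc a ^ 2 * p ^ 2 = (a * b) * (a * c) := by rw [← h3]; ring
      _ = p ^ 2 * p ^ 2 := by rw [h1, h2]
  exact Nat.pow_left_injective two_ne_zero (Nat.eq_of_mul_eq_mul_right (pow_pos hp 2) h)

section Primes
variable {p q : ℕ} [hp : Fact p.Prime] [hq : Fact q.Prime] (hpq : Residues p q)
  {R k E L : Type*} [Field R] [Field k] [Field E] [Field L]
  [NumberField R] [NumberField k] [NumberField E] [NumberField L]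
  [Algebra R L] [Algebra k L] [Algebra E L] {A : R} {D : k} {B : E}

/-- A prime `I` of `L` above `p`, its images `I₁`, `I₂` under the automorphisms fixing `A`,
respectively `D`, and the primes below. -/
structure PrimesAbove (p : ℕ) (A : R) (D : k) (B : E) (I I₁ I₂ : Ideal (𝓞 L)) (IR : Ideal (𝓞 R))
    (Ik : Ideal (𝓞 k)) (IE : Ideal (𝓞 E)) : Prop where
  absNorm_eq : Ideal.absNorm I = p
  mem : (p : 𝓞 L) ∈ I
  le_sq_sup : I ≤ I ^ 2 ⊔ Ideal.span {(p : 𝓞 L)}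
  absNorm_R : Ideal.absNorm IR = p
  absNorm_k : Ideal.absNorm Ik = p
  absNorm_E : Ideal.absNorm IE = p
  mul_one : I * I₁ = IR.map (algebraMap (𝓞 R) (𝓞 L))
  mul_two : I * I₂ = Ik.map (algebraMap (𝓞 k) (𝓞 L))
  one_mul_two : I₁ * I₂ = IE.map (algebraMap (𝓞 E) (𝓞 L))
  map_one : ∀ c : L →+* L, c (algebraMap R L A) = algebraMap R L A →
    c (algebraMap E L B) = -algebraMap E L B → I.map (RingOfIntegers.mapRingHom c) = I₁
  map_two : ∀ c : L →+* L, c (algebraMap R L A) = -algebraMap R L A →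
    c (algebraMap E L B) = -algebraMap E L B → I.map (RingOfIntegers.mapRingHom c) = I₂

include hpq in
theorem Biquad.exists_primesAbove (h : Biquad q R k E L A D B) :
    ∃ (I I₁ I₂ : Ideal (𝓞 L)) (IR : Ideal (𝓞 R)) (Ik : Ideal (𝓞 k)) (IE : Ideal (𝓞 E)),
      PrimesAbove p A D B I I₁ I₂ IR Ik IE := by
  have p2 := hpq.p_ne_two
  have hpk : legendreSym p (-2 * q) = 1 := by
    rw [legendreSym.mul, hpq.p_neg_two, hpq.p_q]; rfl
  obtain ⟨A₀, hA₀, hA₀sq⟩ := h.hA.exists_int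
  obtain ⟨B₀, hB₀, hB₀sq⟩ := h.hB.exists_int
  have hD : IsQuad ℚ k ((-2 * q : ℤ) : ℚ) D := h.hD
  obtain ⟨D₀, hD₀, -⟩ := hD.exists_int
  obtain ⟨r, hr⟩ := exists_dvd_sq_sub hpq.p_neg_two
  obtain ⟨t, ht⟩ := exists_dvd_sq_sub hpq.p_q
  have hrt : (p : ℤ) ∣ (r * t) ^ 2 - (-2 * q) := by
    have := dvd_add (hr.mul_left (t ^ 2)) (ht.mul_left (-2))
    have e : t ^ 2 * (r ^ 2 - -2) + -2 * (t ^ 2 - q) = (r * t) ^ 2 - (-2 * q) := by ring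
    rwa [e] at this
  have hmt : (p : ℤ) ∣ (-t) ^ 2 - q := by rwa [neg_sq]
  obtain ⟨u₁, v₁, hb₁⟩ := exists_bezout_two_mul p2 hpq.p_neg_two hr
  obtain ⟨u₂, v₂, hb₂⟩ := exists_bezout_two_mul p2 hpq.p_q ht
  have nR := absNorm_quadratic_prime p2 h.hA hA₀ hpq.p_neg_two hr
  have nk := absNorm_quadratic_prime p2 hD hD₀ hpk hrt
  have nE := absNorm_quadratic_prime p2 h.hB hB₀ hpq.p_q hmt
  obtain ⟨A', hA'⟩ : ∃ x, x = algebraMap (𝓞 R) (𝓞 L) A₀ := ⟨_, rfl⟩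
  obtain ⟨B', hB'⟩ : ∃ x, x = algebraMap (𝓞 E) (𝓞 L) B₀ := ⟨_, rfl⟩
  have hA'c : (A' : L) = algebraMap R L A := by rw [hA', ← hA₀]; rfl
  have hB'c : (B' : L) = algebraMap E L B := by rw [hB', ← hB₀]; rfl
  have hAB : algebraMap (𝓞 k) (𝓞 L) D₀ = A' * B' := by
    apply RingOfIntegers.ext
    change algebraMap k L (D₀ : k) = (A' : L) * B'
    rw [hD₀, hA'c, hB'c, h.mul_eq]
  have hA'sq := sq_sub_sq_mem_span hr (S := 𝓞 L) (θ := A') (by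
    rw [hA', ← map_pow, hA₀sq, map_intCast])
  have hB'sq := sq_sub_sq_mem_span ht (S := 𝓞 L) (θ := B') (by
    rw [hB', ← map_pow, hB₀sq, map_intCast])
  have hb₁' : (u₁ : 𝓞 L) * p + v₁ * (2 * r) = 1 := by
    exact_mod_cast congrArg (Int.cast : ℤ → 𝓞 L) hb₁
  have hb₂' : (u₂ : 𝓞 L) * p + v₂ * (2 * t) = 1 := by
    exact_mod_cast congrArg (Int.cast : ℤ → 𝓞 L) hb₂
  set P : Ideal (𝓞 L) := Ideal.span {(p : 𝓞 L)}
  have hpP : (p : 𝓞 L) ∈ P := Ideal.mem_span_singleton_self _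
  have e1 : (P ⊔ Ideal.span {A' - r} ⊔ Ideal.span {B' - t}) *
      (P ⊔ Ideal.span {A' - r} ⊔ Ideal.span {B' + t}) = (Ideal.span {(p : 𝓞 R)} ⊔
        Ideal.span {A₀ - (r : 𝓞 R)}).map (algebraMap (𝓞 R) (𝓞 L)) := by
    rw [sup_span_mul_sup_span (Ideal.mem_sup_left hpP) (Ideal.mem_sup_left hB'sq) hb₂', Ideal.map_sup,
      Ideal.map_span, Ideal.map_span, Set.image_singleton, Set.image_singleton, map_natCast, map_sub,
      map_intCast, ← hA']
  have e2 : (P ⊔ Ideal.span {A' - r} ⊔ Ideal.span {B' - t}) *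
      (P ⊔ Ideal.span {A' + r} ⊔ Ideal.span {B' + t}) = (Ideal.span {(p : 𝓞 k)} ⊔
        Ideal.span {D₀ - ((r * t : ℤ) : 𝓞 k)}).map (algebraMap (𝓞 k) (𝓞 L)) := by
    rw [span_triple_mul hA'sq hB'sq hb₁', Ideal.map_sup,
      Ideal.map_span, Ideal.map_span, Set.image_singleton, Set.image_singleton, map_natCast, map_sub,
      map_intCast, hAB, Int.cast_mul]
  have e3 : (P ⊔ Ideal.span {A' - r} ⊔ Ideal.span {B' + t}) *
      (P ⊔ Ideal.span {A' + r} ⊔ Ideal.span {B' + t}) = (Ideal.span {(p : 𝓞 E)} ⊔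
        Ideal.span {B₀ - ((-t : ℤ) : 𝓞 E)}).map (algebraMap (𝓞 E) (𝓞 L)) := by
    rw [sup_right_comm, sup_right_comm P (Ideal.span {A' + r}),
      sup_span_mul_sup_span (Ideal.mem_sup_left hpP) (Ideal.mem_sup_left hA'sq) hb₁', Ideal.map_sup,
      Ideal.map_span, Ideal.map_span, Set.image_singleton, Set.image_singleton, map_natCast, map_sub,
      map_intCast, ← hB', Int.cast_neg, sub_neg_eq_add]
  refine ⟨_, _, _, _, _, _, ⟨?_, ?_, ?_, nR, nk, nE, e1, e2, e3, ?_, ?_⟩⟩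
  · have n1 := congrArg Ideal.absNorm e1
    have n2 := congrArg Ideal.absNorm e2
    have n3 := congrArg Ideal.absNorm e3
    rw [map_mul, absNorm_map, h.hR.finrank, nR] at n1
    rw [map_mul, absNorm_map, h.hk.finrank, nk] at n2
    rw [map_mul, absNorm_map, h.hE.finrank, nE] at n3
    exact eq_of_mul_eq_sq hp.out.pos n1 n2 n3
  · exact Ideal.mem_sup_left (Ideal.mem_sup_left hpP)
  · exact sup_span_le_sq_sup (sup_span_le_sq_sup le_sup_right hA'sq hb₁') hB'sq hb₂'
  · intro c hcA hcB
    have cA : RingOfIntegers.mapRingHom c A' = A' := RingOfIntegers.ext (by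
      change c A' = A'
      rw [hA'c, hcA])
    have cB : RingOfIntegers.mapRingHom c B' = -B' := RingOfIntegers.ext (by
      change c B' = -(B' : L)
      rw [hB'c, hcB])
    rw [Ideal.map_sup, Ideal.map_sup, Ideal.map_span, Ideal.map_span, Ideal.map_span,
      Set.image_singleton, Set.image_singleton, Set.image_singleton, map_natCast, map_sub, map_sub,
      map_intCast, map_intCast, cA, cB, ← neg_add', Ideal.span_singleton_neg]
  · intro c hcA hcB
    have cA : RingOfIntegers.mapRingHom c A' = -A' := RingOfIntegers.ext (by
      change c A' = -(A' : L)
      rw [hA'c, hcA])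
    have cB : RingOfIntegers.mapRingHom c B' = -B' := RingOfIntegers.ext (by
      change c B' = -(B' : L)
      rw [hB'c, hcB])
    rw [Ideal.map_sup, Ideal.map_sup, Ideal.map_span, Ideal.map_span, Ideal.map_span,
      Set.image_singleton, Set.image_singleton, Set.image_singleton, map_natCast, map_sub, map_sub,
      map_intCast, map_intCast, cA, cB, ← neg_add', ← neg_add', Ideal.span_singleton_neg,
      Ideal.span_singleton_neg]

end Primes

section Biquadratic
variable {p q : ℕ} [hp : Fact p.Prime] [hq : Fact q.Prime] (hpq : Residues p q)
  {R k E L : Type*} [Field R] [Field k] [Field E] [Field L]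
  [NumberField R] [NumberField k] [NumberField E] [NumberField L]
  [Algebra R L] [Algebra k L] [Algebra E L] {A : R} {D : k} {B : E}
  {I I₁ I₂ : Ideal (𝓞 L)} {IR : Ideal (𝓞 R)} {Ik : Ideal (𝓞 k)} {IE : Ideal (𝓞 E)}
  (h : Biquad q R k E L A D B) (hI : PrimesAbove p A D B I I₁ I₂ IR Ik IE)

omit hq in
include h in
theorem Biquad.ringHom_ext {S : Type*} [Field S] [CharZero S] {f g : L →+* S}
    (hA : f (algebraMap R L A) = g (algebraMap R L A))
    (hB : f (algebraMap E L B) = g (algebraMap E L B)) (x : L) : f x = g x := by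
  obtain ⟨a, b, rfl⟩ := h.hR.exists_coord x
  obtain ⟨a₁, a₂, rfl⟩ := h.hA.exists_coord a
  obtain ⟨b₁, b₂, rfl⟩ := h.hA.exists_coord b
  simp [hA, hB]

omit hq in
include h in
theorem Biquad.exists_conj : ∃ s τ τ' : L →+* L,
    (∀ x, s (algebraMap k L x) = algebraMap k L x) ∧ s (algebraMap R L A) = -algebraMap R L A ∧
    s (algebraMap E L B) = -algebraMap E L B ∧
    (∀ x, x * s x = algebraMap k L (Algebra.norm k x)) ∧
    (∀ x, τ (algebraMap R L x) = algebraMap R L x) ∧ τ (algebraMap E L B) = -algebraMap E L B ∧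
    (∀ x, x * τ x = algebraMap R L (Algebra.norm R x)) ∧
    (∀ x, x * τ' x = algebraMap E L (Algebra.norm E x)) ∧ ∀ x, τ' (τ x) = s x := by
  obtain ⟨s, hsk, hsA, hs⟩ := h.hk.exists_conj
  obtain ⟨τ, hτR, hτB, hτ⟩ := h.hR.exists_conj
  obtain ⟨τ', hτE, hτA, hτ'⟩ := h.hE.exists_conj
  have hA0 : algebraMap R L A ≠ 0 := fun h0 => by
    have := h.hk.sq; rw [h0] at this; simp at this
  have hsB : s (algebraMap E L B) = -algebraMap E L B := by
    have := hsk D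
    rw [h.mul_eq, map_mul, hsA] at this
    exact mul_left_cancel₀ hA0 (by linear_combination -this)
  refine ⟨s, τ, τ', hsk, hsA, hsB, hs, hτR, hτB, hτ, hτ', fun x => ?_⟩
  refine h.ringHom_ext (f := τ'.comp τ) (g := s) ?_ ?_ x
  · rw [RingHom.comp_apply, hτR, hτA, hsA]
  · rw [RingHom.comp_apply, hτB, map_neg, hτE, hsB]

include hpq h in
theorem Biquad.map_span_two {D' : 𝓞 k} (hD' : (D' : k) = D) :
    ∃ A' : 𝓞 L, A' ≠ 0 ∧ (Ideal.span {(2 : 𝓞 k)} ⊔ Ideal.span {D'}).map (algebraMap (𝓞 k) (𝓞 L)) =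
      Ideal.span {A'} := by
  obtain ⟨A', hA', hA'sq⟩ := h.hk.exists_int
  have hB : IsQuad R L ((q : ℤ) : R) (algebraMap E L B) := by
    have := h.hR; simpa using this
  obtain ⟨B', hB', hB'sq⟩ := hB.exists_int
  have hAB : algebraMap (𝓞 k) (𝓞 L) D' = A' * B' := by
    apply RingOfIntegers.ext
    change algebraMap k L (D' : k) = (A' : L) * B'
    rw [hD', hA', hB', h.mul_eq]
  push_cast at hA'sq hB'sq
  obtain ⟨n, hn⟩ := hq.out.odd_of_ne_two hpq.q_ne_two
  have hn' : (q : 𝓞 L) = 2 * n + 1 := by exact_mod_cast congrArg (Nat.cast : ℕ → 𝓞 L) hn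
  refine ⟨A', ?_, ?_⟩
  · rintro rfl; simp at hA'sq
  rw [Ideal.map_sup, Ideal.map_span, Ideal.map_span, Set.image_singleton, Set.image_singleton, hAB,
    map_ofNat]
  apply le_antisymm
  · rw [sup_le_iff, Ideal.span_singleton_le_iff_mem, Ideal.span_singleton_le_iff_mem,
      Ideal.mem_span_singleton, Ideal.mem_span_singleton]
    exact ⟨⟨-A', by linear_combination hA'sq⟩, ⟨B', rfl⟩⟩
  · rw [Ideal.span_singleton_le_iff_mem, ← Ideal.span_insert, Ideal.mem_span_pair]
    exact ⟨-n * A', B', by linear_combination A' * hB'sq + A' * hn'⟩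

theorem exists_eq_span_of_mul_eq {S : Type*} [CommRing S] [IsDomain S] {J : Ideal S} {b x : S}
    (hb : b ≠ 0) (h : Ideal.span {b} * J = Ideal.span {x}) : ∃ y, J = Ideal.span {y} := by
  have := Ideal.mul_le_left (I := Ideal.span {b}) (J := J)
  rw [h] at this
  obtain ⟨y, rfl⟩ := Ideal.mem_span_singleton.mp (this (Ideal.mem_span_singleton_self _))
  rw [← Ideal.span_singleton_mul_span_singleton, Ideal.span_singleton_mul_right_inj hb] at h
  exact ⟨y, h⟩

theorem exists_pow_two_mul_eq_span_of_mul {S : Type*} [CommRing S] [IsDomain S]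
    {I I₁ I₂ : Ideal S} {n : ℕ} {a b w t : S} (hb : b * t ≠ 0) (h₁ : (I * I₁) ^ n = Ideal.span {a})
    (h₂ : (I * I₂) ^ n * Ideal.span {t} = Ideal.span {w}) (h₃ : (I₁ * I₂) ^ n = Ideal.span {b}) :
    ∃ x, I ^ (2 * n) = Ideal.span {x} := by
  refine exists_eq_span_of_mul_eq hb (x := a * w) ?_
  rw [← Ideal.span_singleton_mul_span_singleton, ← Ideal.span_singleton_mul_span_singleton,
    ← h₁, ← h₂, ← h₃]
  ring

theorem map_pow_eq_span {S T : Type*} [CommRing S] [CommRing T] (f : S →+* T) {I : Ideal S} {n : ℕ}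
    {a : S} (h : I ^ n = Ideal.span {a}) : I.map f ^ n = Ideal.span {f a} := by
  rw [← Ideal.map_pow, h, Ideal.map_span, Set.image_singleton]

include hpq h hI in
theorem PrimesAbove.exists_pow_two_mul_eq_span {D' : 𝓞 k} (hD' : (D' : k) = D) {n : ℕ}
    {a : 𝓞 R} {w : 𝓞 k} {b : 𝓞 E} (ha : IR ^ n = Ideal.span {a})
    (hw : Ik ^ n * (Ideal.span {(2 : 𝓞 k)} ⊔ Ideal.span {D'}) = Ideal.span {w})
    (hb : IE ^ n = Ideal.span {b}) : ∃ x, I ^ (2 * n) = Ideal.span {x} := by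
  obtain ⟨A', hA0, hT⟩ := h.map_span_two hpq hD'
  have hb0 : b ≠ 0 := by
    rintro rfl
    have := congrArg Ideal.absNorm hb
    rw [map_pow, hI.absNorm_E, Ideal.span_singleton_zero, Ideal.absNorm_bot] at this
    exact pow_ne_zero n hp.out.ne_zero this
  have e1 := map_pow_eq_span (algebraMap (𝓞 R) (𝓞 L)) ha
  have e2 := congrArg (Ideal.map (algebraMap (𝓞 k) (𝓞 L))) hw
  have e3 := map_pow_eq_span (algebraMap (𝓞 E) (𝓞 L)) hb
  rw [Ideal.map_mul, hT, Ideal.map_pow, ← hI.mul_two, Ideal.map_span, Set.image_singleton] at e2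
  rw [← hI.mul_one] at e1
  rw [← hI.one_mul_two] at e3
  exact exists_pow_two_mul_eq_span_of_mul (mul_ne_zero ((map_ne_zero_iff _
    (FaithfulSMul.algebraMap_injective (𝓞 E) (𝓞 L))).mpr hb0) hA0) e1 e2 e3

include hpq in
theorem even_of_pow_mul_eq_span (hD : IsQuad ℚ k (-2 * q : ℤ) D) {D' : 𝓞 k} (hD' : (D' : k) = D)
    (hIk : Ideal.absNorm Ik = p) {n : ℕ} {w : 𝓞 k}
    (hw : Ik ^ n * (Ideal.span {(2 : 𝓞 k)} ⊔ Ideal.span {D'}) = Ideal.span {w}) : Even n := by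
  have hq2 := hq.out.odd_of_ne_two hpq.q_ne_two
  have hDsq : D' ^ 2 = (-2 * q : ℤ) := RingOfIntegers.ext (by
    change (D' : k) ^ 2 = _
    rw [hD', hD.sq]; simp [map_ofNat])
  have hT := congrArg Ideal.absNorm (span_two_sup_sq hq2 hDsq)
  rw [map_pow, show (2 : 𝓞 k) = ((2 : ℕ) : 𝓞 k) by simp, absNorm_span_nat, hD.finrank] at hT
  have hN := congrArg Ideal.absNorm hw
  rw [map_mul, map_pow, hIk, show (2 : 𝓞 k) = ((2 : ℕ) : 𝓞 k) by simp,
    Nat.pow_left_injective two_ne_zero hT] at hN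
  by_contra hodd
  rw [Nat.not_even_iff_odd] at hodd
  have hN' := absNorm_span_eq_abs_norm w
  obtain ⟨a, b, hab⟩ := hD.exists_coord (w : k)
  rw [← hN, ← hab, hD.norm_eq] at hN'
  push_cast at hN'
  rw [abs_of_nonneg (by nlinarith [sq_nonneg a, mul_nonneg (Nat.cast_nonneg (α := ℚ) q) (sq_nonneg b)])] at hN'
  have hc : legendreSym q ((p : ℤ) ^ n * 2) = -1 := by
    rw [legendreSym.mul, legendreSym_pow_odd hpq.q_p hodd, hpq.q_two]; rfl
  have h2 : ¬ (q : ℤ) ∣ 2 := fun hd => hpq.q_ne_two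
    ((Nat.prime_dvd_prime_iff_eq hq.out Nat.prime_two).mp (by exact_mod_cast hd))
  exact one_ne_zero (eq_zero_of_nonresidue_rat hc h2 (x := a) (y := b) (z := 1) (by
    push_cast; linear_combination hN'))

end Biquadratic

section Generator
variable {p q : ℕ} [hp : Fact p.Prime] [hq : Fact q.Prime] (hpq : Residues p q)
  {R k E L : Type*} [Field R] [Field k] [Field E] [Field L]
  [NumberField R] [NumberField k] [NumberField E] [NumberField L]
  [Algebra R L] [Algebra k L] [Algebra E L] {A : R} {D : k} {B : E}
  {I I₁ I₂ : Ideal (𝓞 L)} {IR : Ideal (𝓞 R)} {Ik : Ideal (𝓞 k)} {IE : Ideal (𝓞 E)}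
  (h : Biquad q R k E L A D B) (hI : PrimesAbove p A D B I I₁ I₂ IR Ik IE)

include hpq h in
/-- `-p` is not a square in `ℚ_p`, where `L` embeds, so `2 * N(a² + p c²)` is not a square. -/
theorem Biquad.eq_zero_of_two_mul_norm_eq_sq (s : L →+* L) {a c : L} {W : L}
    (hW : 2 * ((a ^ 2 + p * c ^ 2) * s (a ^ 2 + p * c ^ 2)) = W ^ 2) : W = 0 := by
  obtain ⟨r, hr⟩ := exists_padic_sqrt hpq.p_ne_two hpq.p_neg_two
  obtain ⟨t, ht⟩ := exists_padic_sqrt hpq.p_ne_two hpq.p_q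
  obtain ⟨φ, -, -⟩ := h.hA.exists_lift (algebraMap ℚ ℚ_[p]) r (by rw [hr]; simp)
  obtain ⟨ψ, -, -⟩ := h.hR.exists_lift φ t (by rw [ht]; simp)
  have e := congrArg ψ hW
  simp only [map_mul, map_add, map_pow, map_natCast, map_ofNat] at e
  have h0 := eq_zero_of_nonresidue (ℓ := p) hpq.p_two (not_dvd_one (ℓ := p))
    (z := ψ W / 2) (x := ψ a * ψ (s a) - p * ψ c * ψ (s c)) (y := ψ a * ψ (s c) + ψ c * ψ (s a))
    (by push_cast; linear_combination -e / 2)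
  have : ψ W = 0 := by simpa using h0
  exact (map_eq_zero ψ).mp this

include hpq h in
theorem Biquad.mul_conj_ne {s τ' : L →+* L} (hsA : s (algebraMap R L A) = -algebraMap R L A)
    (hsB : s (algebraMap E L B) = -algebraMap E L B)
    (hτ' : ∀ x, x * τ' x = algebraMap E L (Algebra.norm E x)) {j : ℕ} {Y x : L} {v : ℤ}
    (hY : Y ^ 2 = v * (x * τ' x)) : Y * s Y ≠ -2 * (p : L) ^ (2 * j) := by
  intro hYs
  have hcoord : ∀ f : E, ∃ x y : ℚ, algebraMap E L f * s (algebraMap E L f) =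
      algebraMap ℚ L (x ^ 2 - q * y ^ 2) := by
    intro f
    obtain ⟨x, y, rfl⟩ := h.hB.exists_coord f
    refine ⟨x, y, ?_⟩
    have hsq := h.hR.sq
    simp only [Int.cast_natCast, map_natCast] at hsq
    simp only [map_add, map_mul, map_sub, map_pow, map_natCast,
      hsB, eq_ratCast, map_ratCast]
    linear_combination -(y : L) ^ 2 * hsq
  have hp0 : (p : ℚ) ^ j ≠ 0 := pow_ne_zero _ (by exact_mod_cast hp.out.ne_zero)
  have hq1 := not_dvd_neg_one (ℓ := q)
  rcases h.hE.sq_mem (x := Y) (e := v * Algebra.norm E x)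
    (by rw [hY, map_mul, map_intCast, hτ']) with ⟨f, rfl⟩ | ⟨f, rfl⟩
  · obtain ⟨x, y, hxy⟩ := hcoord f
    rw [hxy] at hYs
    have e : x ^ 2 - q * y ^ 2 = -2 * (p : ℚ) ^ (2 * j) := by
      apply (algebraMap ℚ L).injective
      rw [hYs]; simp
    exact hp0 (eq_zero_of_nonresidue_rat hpq.q_neg_two hq1 (x := x) (y := y) (z := (p : ℚ) ^ j) (by
      push_cast; linear_combination -e))
  · obtain ⟨x, y, hxy⟩ := hcoord f
    have hA2 := h.hk.sq
    simp only [Int.cast_neg, Int.cast_ofNat, map_neg, map_ofNat] at hA2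
    have e : x ^ 2 - q * y ^ 2 = -(p : ℚ) ^ (2 * j) := by
      apply (algebraMap ℚ L).injective
      rw [← hxy]
      rw [map_mul, hsA] at hYs
      simp only [map_neg, map_pow, map_natCast]
      linear_combination hYs / 2 +
        algebraMap E L f * s (algebraMap E L f) * hA2 / 2
    exact hp0 (eq_zero_of_nonresidue_rat hpq.q_neg_one hq1 (x := x) (y := y) (z := (p : ℚ) ^ j) (by
      push_cast; linear_combination -e))

include hpq h hI in
theorem PrimesAbove.pow_two_mul_ne_span {D' : 𝓞 k} (hD' : (D' : k) = D) {j : ℕ}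
    {a₀ : 𝓞 R} {w : 𝓞 k} {β : 𝓞 L} {a c : L} (ha : IR ^ (2 * j) = Ideal.span {a₀})
    (hw : Ik ^ (2 * j) * (Ideal.span {(2 : 𝓞 k)} ⊔ Ideal.span {D'}) = Ideal.span {w})
    (hac : (β : L) = a ^ 2 + p * c ^ 2) : I ^ (2 * (2 * j)) ≠ Ideal.span {β} := by
  intro hβ
  obtain ⟨s, τ, τ', hsk, hsA, hsB, hs, hτR, hτB, hτ, hτ', hττ⟩ := h.exists_conj
  have hDsq : D' ^ 2 = (-2 * q : ℤ) := RingOfIntegers.ext (by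
    change (D' : k) ^ 2 = _
    rw [hD', h.hD.sq]; simp [map_ofNat])
  have hβ0 : (β : L) ≠ 0 := by
    intro h0
    have h0' : β = 0 := by exact_mod_cast h0
    have e := congrArg Ideal.absNorm hβ
    rw [map_pow, hI.absNorm_eq, h0', Ideal.span_singleton_zero, Ideal.absNorm_bot] at e
    exact pow_ne_zero _ hp.out.ne_zero e
  obtain ⟨N, hN, hNspan⟩ := span_intNorm_eq hs (hI.map_two s hsA hsB) hI.mul_two hβ
  obtain ⟨N', hN', hNspan'⟩ := span_intNorm_eq hτ (hI.map_one τ (hτR A) hτB) hI.mul_one hβ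
  have hspan : Ideal.span {2 * N} = Ideal.span {w ^ 2} := by
    rw [← Ideal.span_singleton_pow, ← hw, mul_pow,
      span_two_sup_sq (hq.out.odd_of_ne_two hpq.q_ne_two) hDsq, ← pow_mul, mul_comm (2 * j) 2, hNspan,
      Ideal.span_singleton_mul_span_singleton, mul_comm]
  have hspan' : Ideal.span {N'} = Ideal.span {a₀ ^ 2} := by
    rw [← Ideal.span_singleton_pow, ← ha, ← hNspan', ← pow_mul, mul_comm (2 * j) 2]
  obtain ⟨z, v, hv, hz⟩ := exists_eq_sq_mul_of_span_eq h.hD (by have := hq.out.pos; omega)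
    (by simpa using not_isSquare_two_mul hpq) hspan
  obtain ⟨z', v', hv', hz'⟩ := exists_eq_sq_mul_of_span_eq h.hA (by norm_num)
    (by simpa using not_isSquare_two hpq) hspan'
  obtain ⟨W, hW⟩ : ∃ W, W = algebraMap k L ((z : 𝓞 k) * w : 𝓞 k) := ⟨_, rfl⟩
  obtain ⟨X, hX⟩ : ∃ X, X = algebraMap R L ((z' : 𝓞 R) * a₀ : 𝓞 R) := ⟨_, rfl⟩
  have eW : 2 * ((β : L) * s β) = v * W ^ 2 := by
    have e := congrArg (fun x : 𝓞 k => algebraMap k L x) hz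
    simp only [map_mul, map_pow, map_intCast, map_ofNat] at e
    rw [← hN, e, hW]
    simp only [map_mul]; ring
  have eX : (β : L) * τ β = v' * X ^ 2 := by
    have e := congrArg (fun x : 𝓞 R => algebraMap R L x) hz'
    simp only [map_mul, map_pow, map_intCast] at e
    rw [← hN', e, hX]
    simp only [map_mul]; ring
  have hsW : s W = W := by rw [hW, hsk]
  have hXs : X * s X = (p : L) ^ (2 * j) := by
    obtain ⟨x, y, hxy⟩ := h.hA.exists_coord (((z' : 𝓞 R) * a₀ : 𝓞 R) : R)
    have e := absNorm_span_eq_abs_norm ((z' : 𝓞 R) * a₀)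
    rw [Ideal.span_singleton_mul_left_unit z'.isUnit, ← ha, map_pow, hI.absNorm_R, ← hxy,
      h.hA.norm_eq, abs_of_nonneg (by push_cast; nlinarith [sq_nonneg x, sq_nonneg y])] at e
    push_cast at e
    have hA2 := h.hk.sq
    simp only [Int.cast_neg, Int.cast_ofNat, map_neg, map_ofNat] at hA2
    have e' := congrArg (algebraMap ℚ L) e
    simp only [map_pow, map_natCast, map_sub, map_mul, map_neg, map_ofNat] at e'
    rw [hX, ← hxy, e']
    simp only [map_add, map_mul, hsA, eq_ratCast, map_ratCast]
    linear_combination -(y : L) ^ 2 * hA2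
  rcases hv with rfl | rfl
  · have hW0 := h.eq_zero_of_two_mul_norm_eq_sq hpq s (a := a) (c := c) (W := W)
      (by rw [← hac, eW]; simp)
    rw [hW0] at eW
    simp [hβ0] at eW
  · have hsβ : s (β : L) ≠ 0 := (map_ne_zero s).mpr hβ0
    have hv2 : (v' : L) ^ 2 = 1 := by rcases hv' with rfl | rfl <;> simp
    refine h.mul_conj_ne hpq hsA hsB hτ' (j := j) (Y := W * X / β) (x := τ β) (v := -2 * v') ?_ ?_
    · rw [hττ, div_pow, div_eq_iff (pow_ne_zero 2 hβ0)]
      push_cast at eW ⊢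
      linear_combination X ^ 2 * eW + 2 * (v' : L) * β * s β * eX + 2 * β * s β * X ^ 2 * hv2
    · rw [map_div₀, map_mul, hsW, div_mul_div_comm, div_eq_iff (mul_ne_zero hβ0 hsβ), ← hXs]
      push_cast at eW
      linear_combination (X * s X) * eW

end Generator

section Triquadratic
variable {p q : ℕ} [hp : Fact p.Prime] [hq : Fact q.Prime] (hpq : Residues p q)
  {R k E L K : Type*} [Field R] [Field k] [Field E] [Field L] [Field K]
  [NumberField R] [NumberField k] [NumberField E] [NumberField L] [NumberField K]
  [Algebra R L] [Algebra k L] [Algebra E L] [Algebra L K] {A : R} {D : k} {B : E} {C : K}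
  {I I₁ I₂ : Ideal (𝓞 L)} {IR : Ideal (𝓞 R)} {Ik : Ideal (𝓞 k)} {IE : Ideal (𝓞 E)}
  (h : Biquad q R k E L A D B) (hI : PrimesAbove p A D B I I₁ I₂ IR Ik IE)
  (hC : IsQuad L K (-p : ℤ) C)

omit hp in
include hI hC in
theorem PrimesAbove.exists_sq_eq_map : ∃ P : Ideal (𝓞 K),
    P ^ 2 = I.map (algebraMap (𝓞 L) (𝓞 K)) ∧ Ideal.absNorm P = p := by
  obtain ⟨C', -, hC'⟩ := hC.exists_int
  have hle : I.map (algebraMap (𝓞 L) (𝓞 K)) ≤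
      I.map (algebraMap (𝓞 L) (𝓞 K)) ^ 2 ⊔ Ideal.span {(p : 𝓞 K)} := by
    have := Ideal.map_mono (f := algebraMap (𝓞 L) (𝓞 K)) hI.le_sq_sup
    rwa [Ideal.map_sup, Ideal.map_pow, Ideal.map_span, Set.image_singleton, map_natCast] at this
  have hmem : (p : 𝓞 K) ∈ I.map (algebraMap (𝓞 L) (𝓞 K)) := by
    rw [← map_natCast (algebraMap (𝓞 L) (𝓞 K))]
    exact Ideal.mem_map_of_mem _ hI.mem
  have hsq := sup_span_sq (c := C') (by rw [hC']; simp) hmem hle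
  refine ⟨_, hsq, Nat.pow_left_injective two_ne_zero ?_⟩
  change _ ^ 2 = p ^ 2
  rw [← map_pow, hsq, absNorm_map, hI.absNorm_eq, hC.finrank]

theorem IsQuad.intNorm_eq {F M : Type*} [Field F] [Field M] [NumberField F] [NumberField M]
    [Algebra F M] {d : F} {θ : M} (h : IsQuad F M d θ) (x : 𝓞 M) :
    ∃ a b : F, (Algebra.intNorm (𝓞 F) (𝓞 M) x : F) = a ^ 2 - d * b ^ 2 := by
  obtain ⟨a, b, hab⟩ := h.exists_coord (x : M)
  refine ⟨a, b, ?_⟩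
  rw [← h.norm_eq, hab]
  exact Algebra.algebraMap_intNorm (A := 𝓞 F) (B := 𝓞 M) (K := F) (L := M) x

theorem pow_mul_two_eq_span_intNorm {F M : Type*} [Field F] [Field M] [NumberField F] [NumberField M]
    [Algebra F M] (hFM : Module.finrank F M = 2) {J : Ideal (𝓞 F)} {x : 𝓞 M}
    (hx : J.map (algebraMap (𝓞 F) (𝓞 M)) = Ideal.span {x}) :
    J ^ 2 = Ideal.span {Algebra.intNorm (𝓞 F) (𝓞 M) x} := by
  rw [← Ideal.relNorm_singleton, ← hx, Ideal.relNorm_algebraMap, ←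
    hFM, IsFractionRing.finrank_eq (𝓞 F) F (𝓞 M) M]

include hpq h hC in
theorem nonempty_sylow_mulEquiv_triquadratic [Algebra k K] {m : ℕ}
    (hm : ∀ Q : Sylow 2 (ClassGroup (𝓞 k)), Nat.card Q = 2 ^ m)
    (h2 : Nat.card (twoTors (ClassGroup (𝓞 K))) ≤ 2) (Q : Sylow 2 (ClassGroup (𝓞 K))) :
    Nonempty (Q ≃* Multiplicative (ZMod (2 ^ (m + 1)))) := by
  obtain ⟨I, I₁, I₂, IR, Ik, IE, hI⟩ := h.exists_primesAbove hpq
  obtain ⟨P, hP, hPN⟩ := hI.exists_sq_eq_map hC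
  have hP0 : P ∈ (Ideal (𝓞 K))⁰ := mem_nonZeroDivisors_of_ne_zero fun h0 => by
    rw [h0, Ideal.zero_eq_bot, Ideal.absNorm_bot] at hPN; exact hp.out.ne_zero hPN.symm
  have hIR0 : IR ≠ ⊥ := fun h0 => hp.out.ne_zero (by rw [← hI.absNorm_R, h0, Ideal.absNorm_bot])
  have hIE0 : IE ≠ ⊥ := fun h0 => hp.out.ne_zero (by rw [← hI.absNorm_E, h0, Ideal.absNorm_bot])
  obtain ⟨D', hD', hD'sq⟩ := IsQuad.exists_int (d := -2 * q) h.hD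
  obtain ⟨M, H₀, rfl, hH₀, hw⟩ := exists_span_pow_mul hpq h.hD hD'sq hI.absNorm_k hm
  have hHR := card_classGroup_neg_two_odd h.hA
  have hHE := odd_card_of_twoTors (card_twoTors_real hpq h.hB)
  obtain ⟨H, hH⟩ : ∃ H, H = H₀ * (Nat.card (ClassGroup (𝓞 R)) * Nat.card (ClassGroup (𝓞 E))) :=
    ⟨_, rfl⟩
  have hHodd : Odd H := hH ▸ hH₀.mul (hHR.mul hHE)
  obtain ⟨w, hw⟩ := hw H hHodd ⟨_, hH⟩
  obtain ⟨n, hn⟩ : ∃ n, n = 2 ^ M * H := ⟨_, rfl⟩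
  rw [← hn] at hw
  obtain ⟨a, ha⟩ := exists_pow_eq_span hIR0 (n := n)
    (hn ▸ (hH ▸ (Dvd.intro _ rfl).mul_left _ : Nat.card (ClassGroup (𝓞 R)) ∣ H).mul_left _)
  obtain ⟨b, hb⟩ := exists_pow_eq_span hIE0 (n := n)
    (hn ▸ (hH ▸ (Dvd.intro_left _ rfl).mul_left _ : Nat.card (ClassGroup (𝓞 E)) ∣ H).mul_left _)
  have hPn : P ^ (2 * n) = (I ^ n).map (algebraMap (𝓞 L) (𝓞 K)) := by
    rw [pow_mul, hP, Ideal.map_pow]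
  refine nonempty_sylow_mulEquiv h2 (mk0_notMem_sqs hpq h.hD hPN hP0) hHodd ?_ ?_ Q
  · obtain ⟨x, hx⟩ := hI.exists_pow_two_mul_eq_span hpq h hD' ha hw hb
    have e : 2 ^ (M + 1 + 1) * H = 2 * n * 2 := by rw [hn]; ring
    rw [e, ← map_pow, ClassGroup.mk0_eq_one_iff]
    refine ⟨⟨algebraMap (𝓞 L) (𝓞 K) x, ?_⟩⟩
    rw [SubmonoidClass.coe_pow, pow_mul, hPn, ← Ideal.map_pow, ← pow_mul, mul_comm n, hx,
      Ideal.map_span, Set.image_singleton]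
  · intro h1
    have e : 2 ^ (M + 1) * H = 2 * n := by rw [hn]; ring
    rw [e, ← map_pow, ClassGroup.mk0_eq_one_iff] at h1
    obtain ⟨⟨x, hx⟩⟩ := h1
    rw [SubmonoidClass.coe_pow] at hx
    obtain ⟨j, hj⟩ := even_of_pow_mul_eq_span hpq h.hD hD' hI.absNorm_k hw
    rw [← two_mul] at hj
    obtain ⟨u, v, huv⟩ := hC.intNorm_eq x
    have key := pow_mul_two_eq_span_intNorm hC.finrank (hPn.symm.trans hx)
    rw [← pow_mul, mul_comm, hj] at key
    refine hI.pow_two_mul_ne_span hpq h hD' (hj ▸ ha) (hj ▸ hw) (a := u) (c := v) ?_ key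
    rw [huv]; push_cast; ring

end Triquadratic

section Complex

theorem finrank_adjoin_sqrt {F M : Type*} [Field F] [Field M] [Algebra F M] {d : F} {θ : M}
    (hd : θ ^ 2 = algebraMap F M d) (hns : ¬ IsSquare d) : Module.finrank F (adjoin F {θ}) = 2 := by
  have hirr : Irreducible (Polynomial.X ^ 2 - Polynomial.C d) :=
    X_pow_sub_C_irreducible_of_prime Nat.prime_two fun b hb => hns ⟨b, by rw [← hb, pow_two]⟩
  have hmonic := Polynomial.monic_X_pow_sub_C d two_ne_zero
  have hroot : Polynomial.aeval θ (Polynomial.X ^ 2 - Polynomial.C d) = 0 := by simp [hd]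
  rw [adjoin.finrank ⟨_, hmonic, hroot⟩, ← minpoly.eq_of_irreducible_of_monic hirr hroot hmonic,
    Polynomial.natDegree_X_pow_sub_C]

theorem isQuad_adjoin {θ : ℂ} {d : ℤ} (hd : θ ^ 2 = d) (hns : ¬ IsSquare (d : ℚ)) :
    IsQuad ℚ (adjoin ℚ {θ}) (d : ℚ) ⟨θ, mem_adjoin_simple_self ℚ θ⟩ where
  finrank := finrank_adjoin_sqrt (by simp [hd]) hns
  sq := Subtype.ext (by simp [hd])
  not_sq := hns

theorem isQuad_inclusion {F T : IntermediateField ℚ ℂ} [Algebra F T]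
    (hle : F ≤ T) (hmap : ∀ x, algebraMap F T x = inclusion hle x) {θ : T}
    (hT : T ≤ F ⊔ adjoin ℚ {(θ : ℂ)}) {d : ℤ} (hd : (θ : ℂ) ^ 2 = d)
    (hns : ¬ IsSquare (d : F)) : IsQuad F T (d : F) θ where
  finrank := by
    have hE : extendScalars hle = adjoin F {(θ : ℂ)} := by
      apply le_antisymm
      · intro x hx
        have hx' : x ∈ T := hx
        have : F ⊔ adjoin ℚ {(θ : ℂ)} ≤ (adjoin F {(θ : ℂ)}).restrictScalars ℚ := by
          refine sup_le (fun y hy => ?_) (adjoin_simple_le_iff.mpr ?_)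
          · exact (adjoin F {(θ : ℂ)}).algebraMap_mem ⟨y, hy⟩
          · exact mem_adjoin_simple_self F _
        exact this (hT hx')
      · exact adjoin_simple_le_iff.mpr θ.2
    have hfin : Module.finrank F (extendScalars hle) = 2 := by
      rw [hE]; exact finrank_adjoin_sqrt (by simp [hd]) hns
    rw [← hfin]
    refine LinearEquiv.finrank_eq (LinearEquiv.ofBijective
      { toFun := fun x : T => (⟨x, x.2⟩ : extendScalars hle)
        map_add' := fun _ _ => rfl
        map_smul' := fun a x => ?_ } ⟨fun x y hxy => ?_, fun x => ⟨⟨x, x.2⟩, rfl⟩⟩)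
    · apply Subtype.ext
      rw [Algebra.smul_def, hmap]; rfl
    · exact Subtype.ext (congrArg Subtype.val hxy)
  sq := by
    rw [hmap]; apply Subtype.ext; simp [hd]
  not_sq := hns

theorem numberField_adjoin {S : Set ℂ} (hS : S.Finite) (hint : ∀ x ∈ S, ∃ d : ℤ, x ^ 2 = d) :
    NumberField (adjoin ℚ S) where
  to_charZero := inferInstance
  to_finiteDimensional := by
    have := hS.to_subtype
    refine finiteDimensional_adjoin fun x hx => ?_
    obtain ⟨d, hd⟩ := hint x hx
    exact IsIntegral.of_pow two_pos (hd ▸ isIntegral_algebraMap (R := ℚ) (x := (d : ℚ)))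

theorem IsQuad.not_isSquare_intCast {F M : Type*} [Field F] [Field M] [CharZero F] [Algebra F M]
    {d e : ℤ} {θ : M} (h : IsQuad F M d θ) (h1 : ¬ IsSquare (e : F))
    (h2 : ¬ IsSquare ((e * d : ℤ) : F)) : ¬ IsSquare (e : M) := by
  rintro ⟨x, hx⟩
  rcases h.isSquare_or (x := x) (e := e) (by rw [pow_two, ← hx, map_intCast]) with h' | h'
  · exact h1 h'
  · exact h2 (by push_cast; exact h')

theorem not_isSquare_prime_mul {ℓ n : ℕ} [hℓ : Fact ℓ.Prime] (hn : ¬ ℓ ∣ n) :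
    ¬ IsSquare ((ℓ * n : ℕ) : ℚ) := by
  rw [Rat.isSquare_natCast_iff]
  rintro ⟨x, hx⟩
  obtain ⟨y, rfl⟩ : ℓ ∣ x := (or_self_iff.mp ((Nat.Prime.dvd_mul hℓ.out).mp (hx ▸ Dvd.intro n rfl)))
  rw [mul_assoc] at hx
  exact hn ⟨y * y, by rw [Nat.eq_of_mul_eq_mul_left hℓ.out.pos hx]; ring⟩

variable {p q : ℕ} [hp : Fact p.Prime] [hq : Fact q.Prime] (hpq : Residues p q)

include hpq in
theorem nonempty_sylow_mulEquiv_adjoin {A B S : ℂ} (hA : A ^ 2 = -2) (hB : B ^ 2 = q)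
    (hS : S ^ 2 = 2 * p) {m : ℕ}
    (hm : ∀ Q : Sylow 2 (ClassGroup (𝓞 (adjoin ℚ {A * B}))), Nat.card Q = 2 ^ m)
    [NumberField (adjoin ℚ {B, S, A})] (Q : Sylow 2 (ClassGroup (𝓞 (adjoin ℚ {B, S, A})))) :
    Nonempty (Q ≃* Multiplicative (ZMod (2 ^ (m + 1)))) := by
  obtain ⟨C, hCA⟩ : ∃ C, C = A * S / 2 := ⟨_, rfl⟩
  have hC : C ^ 2 = -p := by rw [hCA, div_pow, mul_pow, hA, hS]; ring
  have hSC : S = -(A * C) := by rw [hCA]; linear_combination (S / 2) * hA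
  have hD : (A * B) ^ 2 = -2 * q := by rw [mul_pow, hA, hB]
  have hBD : B = -(A * (A * B)) / 2 := by linear_combination B / 2 * hA
  let R := adjoin ℚ {A}
  let k := adjoin ℚ {A * B}
  let E := adjoin ℚ {B}
  let L := adjoin ℚ {A, B}
  let F := adjoin ℚ {A, C}
  let K := adjoin ℚ {B, S, A}
  have : NumberField R := numberField_adjoin (Set.toFinite _) (by
    rintro x rfl; exact ⟨-2, by simp [hA]⟩)
  have : NumberField k := numberField_adjoin (Set.toFinite _) (by
    rintro x rfl; exact ⟨-2 * q, by simp [hD]⟩)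
  have : NumberField E := numberField_adjoin (Set.toFinite _) (by
    rintro x rfl; exact ⟨q, by simp [hB]⟩)
  have : NumberField L := numberField_adjoin (Set.toFinite _) (by
    rintro x (rfl | rfl)
    · exact ⟨-2, by simp [hA]⟩
    · exact ⟨q, by simp [hB]⟩)
  have : NumberField F := numberField_adjoin (Set.toFinite _) (by
    rintro x (rfl | rfl)
    · exact ⟨-2, by simp [hA]⟩
    · exact ⟨-p, by simp [hC]⟩)
  have : NumberField K := ‹_›
  have AR : A ∈ R := mem_adjoin_simple_self ℚ A
  have BE : B ∈ E := mem_adjoin_simple_self ℚ B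
  have Dk : A * B ∈ k := mem_adjoin_simple_self ℚ _
  have AL : A ∈ L := subset_adjoin ℚ _ (by simp)
  have BL : B ∈ L := subset_adjoin ℚ _ (by simp)
  have AF : A ∈ F := subset_adjoin ℚ _ (by simp)
  have CF : C ∈ F := subset_adjoin ℚ _ (by simp)
  have AK : A ∈ K := subset_adjoin ℚ _ (by simp)
  have BK : B ∈ K := subset_adjoin ℚ _ (by simp)
  have SK : S ∈ K := subset_adjoin ℚ _ (by simp)
  have CK : C ∈ K := by
    rw [hCA]; exact div_mem (mul_mem AK SK) (ofNat_mem K 2)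
  have hRL : R ≤ L := adjoin_simple_le_iff.mpr AL
  have hkL : k ≤ L := adjoin_simple_le_iff.mpr (mul_mem AL BL)
  have hEL : E ≤ L := adjoin_simple_le_iff.mpr BL
  have hRF : R ≤ F := adjoin_simple_le_iff.mpr AF
  have hFK : F ≤ K := adjoin_le_iff.mpr (by rintro x (rfl | rfl) <;> assumption)
  have hLK : L ≤ K := adjoin_le_iff.mpr (by rintro x (rfl | rfl) <;> assumption)
  have hle : ∀ {X : IntermediateField ℚ ℂ} {t : ℂ} (_ : t ∈ X) (u : ℂ),
      t ∈ X ⊔ adjoin ℚ {u} := fun {X} {t} ht u => (le_sup_left : X ≤ X ⊔ adjoin ℚ {u}) ht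
  have hri : ∀ (X : IntermediateField ℚ ℂ) (u : ℂ), u ∈ X ⊔ adjoin ℚ {u} := fun X u =>
    (le_sup_right : adjoin ℚ {u} ≤ X ⊔ adjoin ℚ {u}) (mem_adjoin_simple_self ℚ u)
  let _ : Algebra R L := (inclusion hRL).toAlgebra
  let _ : Algebra k L := (inclusion hkL).toAlgebra
  let _ : Algebra E L := (inclusion hEL).toAlgebra
  let _ : Algebra R F := (inclusion hRF).toAlgebra
  let _ : Algebra F K := (inclusion hFK).toAlgebra
  let _ : Algebra L K := (inclusion hLK).toAlgebra
  let _ : Algebra k K := (inclusion (hkL.trans hLK)).toAlgebra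
  have hp0 : (0 : ℚ) < p := by exact_mod_cast hp.out.pos
  have hq0 : (0 : ℚ) < q := by exact_mod_cast hq.out.pos
  have hpn2 : ¬ p ∣ 2 := fun hd => hpq.p_ne_two ((Nat.prime_dvd_prime_iff_eq hp.out Nat.prime_two).mp hd)
  have hpnq : ¬ p ∣ q := fun hd => hpq.ne ((Nat.prime_dvd_prime_iff_eq hp.out hq.out).mp hd)
  have n1 : ¬ IsSquare ((-2 : ℤ) : ℚ) := not_isSquare_of_neg (by norm_num)
  have n2 : ¬ IsSquare ((q : ℤ) : ℚ) := by exact_mod_cast not_isSquare_prime (q := q)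
  have n3 : ¬ IsSquare ((-2 * q : ℤ) : ℚ) := not_isSquare_of_neg (by push_cast; linarith)
  have n3' : ¬ IsSquare ((q * -2 : ℤ) : ℚ) := by rwa [mul_comm]
  have n4 : ¬ IsSquare ((-p : ℤ) : ℚ) := not_isSquare_of_neg (by push_cast; linarith)
  have n5 : ¬ IsSquare ((-p * -2 : ℤ) : ℚ) := by
    have := not_isSquare_prime_mul hpn2
    rw [neg_mul_neg]; exact_mod_cast this
  have n6 : ¬ IsSquare ((-p * q : ℤ) : ℚ) := not_isSquare_of_neg (by push_cast; nlinarith)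
  have n6' : ¬ IsSquare ((q * -p : ℤ) : ℚ) := by rwa [mul_comm]
  have n7 : ¬ IsSquare ((-p * q * -2 : ℤ) : ℚ) := by
    have := not_isSquare_prime_mul (ℓ := p) (n := 2 * q) (by
      rw [hp.out.dvd_mul]; exact not_or.mpr ⟨hpn2, hpnq⟩)
    have e : (-p * q * -2 : ℤ) = (p * (2 * q) : ℕ) := by push_cast; ring
    rw [e]; exact_mod_cast this
  have n7' : ¬ IsSquare ((q * -p * -2 : ℤ) : ℚ) := by
    have e : (q * -p * -2 : ℤ) = -p * q * -2 := by ring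
    rwa [e]
  have n8 : ¬ IsSquare ((-2 * (-2 * q) : ℤ) : ℚ) := by
    rintro ⟨x, hx⟩
    push_cast at hx
    exact not_isSquare_prime (q := q) ⟨x / 2, by linear_combination hx / 4⟩
  have qR : IsQuad ℚ R ((-2 : ℤ) : ℚ) ⟨A, AR⟩ := isQuad_adjoin (by simp [hA]) n1
  have qk : IsQuad ℚ k ((-2 * q : ℤ) : ℚ) ⟨A * B, Dk⟩ := isQuad_adjoin (by simp [hD]) n3
  have qE : IsQuad ℚ E ((q : ℤ) : ℚ) ⟨B, BE⟩ := isQuad_adjoin (by simp [hB]) n2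
  have qRL : IsQuad R L ((q : ℤ) : R) ⟨B, BL⟩ := isQuad_inclusion hRL (fun _ => rfl)
    (adjoin_le_iff.mpr (by rintro x (rfl | rfl); exacts [hle AR _, hri _ _])) (by simp [hB])
    (qR.not_isSquare_intCast n2 n3')
  have qkL : IsQuad k L ((-2 : ℤ) : k) ⟨A, AL⟩ := isQuad_inclusion hkL (fun _ => rfl)
    (adjoin_le_iff.mpr (by
      rintro x (rfl | rfl)
      · exact hri _ _
      · rw [hBD]
        exact div_mem (neg_mem (mul_mem (hri _ _) (hle Dk _))) (ofNat_mem _ 2)))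
    (by simp [hA]) (qk.not_isSquare_intCast n1 n8)
  have qEL : IsQuad E L ((-2 : ℤ) : E) ⟨A, AL⟩ := isQuad_inclusion hEL (fun _ => rfl)
    (adjoin_le_iff.mpr (by rintro x (rfl | rfl); exacts [hri _ _, hle BE _])) (by simp [hA])
    (qE.not_isSquare_intCast n1 n3)
  have qRF : IsQuad R F ((-p : ℤ) : R) ⟨C, CF⟩ := isQuad_inclusion hRF (fun _ => rfl)
    (adjoin_le_iff.mpr (by rintro x (rfl | rfl); exacts [hle AR _, hri _ _])) (by simp [hC])
    (qR.not_isSquare_intCast n4 n5)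
  have qFK : IsQuad F K ((q : ℤ) : F) ⟨B, BK⟩ := isQuad_inclusion hFK (fun _ => rfl)
    (adjoin_le_iff.mpr (by
      rintro x (rfl | rfl | rfl)
      · exact hri _ _
      · rw [hSC]; exact neg_mem (mul_mem (hle AF _) (hle CF _))
      · exact hle AF _)) (by simp [hB])
    (qRF.not_isSquare_intCast (qR.not_isSquare_intCast n2 n3') (qR.not_isSquare_intCast n6' n7'))
  have qLK : IsQuad L K ((-p : ℤ) : L) ⟨C, CK⟩ := isQuad_inclusion hLK (fun _ => rfl)
    (adjoin_le_iff.mpr (by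
      rintro x (rfl | rfl | rfl)
      · exact hle BL _
      · rw [hSC]; exact neg_mem (mul_mem (hle AL _) (hri _ _))
      · exact hle AL _)) (by simp [hC])
    (qRL.not_isSquare_intCast (qR.not_isSquare_intCast n4 n5) (qR.not_isSquare_intCast n6 n7))
  have hbiq : Biquad q R k E L ⟨A, AR⟩ ⟨A * B, Dk⟩ ⟨B, BE⟩ :=
    ⟨by exact_mod_cast qR, by exact_mod_cast qk, by exact_mod_cast qE, by exact_mod_cast qRL,
      by exact_mod_cast qkL, by exact_mod_cast qEL, rfl⟩
  exact nonempty_sylow_mulEquiv_triquadratic hpq hbiq qLK hm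
    (card_twoTors_triquadratic hpq qR qRF qFK) Q

end Complex

end Triquad

theorem statement10 (p q : ℕ) (h : Cond2 p q) (m : ℕ)
    (hm : ∀ Q : Sylow 2 (ClassGroup (𝓞 ↥(k0 q))),
      Nat.card ↥(Q : Subgroup (ClassGroup (𝓞 ↥(k0 q)))) = 2 ^ m)
    [NumberField ↥(Kf p q)]
    (P : Sylow 2 (ClassGroup (𝓞 ↥(Kf p q)))) :
    Nonempty (↥(P : Subgroup (ClassGroup (𝓞 ↥(Kf p q)))) ≃*
      Multiplicative (ZMod (2 ^ (m + 1)))) := by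
  have : Fact p.Prime := ⟨h.1⟩
  have : Fact q.Prime := ⟨h.2.1⟩
  have hsq : ∀ x : ℝ, 0 ≤ x → ((Real.sqrt x : ℝ) : ℂ) ^ 2 = x := fun x hx => by
    rw [← Complex.ofReal_pow, Real.sq_sqrt hx]
  have hk : k0 q = adjoin ℚ {Complex.I * ((Real.sqrt 2 : ℝ) : ℂ) * ((Real.sqrt q : ℝ) : ℂ)} := by
    rw [k0, Real.sqrt_mul zero_le_two, Complex.ofReal_mul, mul_assoc]
  rw [hk] at hm
  have : NumberField (adjoin ℚ {((Real.sqrt q : ℝ) : ℂ), ((Real.sqrt (2 * p) : ℝ) : ℂ),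
    Complex.I * ((Real.sqrt 2 : ℝ) : ℂ)}) := ‹NumberField ↥(Kf p q)›
  exact Triquad.nonempty_sylow_mulEquiv_adjoin (Triquad.Residues.of_cond2 h)
    (by rw [mul_pow, hsq 2 zero_le_two]; simp) (by rw [hsq q q.cast_nonneg]; simp)
    (by rw [hsq (2 * p) (by positivity)]; simp) hm P
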